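/- arXiv:2401.10615 — 2 statements merged into one kernel-verified Lean document; each statement's English description precedes it below -/
import Mathlib

section
/- A closed curve γ in the plane avoiding a point a must self-intersect at least |I(γ,a)| - 1 times (counted with multiplicity), where I(γ,a) is the winding number of γ about a. -/
open Set

/-!
The function `θ + i r` lifts `γ` along the `1`-periodic map `w ↦ a + (Im w) exp (2πi Re w)`, and the
end points of the lift differ by the winding number `n`. By Hopf's universal chord theorem, a planar
curve with a horizontal chord of length `|n| ≥ 1` also has one of length `1`: two points of the lift
differ by `±1`, which is a self-intersection of `γ` as soon as `|n| ≥ 2`. Cutting out the loop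
between these two points changes the winding number by `1` and destroys at least this one
self-intersection, so induction on the number of self-intersections finishes the proof.

The chord theorem itself rests on an argument count. If a compact path-connected set `K` has a
horizontal chord of length `a + b`, then `K ∪ (K + a + b)` contains a path between the highest
points of `K` and `K + a + b`, and this path has to cross a path in `K + a` from a lowest to a
highest point; the crossing is a chord of length `a` or `b`. The paths cross because otherwise their
difference would be a nonvanishing function on the square: its argument changes by `π` along the top
edge, where the values lie in the lower half plane, but by `-π` along the other three edges, where
they lie in the upper half plane.
-/

section Lifting

open Complex

variable {X : Type*} [TopologicalSpace X]

theorem exists_continuous_exp_eq [SimplyConnectedSpace X] [LocallyPathConnectedSpace X]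
    {f : X → ℂ} (hf : Continuous f) (h0 : ∀ x, f x ≠ 0) :
    ∃ L : X → ℂ, Continuous L ∧ ∀ x, exp (L x) = f x := by
  obtain ⟨x₀⟩ : Nonempty X := inferInstance
  let f' : C(X, {z : ℂ // z ≠ 0}) := ⟨fun x ↦ ⟨f x, h0 x⟩, by fun_prop⟩
  obtain ⟨L, ⟨-, hL⟩, -⟩ := isCoveringMap_exp.existsUnique_continuousMap_lifts f' x₀ (log (f x₀))
    (Subtype.ext (exp_log (h0 x₀)))
  exact ⟨L, L.continuous, fun x ↦ congrArg Subtype.val (congrFun hL x)⟩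

theorem exists_continuous_exp_eq_unitSquare {f : unitInterval × unitInterval → ℂ}
    (hf : Continuous f) (h0 : ∀ x, f x ≠ 0) :
    ∃ L : unitInterval × unitInterval → ℂ, Continuous L ∧ ∀ x, exp (L x) = f x := by
  let retract : ℝ × ℝ → unitInterval × unitInterval :=
    Prod.map (projIcc 0 1 zero_le_one) (projIcc 0 1 zero_le_one)
  have hretract : Continuous retract := continuous_projIcc.prodMap continuous_projIcc
  obtain ⟨L, hL, hLf⟩ := exists_continuous_exp_eq (hf.comp hretract) fun x ↦ h0 (retract x)
  refine ⟨fun x ↦ L (x.1, x.2), by fun_prop, fun x ↦ ?_⟩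
  simp [hLf, retract]

theorem im_sub_arg_exp_mul_eq [PreconnectedSpace X] {u : X → ℂ}
    (hu : Continuous u) {c : ℂ} (hc : ∀ x, exp (u x) * c ∈ slitPlane) (x y : X) :
    (u x).im - arg (exp (u x) * c) = (u y).im - arg (exp (u y) * c) := by
  have exp_sub_log : ∀ x, exp (u x - log (exp (u x) * c)) = c⁻¹ := fun x ↦ by
    rw [exp_sub, exp_log (slitPlane_ne_zero (hc x)), div_mul_cancel_left₀ (exp_ne_zero _)]
  have hconst : u x - log (exp (u x) * c) = u y - log (exp (u y) * c) :=
    isCoveringMap_exp.const_of_comp (g := fun x ↦ u x - log (exp (u x) * c))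
      (hu.sub ((hu.cexp.mul continuous_const).clog hc))
      (fun x y ↦ Subtype.ext ((exp_sub_log x).trans (exp_sub_log y).symm)) x y
  simpa only [sub_im, log_im] using congrArg im hconst

theorem mul_neg_I_mem_slitPlane {z : ℂ} (h0 : z ≠ 0) (him : 0 ≤ z.im) : z * -I ∈ slitPlane := by
  rcases him.eq_or_lt with him | him
  · have hre : z.re ≠ 0 := fun hre ↦ h0 (Complex.ext hre him.symm)
    exact mem_slitPlane_iff.2 (.inr (by simpa using hre))
  · exact mem_slitPlane_iff.2 (.inl (by simpa using him))

theorem mul_I_mem_slitPlane {z : ℂ} (h0 : z ≠ 0) (him : z.im ≤ 0) : z * I ∈ slitPlane := by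
  simpa using mul_neg_I_mem_slitPlane (neg_ne_zero.2 h0) (by simpa using him)

theorem im_sub_arg_mul_neg_I_eq [PreconnectedSpace X] {u v : X → ℂ}
    (hu : Continuous u) (huv : ∀ x, exp (u x) = v x) (hv : ∀ x, 0 ≤ (v x).im) (x y : X) :
    (u x).im - arg (v x * -I) = (u y).im - arg (v y * -I) := by
  obtain rfl : (fun x ↦ exp (u x)) = v := funext huv
  exact im_sub_arg_exp_mul_eq hu (fun x ↦ mul_neg_I_mem_slitPlane (exp_ne_zero _) (hv x)) x y

theorem im_sub_arg_mul_I_eq [PreconnectedSpace X] {u v : X → ℂ}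
    (hu : Continuous u) (huv : ∀ x, exp (u x) = v x) (hv : ∀ x, (v x).im ≤ 0) (x y : X) :
    (u x).im - arg (v x * I) = (u y).im - arg (v y * I) := by
  obtain rfl : (fun x ↦ exp (u x)) = v := funext huv
  exact im_sub_arg_exp_mul_eq hu (fun x ↦ mul_I_mem_slitPlane (exp_ne_zero _) (hv x)) x y

theorem exists_eq_zero_of_im_nonpos_top {f : unitInterval × unitInterval → ℂ} (hf : Continuous f)
    (htop : ∀ s, (f (s, 1)).im ≤ 0) (hbot : ∀ s, 0 ≤ (f (s, 0)).im)
    (hleft : ∀ t, 0 ≤ (f (0, t)).im) (hright : ∀ t, 0 ≤ (f (1, t)).im)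
    (hre₀ : (f (0, 1)).re ≤ 0) (hre₁ : 0 ≤ (f (1, 1)).re) : ∃ x, f x = 0 := by
  by_contra! h0
  obtain ⟨L, hL, hLf⟩ := exists_continuous_exp_eq_unitSquare hf h0
  have him₀ : (f (0, 1)).im = 0 := le_antisymm (htop 0) (hleft 1)
  have him₁ : (f (1, 1)).im = 0 := le_antisymm (htop 1) (hright 1)
  replace hre₀ : (f (0, 1)).re < 0 := hre₀.lt_of_ne fun h ↦ h0 _ (Complex.ext h him₀)
  replace hre₁ : 0 < (f (1, 1)).re := hre₁.lt_of_ne' fun h ↦ h0 _ (Complex.ext h him₁)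
  have turn_top : (L (1, 1)).im - (L (0, 1)).im = Real.pi := by
    have arg₀ : arg (f (0, 1) * I) = -(Real.pi / 2) :=
      arg_eq_neg_pi_div_two_iff.2 (by simp [him₀, hre₀])
    have arg₁ : arg (f (1, 1) * I) = Real.pi / 2 :=
      arg_eq_pi_div_two_iff.2 (by simp [him₁, hre₁])
    have top := im_sub_arg_mul_I_eq (u := fun s ↦ L (s, 1)) (by fun_prop) (fun s ↦ hLf _) htop 0 1
    linarith
  have turn_around : (L (1, 1)).im - (L (0, 1)).im = -Real.pi := by
    have arg₀ : arg (f (0, 1) * -I) = Real.pi / 2 :=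
      arg_eq_pi_div_two_iff.2 (by simp [him₀, hre₀])
    have arg₁ : arg (f (1, 1) * -I) = -(Real.pi / 2) :=
      arg_eq_neg_pi_div_two_iff.2 (by simp [him₁, hre₁])
    have left := im_sub_arg_mul_neg_I_eq (u := fun t ↦ L (0, t)) (by fun_prop) (fun t ↦ hLf _)
      hleft 1 0
    have bottom := im_sub_arg_mul_neg_I_eq (u := fun s ↦ L (s, 0)) (by fun_prop) (fun s ↦ hLf _)
      hbot 0 1
    have right := im_sub_arg_mul_neg_I_eq (u := fun t ↦ L (1, t)) (by fun_prop) (fun t ↦ hLf _)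
      hright 0 1
    linarith
  linarith [Real.pi_pos]

theorem exists_path_eq_path_of_strip {m M : ℝ} {p₀ p₁ q₀ q₁ : ℂ} (P : Path p₀ p₁) (Q : Path q₀ q₁)
    (hP : ∀ s, (P s).im ∈ Icc m M) (hQ : ∀ t, (Q t).im ∈ Icc m M)
    (hp₀ : p₀.im = M) (hp₁ : p₁.im = M) (hq₀ : q₀.im = m) (hq₁ : q₁.im = M)
    (h₀ : p₀.re ≤ q₁.re) (h₁ : q₁.re ≤ p₁.re) : ∃ s t, P s = Q t := by
  obtain ⟨⟨s, t⟩, hst⟩ := exists_eq_zero_of_im_nonpos_top (f := fun x ↦ P x.1 - Q x.2)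
    (by fun_prop) (fun s ↦ by simpa [hq₁] using (hP s).2) (fun s ↦ by simpa [hq₀] using (hP s).1)
    (fun t ↦ by simpa [hp₀] using (hQ t).2) (fun t ↦ by simpa [hp₁] using (hQ t).2)
    (by simpa using h₀) (by simpa using h₁)
  exact ⟨s, t, sub_eq_zero.1 hst⟩

end Lifting

section UniversalChord

variable {K : Set ℂ}

theorem exists_add_mem_or_exists_add_mem (hK : IsPathConnected K) (hcpt : IsCompact K) {a b : ℝ}
    (ha : 0 ≤ a) (hb : 0 ≤ b) {x : ℂ} (hx : x ∈ K) (hxab : x + (a + b) ∈ K) :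
    (∃ y ∈ K, y + a ∈ K) ∨ ∃ y ∈ K, y + b ∈ K := by
  obtain ⟨l, hl, hmin⟩ := hcpt.exists_isMinOn hK.nonempty Complex.continuous_im.continuousOn
  obtain ⟨h, hh, hmax⟩ := hcpt.exists_isMaxOn hK.nonempty Complex.continuous_im.continuousOn
  have im_mem_strip : ∀ y ∈ K, y.im ∈ Icc l.im h.im := fun y hy ↦
    ⟨isMinOn_iff.1 hmin y hy, isMaxOn_iff.1 hmax y hy⟩
  have translate : ∀ c : ℂ, IsPathConnected ((· + c) '' K) := fun c ↦ hK.image (by fun_prop)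
  have hunion : IsPathConnected (K ∪ (· + (a + b : ℂ)) '' K) :=
    hK.union (translate _) ⟨x + (a + b), hxab, mem_image_of_mem _ hx⟩
  obtain ⟨P, hP⟩ := hunion.joinedIn h (.inl hh) (h + (a + b)) (.inr (mem_image_of_mem _ hh))
  obtain ⟨Q, hQ⟩ := (translate a).joinedIn (l + a) (mem_image_of_mem _ hl) (h + a)
    (mem_image_of_mem _ hh)
  obtain ⟨s, t, hst⟩ : ∃ s t, P s = Q t := by
    refine exists_path_eq_path_of_strip (m := l.im) P Q (fun s ↦ ?_) (fun t ↦ ?_) rfl (by simp)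
      (by simp) (by simp) (by simpa using ha) (by simpa using hb)
    · obtain hs | ⟨y, hy, hs⟩ := hP s
      · exact im_mem_strip _ hs
      · simpa [← hs] using im_mem_strip y hy
    · obtain ⟨y, hy, ht⟩ := hQ t
      simpa [← ht] using im_mem_strip y hy
  obtain ⟨y, hy, hyQ : y + a = Q t⟩ := hQ t
  obtain hs | ⟨w, hw, hwP : w + (a + b) = P s⟩ := hP s
  · exact .inl ⟨y, hy, by rwa [hyQ, ← hst]⟩
  · have hwy : w + b = y := by linear_combination hwP + hst - hyQ
    exact .inr ⟨w, hw, hwy ▸ hy⟩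

theorem exists_add_mem_of_add_nsmul_mem (hK : IsPathConnected K) (hcpt : IsCompact K) {c : ℝ}
    (hc : 0 ≤ c) {n : ℕ} (hn : n ≠ 0) {x : ℂ} (hx : x ∈ K) (hxn : x + n • (c : ℂ) ∈ K) :
    ∃ y ∈ K, y + c ∈ K := by
  induction n, Nat.one_le_iff_ne_zero.2 hn using Nat.le_induction generalizing x with
  | base => exact ⟨x, hx, by simpa using hxn⟩
  | succ n hn ih =>
    have hsplit : x + ((n • c : ℝ) + c) ∈ K := by simpa [add_mul] using hxn
    obtain ⟨y, hy, hyn⟩ | hchord :=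
      exists_add_mem_or_exists_add_mem hK hcpt (nsmul_nonneg hc n) hc hx hsplit
    · exact ih (by lia) hy (by simpa using hyn)
    · exact hchord

theorem exists_eq_add_one_of_eq_add_intCast {η : ℝ → ℂ} {α β : ℝ} (hαβ : α ≤ β)
    (hη : ContinuousOn η (Icc α β)) {n : ℤ} (hn : n ≠ 0) (h : η β = η α + n) :
    ∃ u ∈ Icc α β, ∃ v ∈ Icc α β, η v = η u + 1 := by
  have hK : IsPathConnected (η '' Icc α β) :=
    ((convex_Icc α β).isPathConnected (nonempty_Icc.2 hαβ)).image' hη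
  have hcpt : IsCompact (η '' Icc α β) := isCompact_Icc.image_of_continuousOn hη
  have hα : η α ∈ η '' Icc α β := mem_image_of_mem _ (left_mem_Icc.2 hαβ)
  have hβ : η β ∈ η '' Icc α β := mem_image_of_mem _ (right_mem_Icc.2 hαβ)
  obtain ⟨x, hx, hxn⟩ : ∃ x ∈ η '' Icc α β, x + n.natAbs • ((1 : ℝ) : ℂ) ∈ η '' Icc α β := by
    obtain ⟨m, rfl | rfl⟩ := n.eq_nat_or_neg
    · exact ⟨η α, hα, by simpa [h] using hβ⟩
    · exact ⟨η β, hβ, by simpa [h] using hα⟩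
  obtain ⟨_, ⟨u, hu, rfl⟩, v, hv, huv⟩ := exists_add_mem_of_add_nsmul_mem hK hcpt zero_le_one
    (Int.natAbs_ne_zero.2 hn) hx hxn
  exact ⟨u, hu, v, hv, by simpa using huv⟩

end UniversalChord

section SelfIntersections

variable {X : Type*} {α β s t : ℝ}

/-- The self-intersections of a curve `γ` parametrised by `[α, β]`, a pair `{s, t}` of parameters
being encoded as the ordered pair with `s < t`. The pair of end points is not counted, as it is the
coincidence that makes the curve closed. -/
def selfIntersections (γ : ℝ → X) (α β : ℝ) : Set (ℝ × ℝ) :=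
  {p | p.1 ∈ Icc α β ∧ p.2 ∈ Icc α β ∧ p.1 < p.2 ∧ (p.1, p.2) ≠ (α, β) ∧ γ p.1 = γ p.2}

theorem selfIntersections_subset_of_eqOn {γ δ : ℝ → X} (h : EqOn γ δ (Icc α β)) :
    selfIntersections γ α β ⊆ selfIntersections δ α β := by
  rintro p ⟨h₁, h₂, hlt, hne, heq⟩
  exact ⟨h₁, h₂, hlt, hne, by rw [← h h₁, ← h h₂, heq]⟩

/-- The reparametrisation that leaves out the part of a curve on `(s, t]`: the identity up to
time `s`, from where it jumps to time `t`. -/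
noncomputable def jumpOver (s t x : ℝ) : ℝ :=
  if x ≤ s then x else x + (t - s)

theorem jumpOver_of_le {x : ℝ} (h : x ≤ s) : jumpOver s t x = x := if_pos h

theorem jumpOver_of_lt {x : ℝ} (h : s < x) : jumpOver s t x = x + (t - s) := if_neg h.not_ge

theorem strictMono_jumpOver (hst : s ≤ t) : StrictMono (jumpOver s t) := by
  intro x y hxy
  grind [jumpOver]

theorem jumpOver_ne (hst : s < t) (x : ℝ) : jumpOver s t x ≠ t := by
  grind [jumpOver]

theorem jumpOver_mem_Icc (hst : s ≤ t) (ht : t ≤ β) {x : ℝ} (hx : x ∈ Icc α (β - (t - s))) :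
    jumpOver s t x ∈ Icc α β := by
  grind [jumpOver]

theorem encard_selfIntersections_comp_jumpOver_add_one_le {γ : ℝ → X}
    (hst : (s, t) ∈ selfIntersections γ α β) :
    (selfIntersections (γ ∘ jumpOver s t) α (β - (t - s))).encard + 1 ≤
      (selfIntersections γ α β).encard := by
  have ⟨⟨(hs : α ≤ s), _⟩, ⟨_, (ht : t ≤ β)⟩, (hlt : s < t), _⟩ := hst
  have hmono := strictMono_jumpOver hlt.le
  have hinj : Function.Injective (Prod.map (jumpOver s t) (jumpOver s t)) :=
    hmono.injective.prodMap hmono.injective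
  set S := selfIntersections (γ ∘ jumpOver s t) α (β - (t - s))
  have hnotMem : (s, t) ∉ Prod.map (jumpOver s t) (jumpOver s t) '' S := by
    rintro ⟨p, -, hp⟩
    exact jumpOver_ne hlt p.2 (congrArg Prod.snd hp)
  have hsub : Prod.map (jumpOver s t) (jumpOver s t) '' S ⊆ selfIntersections γ α β := by
    rintro _ ⟨⟨x, y⟩, ⟨hx, hy, hxy, hne, heq⟩, rfl⟩
    refine ⟨jumpOver_mem_Icc hlt.le ht hx, jumpOver_mem_Icc hlt.le ht hy, hmono hxy, ?_, heq⟩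
    intro hends
    obtain ⟨hjx : jumpOver s t x = α, hjy : jumpOver s t y = β⟩ := Prod.mk.inj hends
    have hxα : x = α := by grind [jumpOver]
    have hyβ : y = β - (t - s) := by grind [jumpOver]
    exact hne (Prod.ext hxα hyβ)
  calc S.encard + 1
      = (insert (s, t) (Prod.map (jumpOver s t) (jumpOver s t) '' S)).encard := by
        rw [encard_insert_of_notMem hnotMem, hinj.encard_image]
    _ ≤ (selfIntersections γ α β).encard := encard_le_encard (insert_subset hst hsub)

/-- The curve `η` with its part on `[s, t]` cut out, the later piece being translated to make the
two pieces fit together. Using `min` and `max` instead of a case distinction makes continuity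
evident: for `x ≤ s` the last two terms cancel, for `s ≤ x` the first two are the translation. -/
def excise {E : Type*} [AddGroup E] (η : ℝ → E) (s t x : ℝ) : E :=
  η (min x s) - η t + η (max x s + (t - s))

theorem excise_of_le {E : Type*} [AddGroup E] (η : ℝ → E) {x : ℝ} (h : x ≤ s) :
    excise η s t x = η x := by
  simp [excise, h]

theorem excise_of_ge {E : Type*} [AddGroup E] (η : ℝ → E) {x : ℝ} (h : s ≤ x) :
    excise η s t x = η s - η t + η (x + (t - s)) := by
  simp [excise, h]

theorem continuousOn_excise {E : Type*} [AddGroup E] [TopologicalSpace E] [IsTopologicalAddGroup E]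
    {η : ℝ → E} (hη : ContinuousOn η (Icc α β)) (hs : α ≤ s) (hst : s ≤ t) (ht : t ≤ β) :
    ContinuousOn (excise η s t) (Icc α (β - (t - s))) := by
  refine .add (.sub (hη.comp (by fun_prop) fun x hx ↦ ?_) continuousOn_const)
    (hη.comp (by fun_prop) fun x hx ↦ ?_)
  · exact ⟨le_min hx.1 hs, (min_le_right x s).trans (hst.trans ht)⟩
  · exact ⟨by linarith [le_max_right x s],
      le_sub_iff_add_le.1 (max_le hx.2 (by linarith))⟩

theorem comp_excise_eq_comp_jumpOver {E : Type*} [AddCommGroup E] {f : E → X} {η : ℝ → E}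
    (hf : f.Periodic (η t - η s)) : f ∘ excise η s t = f ∘ η ∘ jumpOver s t := by
  ext x
  rcases le_or_gt x s with hx | hx
  · simp [excise_of_le η hx, jumpOver_of_le hx]
  · rw [Function.comp_apply, excise_of_ge η hx.le, Function.comp_apply, Function.comp_apply,
      jumpOver_of_lt hx, add_comm, ← neg_sub (η t), ← sub_eq_add_neg, hf.sub_eq]

end SelfIntersections

section PeriodicMap

variable {X : Type*} {f : ℂ → X} {η : ℝ → ℂ} {α β : ℝ} {n : ℤ}

theorem exists_mem_selfIntersections_comp (hf : f.Periodic 1) (hαβ : α ≤ β)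
    (hη : ContinuousOn η (Icc α β)) (h : η β = η α + n) (hn : 2 ≤ n.natAbs) :
    ∃ p ∈ selfIntersections (f ∘ η) α β, ∃ k : ℤ, k.natAbs = 1 ∧ η p.2 = η p.1 + k := by
  have of_lt : ∀ u ∈ Icc α β, ∀ v ∈ Icc α β, u < v → ∀ k : ℤ, k.natAbs = 1 → η v = η u + k →
      ∃ p ∈ selfIntersections (f ∘ η) α β, ∃ k : ℤ, k.natAbs = 1 ∧ η p.2 = η p.1 + k := by
    intro u hu v hv hlt k hk hkuv
    refine ⟨(u, v), ⟨hu, hv, hlt, ?_, ?_⟩, k, hk, hkuv⟩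
    · rintro ⟨rfl, rfl⟩
      have hnk : n = k := by exact_mod_cast add_left_cancel (h.symm.trans hkuv)
      lia
    · simpa [hkuv] using (hf.int_mul k (η u)).symm
  obtain ⟨u, hu, v, hv, huv⟩ := exists_eq_add_one_of_eq_add_intCast hαβ hη (by lia) h
  rcases lt_trichotomy u v with hlt | rfl | hgt
  · exact of_lt u hu v hv hlt 1 rfl (by simpa using huv)
  · simp at huv
  · exact of_lt v hv u hu hgt (-1) rfl (by simp [huv])

theorem natAbs_le_encard_selfIntersections_comp_add_one (hf : f.Periodic 1) (hαβ : α ≤ β)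
    (hη : ContinuousOn η (Icc α β)) (h : η β = η α + n) :
    (n.natAbs : ℕ∞) ≤ (selfIntersections (f ∘ η) α β).encard + 1 := by
  induction hN : (selfIntersections (f ∘ η) α β).encard using WellFoundedLT.induction
    generalizing η β n with | ind N ih
  subst hN
  rcases lt_or_ge n.natAbs 2 with hn | hn
  · exact le_add_left (by exact_mod_cast Nat.le_of_lt_succ hn)
  rcases eq_or_ne (selfIntersections (f ∘ η) α β).encard ⊤ with htop | hfin
  · simp [htop]
  obtain ⟨⟨s, t⟩, hp, k, hk, hkst⟩ := exists_mem_selfIntersections_comp hf hαβ hη h hn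
  have ⟨⟨(hs : α ≤ s), _⟩, ⟨_, (ht : t ≤ β)⟩, (hlt : s < t), _⟩ := hp
  replace hkst : η t = η s + k := hkst
  have hfewer : (selfIntersections (f ∘ excise η s t) α (β - (t - s))).encard + 1 ≤
      (selfIntersections (f ∘ η) α β).encard := by
    rw [comp_excise_eq_comp_jumpOver (by simpa [hkst] using hf.int_mul k)]
    exact encard_selfIntersections_comp_jumpOver_add_one_le hp
  have hends : excise η s t (β - (t - s)) = excise η s t α + (n - k : ℤ) := by
    rw [excise_of_le η hs, excise_of_ge η (by linarith), sub_add_cancel, h, hkst]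
    push_cast
    ring
  have hfin_excised := ne_top_of_le_ne_top hfin (le_self_add.trans hfewer)
  have hexcised := ih _ ((ENat.add_one_le_iff hfin_excised).1 hfewer) (by linarith)
    (continuousOn_excise hη hs hlt.le ht) hends rfl
  calc (n.natAbs : ℕ∞)
      ≤ (n - k).natAbs + 1 := by exact_mod_cast (by lia : n.natAbs ≤ (n - k).natAbs + 1)
    _ ≤ (selfIntersections (f ∘ η) α β).encard + 1 := by gcongr; exact hexcised.trans hfewer

end PeriodicMap

/-- The signed polar coordinates `(θ, ρ) ↦ a + ρ exp (2πiθ)` about `a`, with the angle `θ`, measured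
in turns, and the radius `ρ` combined into the complex number `θ + iρ`. -/
noncomputable def polarMap (a w : ℂ) : ℂ :=
  a + (w.im : ℂ) * Complex.exp (2 * Real.pi * Complex.I * (w.re : ℂ))

theorem periodic_polarMap (a : ℂ) : (polarMap a).Periodic 1 := by
  intro w
  simp [polarMap, mul_add, Complex.exp_add, Complex.exp_two_pi_mul_I]

theorem winding_number_forces_self_intersections_general {γ : ℝ → ℂ} {a : ℂ} {r θ : ℝ → ℝ} {α β : ℝ}
    (hαβ : α ≤ β) (hclosed : γ α = γ β) (hr : ContinuousOn r (Icc α β))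
    (hθ : ContinuousOn θ (Icc α β))
    (hpolar : ∀ t ∈ Icc α β,
      γ t = a + (r t : ℂ) * Complex.exp (2 * Real.pi * Complex.I * (θ t : ℂ)))
    {z : ℤ} (hz : θ β - θ α = z) :
    ((z.natAbs - 1 : ℕ) : ℕ∞) ≤ (selfIntersections γ α β).encard := by
  let η : ℝ → ℂ := fun t ↦ ⟨θ t, r t⟩
  have hη : ContinuousOn η (Icc α β) :=
    Complex.equivRealProdCLM.symm.continuous.comp_continuousOn (hθ.prodMk hr)
  have hlift : EqOn (polarMap a ∘ η) γ (Icc α β) := fun t ht ↦ (hpolar t ht).symm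
  have hθz : (θ β : ℂ) = θ α + z := sub_eq_iff_eq_add'.1 (by exact_mod_cast hz)
  have hturns : Complex.exp (2 * Real.pi * Complex.I * (θ β : ℂ)) =
      Complex.exp (2 * Real.pi * Complex.I * (θ α : ℂ)) :=
    Complex.exp_eq_exp_iff_exists_int.2 ⟨z, by rw [hθz]; ring⟩
  have hrαβ : r α = r β := by
    rw [hpolar α (left_mem_Icc.2 hαβ), hpolar β (right_mem_Icc.2 hαβ), hturns] at hclosed
    simpa using hclosed
  have hends : η β = η α + z := Complex.ext (by simp [η, ← hz]) (by simp [η, hrαβ])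
  have hsub := encard_le_encard (selfIntersections_subset_of_eqOn hlift)
  have hcount := natAbs_le_encard_selfIntersections_comp_add_one (periodic_polarMap a) hαβ hη hends
  simpa [tsub_le_iff_right] using hcount.trans (by gcongr)

/-- A closed curve `γ` in the plane avoiding a point `a` must
self-intersect at least `|I(γ,a)| - 1` times (counted with multiplicity), where `I(γ,a)`
is the winding number of `γ` about `a`.

The winding number is expressed via a polar decomposition `γ = a + r·exp(2πiθ)` with
continuous `r : [0,1] → ℝ_{>0}` and `θ : [0,1] → ℝ`: it is the integer `θ(1) - θ(0)`.
Self-intersections are counted as pairs `s < t` in `[0,1]` with `γ s = γ t`,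
excluding the pair `(0,1)` coming from closedness. -/
theorem winding_number_forces_self_intersections
    (γ : ℝ → ℂ) (a : ℂ) (r θ : ℝ → ℝ)
    (hγ : ContinuousOn γ (Icc 0 1))
    (hclosed : γ 0 = γ 1)
    (ha : ∀ t ∈ Icc (0:ℝ) 1, γ t ≠ a)
    (hr : ContinuousOn r (Icc 0 1))
    (hrpos : ∀ t ∈ Icc (0:ℝ) 1, 0 < r t)
    (hθ : ContinuousOn θ (Icc 0 1))
    (hpolar : ∀ t ∈ Icc (0:ℝ) 1,
      γ t = a + (r t : ℂ) * Complex.exp (2 * Real.pi * Complex.I * (θ t : ℂ)))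
    (z : ℤ) (hz : θ 1 - θ 0 = (z : ℝ)) :
    ((z.natAbs - 1 : ℕ) : ℕ∞) ≤
      {p : ℝ × ℝ | p.1 ∈ Icc (0:ℝ) 1 ∧ p.2 ∈ Icc (0:ℝ) 1 ∧ p.1 < p.2 ∧
        (p.1, p.2) ≠ ((0 : ℝ), (1 : ℝ)) ∧ γ p.1 = γ p.2}.encard :=
  winding_number_forces_self_intersections_general zero_le_one hclosed hr hθ hpolar hz
end

section
/- Every non-homotopic plane multigraph on n ≥ 2 vertices has at most 4n - 4 edges. -/
open Set

/-- Parallel edges drawn as curves `c₀, c₁` from `φ vw.1` to `φ vw.2` are *homotopic* if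
`c₀` can be continuously deformed into `c₁` within the plane punctured at all vertices
other than the two endpoints, keeping the endpoints fixed. -/
def EdgeHomotopic {n : ℕ} (φ : Fin n → ℂ) (vw : Fin n × Fin n) (c₀ c₁ : ℝ → ℂ) : Prop :=
  ∃ H : ℝ → ℝ → ℂ,
    ContinuousOn (fun p : ℝ × ℝ => H p.1 p.2) (Icc 0 1 ×ˢ Icc 0 1) ∧
    (∀ x ∈ Icc (0:ℝ) 1, H x 0 = c₀ x) ∧
    (∀ x ∈ Icc (0:ℝ) 1, H x 1 = c₁ x) ∧
    (∀ t ∈ Icc (0:ℝ) 1, H 0 t = φ vw.1 ∧ H 1 t = φ vw.2) ∧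
    (∀ x ∈ Icc (0:ℝ) 1, ∀ t ∈ Icc (0:ℝ) 1, ∀ v : Fin n,
      v ≠ vw.1 → v ≠ vw.2 → H x t ≠ φ v)

/-!
Call a loop null if it can be contracted in the plane punctured at the other vertices. Two null
loops at the same vertex are homotopic, so there are at most `n` of them, and it suffices to bound
the number of the remaining edges by `3n - 4`.

At a fine scale, the drawing of these edges is replaced by a subgraph of the square lattice:
vertices become small squares spanned by trees, and edges become lattice paths along the curves.
This subgraph is reached from a full lattice square, whose bounded faces are the unit cells, by
deleting edges one at a time; a deletion merges two faces, discards one, or removes a pendant edge.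
Throughout, every bounded face has a closed boundary walk of positive area, whose holonomy is
trivial around every set of punctures that the walk avoids, and the number of faces is at least what
Euler's formula predicts.

A bounded face with a single edge would exhibit a null loop, and one with two edges would exhibit
two homotopic edges, so each of the `f` bounded faces has at least three oriented edges on its
boundary. Opposite darts have opposite areas while bounded faces have positive area, so not all `2m`
oriented edges lie on bounded faces. Hence `3f < 2m`, and with `m < n + f` this yields `m ≤ 3n - 4`.
-/

/-! ### Surgery on cyclic lists -/

section OrbitList

variable {α : Type*}

lemma exists_rotate_eq_cons {f : List α} {x : α} (hx : x ∈ f) :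
    ∃ k u, f.rotate k = x :: u := by
  obtain ⟨k, hk, rfl⟩ := List.getElem_of_mem hx
  exact ⟨k, _, by rw [List.rotate_eq_drop_append_take hk.le, List.drop_eq_getElem_cons hk]; rfl⟩

/-- `f` lists, in cyclic order, an orbit of `N` (or several laps of one). -/
def IsOrbitList (N : α → α) (f : List α) : Prop := f.map N = f.rotate 1

/-- The face permutation after deleting the edge with darts `x` and `y`, when `N` is the face
permutation before the deletion. -/
def bypassEdge [DecidableEq α] (N : α → α) (x y d : α) : α :=
  if N d = x then N y else if N d = y then N x else N d

lemma bypassEdge_of_ne [DecidableEq α] {N : α → α} {x y d : α} (hx : N d ≠ x) (hy : N d ≠ y) :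
    bypassEdge N x y d = N d := by
  simp [bypassEdge, hx, hy]

lemma bypassEdge_comm [DecidableEq α] {N : α → α} {x y : α} (h : x ≠ y) :
    bypassEdge N x y = bypassEdge N y x := by
  funext d
  unfold bypassEdge
  grind

lemma map_bypassEdge [DecidableEq α] {N : α → α} {u v : List α} {x y : α} (h : u.map N = v ++ [x])
    (hx : x ∉ v) (hy : y ∉ v) : u.map (bypassEdge N x y) = v ++ [N y] := by
  have hcomp : u.map (bypassEdge N x y) =
      (u.map N).map fun z => if z = x then N y else if z = y then N x else z := by
    rw [List.map_map]
    rfl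
  have hfix : (v.map fun z => if z = x then N y else if z = y then N x else z) = v :=
    (List.map_congr_left (by grind)).trans (List.map_id' v)
  rw [hcomp, h, List.map_append, hfix]
  simp

namespace IsOrbitList

variable {N N' : α → α} {f u w : List α} {x y : α}

lemma map_mem (h : IsOrbitList N f) (hx : x ∈ f) : N x ∈ f := by
  have : N x ∈ f.map N := List.mem_map_of_mem hx
  rwa [h, List.mem_rotate] at this

lemma exists_map_eq (h : IsOrbitList N f) (hx : x ∈ f) : ∃ y ∈ f, N y = x := by
  rwa [← List.mem_map, h, List.mem_rotate]

lemma rotate (h : IsOrbitList N f) (k : ℕ) : IsOrbitList N (f.rotate k) := by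
  rw [IsOrbitList, List.map_rotate, h, List.rotate_rotate, List.rotate_rotate, add_comm]

lemma forall_mem (h : IsOrbitList N f) {R : α → Prop} (hx : x ∈ f) (hR : R x)
    (hN : ∀ z ∈ f, R z → R (N z)) : ∀ z ∈ f, R z := by
  obtain ⟨k, u, hu⟩ := exists_rotate_eq_cons hx
  have hmem (z) : z ∈ f ↔ z ∈ x :: u := by rw [← hu, List.mem_rotate]
  have hmap : (x :: u).map N = u ++ [x] := by simpa [IsOrbitList, hu] using h.rotate k
  have hR' (i : ℕ) (hi : i < (x :: u).length) : R (x :: u)[i] := by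
    induction i with
    | zero => exact hR
    | succ i ih =>
      have hi' : i < u.length := by simpa using hi
      have hsucc : N (x :: u)[i] = u[i] := by
        rw [← List.getElem_map N (h := by simpa using hi'.le)]
        simp only [hmap, List.getElem_append_left hi']
      exact hsucc ▸ hN _ ((hmem _).2 (List.getElem_mem _)) (ih _)
  intro z hz
  obtain ⟨i, hi, rfl⟩ := List.getElem_of_mem ((hmem z).1 hz)
  exact hR' i hi

lemma congr (h : IsOrbitList N f) (hN : ∀ d ∈ f, N' d = N d) : IsOrbitList N' f := by
  rw [IsOrbitList, List.map_congr_left hN, h]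

lemma cons_cons_iff : IsOrbitList N (x :: y :: u) ↔ N x = y ∧ (y :: u).map N = u ++ [x] := by
  simp [IsOrbitList]

lemma exists_eq_cons (h : IsOrbitList N (x :: u)) (hx : N x ≠ x) :
    ∃ u', u = N x :: u' ∧ u.map N = u' ++ [x] := by
  cases u with
  | nil => exact absurd (by simpa [IsOrbitList] using h) hx
  | cons y u' =>
    obtain ⟨rfl, h'⟩ := cons_cons_iff.1 h
    exact ⟨u', rfl, h'⟩

variable [DecidableEq α]

lemma bypassEdge_of_notMem (h : IsOrbitList N f) (hx : x ∉ f) (hy : y ∉ f) :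
    IsOrbitList (bypassEdge N x y) f :=
  h.congr fun _ hd =>
    bypassEdge_of_ne (fun e => hx (e ▸ h.map_mem hd)) fun e => hy (e ▸ h.map_mem hd)

lemma bypassEdge_append (hu : IsOrbitList N (x :: u)) (hw : IsOrbitList N (y :: w))
    (hx : N x ≠ x) (hy : N y ≠ y) (hnodup : (x :: u ++ y :: w).Nodup) :
    IsOrbitList (bypassEdge N x y) (u ++ w) := by
  obtain ⟨u', rfl, hu'⟩ := hu.exists_eq_cons hx
  obtain ⟨w', rfl, hw'⟩ := hw.exists_eq_cons hy
  have hu'' := map_bypassEdge hu' (y := y) (by grind) (by grind)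
  have hw'' := map_bypassEdge hw' (y := x) (by grind) (by grind)
  rw [bypassEdge_comm (by grind)] at hw''
  rw [IsOrbitList, List.map_append, hu'', hw'']
  simp

lemma bypassEdge_of_cons_cons (h : IsOrbitList N (x :: y :: w)) (hw : w ≠ [])
    (hnodup : (x :: y :: w).Nodup) : IsOrbitList (bypassEdge N x y) w := by
  obtain ⟨z, w, rfl⟩ := List.exists_cons_of_ne_nil hw
  obtain ⟨-, h⟩ := cons_cons_iff.1 h
  obtain ⟨hy, hw'⟩ : N y = z ∧ (z :: w).map N = w ++ [x] := by simpa using h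
  rw [IsOrbitList, map_bypassEdge hw' (by grind) (by grind), hy]
  simp

end IsOrbitList

end OrbitList

/-! ### Faces of subgraphs of the square lattice -/

/-- Vertices of the square lattice. -/
abbrev LatticePoint := ℤ × ℤ

/-- Oriented edges of the square lattice, encoded by their tail and their direction: `0, 1, 2, 3`
stand for east, north, west and south. -/
abbrev LatticeDart := LatticePoint × Fin 4

namespace LatticeDart

/-- The displacement of a unit step in each of the four directions. -/
def unitStep : Fin 4 → LatticePoint := ![(1, 0), (0, 1), (-1, 0), (0, -1)]

/-- The endpoint of a dart. -/
def head (d : LatticeDart) : LatticePoint := d.1 + unitStep d.2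

/-- The same edge with the opposite orientation. -/
def rev (d : LatticeDart) : LatticeDart := (head d, d.2 + 2)

/-- The direction taken by a traveller heading in direction `i` who turns as far left as possible
among the directions marked available by `h`; going back is the last resort. -/
def leftmostTurn (h : Fin 4 → Bool) (i : Fin 4) : Fin 4 :=
  if h (i + 1) then i + 1 else if h i then i else if h (i + 3) then i + 3 else i + 2

/-- The successor of `d` on the boundary of the face of `H` to the left of `d`. -/
def next (H : Finset LatticeDart) (d : LatticeDart) : LatticeDart :=
  (head d, leftmostTurn (fun j => decide ((head d, j) ∈ H)) d.2)

/-- A set of darts representing an undirected graph: it contains the reverse of each of its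
darts. -/
def IsSymmetric (H : Finset LatticeDart) : Prop := ∀ d ∈ H, rev d ∈ H

/-- The graph `H` without the edge of `x`. -/
def deleteEdge (H : Finset LatticeDart) (x : LatticeDart) : Finset LatticeDart :=
  H.filter fun d => d ≠ x ∧ d ≠ rev x

/-- A closed walk in `H` that keeps following the boundary of the face to its left. -/
structure IsBoundaryWalk (H : Finset LatticeDart) (f : List LatticeDart) : Prop where
  subset : ∀ d ∈ f, d ∈ H
  orbit : IsOrbitList (next H) f

variable {H : Finset LatticeDart} {x d : LatticeDart}

lemma unitStep_add_two (i : Fin 4) : unitStep (i + 2) = -unitStep i := by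
  fin_cases i <;> decide

lemma unitStep_ne_zero (i : Fin 4) : unitStep i ≠ 0 := by
  fin_cases i <;> decide

@[simp] lemma head_rev (d : LatticeDart) : head (rev d) = d.1 := by
  simp [head, rev, unitStep_add_two]

@[simp] lemma fst_rev (d : LatticeDart) : (rev d).1 = head d := rfl

@[simp] lemma rev_rev (d : LatticeDart) : rev (rev d) = d := by
  obtain ⟨p, i⟩ := d
  have hi : i + 2 + 2 = i := by fin_cases i <;> decide
  simp [rev, head, unitStep_add_two, hi]

lemma rev_injective : Function.Injective rev :=
  Function.LeftInverse.injective rev_rev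

lemma head_ne_fst (d : LatticeDart) : head d ≠ d.1 := by
  simp [head, unitStep_ne_zero]

lemma rev_ne_self (d : LatticeDart) : rev d ≠ d :=
  fun h => head_ne_fst d (congrArg Prod.fst h)

@[simp] lemma fst_next (H : Finset LatticeDart) (d : LatticeDart) : (next H d).1 = head d := rfl

lemma next_ne_self (H : Finset LatticeDart) (d : LatticeDart) : next H d ≠ d :=
  fun h => head_ne_fst d (congrArg Prod.fst h)

lemma leftmostTurn_available : ∀ (h : Fin 4 → Bool) (i : Fin 4), h (i + 2) →
    h (leftmostTurn h i) := by
  decide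

lemma next_mem (hH : IsSymmetric H) (hd : d ∈ H) : next H d ∈ H := by
  have hback : (head d, d.2 + 2) ∈ H := hH d hd
  simpa [next] using
    leftmostTurn_available (fun j => decide ((head d, j) ∈ H)) d.2 (by simpa using hback)

lemma mem_deleteEdge : d ∈ deleteEdge H x ↔ d ∈ H ∧ d ≠ x ∧ d ≠ rev x := by
  simp [deleteEdge]

lemma deleteEdge_rev (H : Finset LatticeDart) (x : LatticeDart) :
    deleteEdge H (rev x) = deleteEdge H x := by
  ext d
  simp only [mem_deleteEdge, rev_rev]
  tauto

lemma IsSymmetric.deleteEdge (hH : IsSymmetric H) (x : LatticeDart) :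
    IsSymmetric (deleteEdge H x) := by
  intro d hd
  obtain ⟨hdH, hdx, hdx'⟩ := mem_deleteEdge.1 hd
  exact mem_deleteEdge.2 ⟨hH d hdH, fun h => hdx' (by rw [← h, rev_rev]),
    fun h => hdx (rev_injective h)⟩

lemma card_deleteEdge_add_two (hH : IsSymmetric H) (hx : x ∈ H) :
    (deleteEdge H x).card + 2 = H.card := by
  have herase : deleteEdge H x = (H.erase x).erase (rev x) := by
    ext d
    simp only [mem_deleteEdge, Finset.mem_erase]
    tauto
  have hrev : rev x ∈ H.erase x := Finset.mem_erase.2 ⟨rev_ne_self x, hH x hx⟩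
  rw [herase, ← Finset.card_erase_add_one hx, ← Finset.card_erase_add_one hrev]

lemma leftmostTurn_forbid : ∀ (h : Fin 4 → Bool) (i j : Fin 4), h (i + 2) → i + 2 ≠ j → h j →
    leftmostTurn (fun k => if k = j then false else h k) i =
      if leftmostTurn h i = j then leftmostTurn h (j + 2) else leftmostTurn h i := by
  decide

lemma next_deleteEdge_of_head_eq (hH : IsSymmetric H) (hx : x ∈ H) (hd : d ∈ deleteEdge H x)
    (hp : head d = x.1) : next (deleteEdge H x) d = bypassEdge (next H) x (rev x) d := by
  obtain ⟨p, j⟩ := x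
  obtain rfl : head d = p := hp
  obtain ⟨hdH, -, hdx⟩ := mem_deleteEdge.1 hd
  have hback : (head d, d.2 + 2) ∈ H := hH d hdH
  have hj : d.2 + 2 ≠ j := fun h => hdx (rev_injective (by rw [rev_rev, ← h, rev]))
  have hne_rev (k : Fin 4) : (head d, k) ≠ rev (head d, j) := fun h =>
    head_ne_fst (head d, j) (congrArg Prod.fst h).symm
  have hdelete : (fun k => decide ((head d, k) ∈ deleteEdge H (head d, j))) =
      fun k => if k = j then false else decide ((head d, k) ∈ H) := by
    funext k
    simp only [mem_deleteEdge, ne_eq, hne_rev, Prod.mk.injEq]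
    grind
  have hturn := leftmostTurn_forbid (fun k => decide ((head d, k) ∈ H)) d.2 j (by simpa using hback)
    hj (by simpa using hx)
  unfold bypassEdge next
  rw [hdelete, hturn, if_neg (hne_rev _)]
  simp only [Prod.mk.injEq, true_and, head_rev, apply_ite (Prod.mk (head d))]
  rfl

lemma next_deleteEdge (hH : IsSymmetric H) (hx : x ∈ H) (hd : d ∈ deleteEdge H x) :
    next (deleteEdge H x) d = bypassEdge (next H) x (rev x) d := by
  by_cases htail : head d = x.1
  · exact next_deleteEdge_of_head_eq hH hx hd htail
  by_cases hhead : head d = head x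
  · rw [bypassEdge_comm (rev_ne_self x).symm, ← deleteEdge_rev]
    simpa using next_deleteEdge_of_head_eq hH (hH x hx) (by rwa [deleteEdge_rev]) hhead
  · have hx' (j : Fin 4) : (head d, j) ≠ x := fun h => htail (congrArg Prod.fst h)
    have hrev (j : Fin 4) : (head d, j) ≠ rev x := fun h => hhead (congrArg Prod.fst h)
    rw [bypassEdge_of_ne (hx' _) (hrev _)]
    simp [next, mem_deleteEdge, hx', hrev]

end LatticeDart

/-- Data on the darts of the square lattice that is tracked while faces are merged: an
antisymmetric integer area, and for each index `c` a holonomy in a group `K c`, which is only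
meaningful along closed walks avoiding the points that are bad for `c`. -/
structure DartLabelling {ι : Type*} (K : ι → Type*) [∀ c, Group (K c)] where
  hol : ∀ c, LatticeDart → K c
  area : LatticeDart → ℤ
  bad : ι → LatticePoint → Prop
  hol_rev : ∀ c d, hol c d.rev = (hol c d)⁻¹
  area_rev : ∀ d, area d.rev = -area d

namespace DartLabelling

open LatticeDart

variable {ι : Type*} {K : ι → Type*} [∀ c, Group (K c)] (L : DartLabelling K)

/-- A boundary walk of a bounded face of `H`: its area is positive, and its holonomy is trivial
whenever it avoids the bad points. -/
structure IsBoundedFace (H : Finset LatticeDart) (f : List LatticeDart) : Prop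
    extends IsBoundaryWalk H f where
  area_pos : 0 < (f.map L.area).sum
  hol_eq_one : ∀ c, (∀ d ∈ f, ¬ L.bad c d.1) → (f.map (L.hol c)).prod = 1

/-- A list of pairwise distinct bounded faces of `H`. -/
structure IsFaceFamily (H : Finset LatticeDart) (fs : List (List LatticeDart)) : Prop where
  nodup : fs.flatten.Nodup
  isBoundedFace : ∀ f ∈ fs, L.IsBoundedFace H f

/-- Twice the inequality `V - E + F ≥ 1` of Euler's formula, where `F` is the number of faces in
some family of bounded faces of `H`. -/
def EulerBound (H : Finset LatticeDart) (V : ℤ) : Prop :=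
  ∃ fs, L.IsFaceFamily H fs ∧ 2 ≤ 2 * V - H.card + 2 * (fs.length : ℤ)

variable {L} {H : Finset LatticeDart} {x : LatticeDart} {f u w : List LatticeDart}
  {fs : List (List LatticeDart)}

namespace IsBoundedFace

lemma rotate (h : L.IsBoundedFace H f) (k : ℕ) : L.IsBoundedFace H (f.rotate k) where
  subset d hd := h.subset d (List.mem_rotate.1 hd)
  orbit := h.orbit.rotate k
  area_pos := by
    rw [((List.rotate_perm f k).map L.area).sum_eq]
    exact h.area_pos
  hol_eq_one c hc := by
    rw [List.map_rotate]
    exact List.prod_rotate_eq_one_of_prod_eq_one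
      (h.hol_eq_one c fun d hd => hc d (List.mem_rotate.2 hd)) k

lemma deleteEdge_of_notMem (h : L.IsBoundedFace H f) (hH : IsSymmetric H) (hx : x ∈ H)
    (hxf : x ∉ f) (hxf' : x.rev ∉ f) : L.IsBoundedFace (deleteEdge H x) f where
  subset d hd := mem_deleteEdge.2 ⟨h.subset d hd, by grind, by grind⟩
  orbit := (h.orbit.bypassEdge_of_notMem hxf hxf').congr fun d hd =>
    next_deleteEdge hH hx (mem_deleteEdge.2 ⟨h.subset d hd, by grind, by grind⟩)
  area_pos := h.area_pos
  hol_eq_one := h.hol_eq_one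

lemma merge (hu : L.IsBoundedFace H (x :: u)) (hw : L.IsBoundedFace H (x.rev :: w))
    (hH : IsSymmetric H) (hnodup : (x :: u ++ x.rev :: w).Nodup) :
    L.IsBoundedFace (deleteEdge H x) (u ++ w) := by
  have hx : x ∈ H := hu.subset x List.mem_cons_self
  have hsubset : ∀ d ∈ u ++ w, d ∈ deleteEdge H x := fun d hd =>
    mem_deleteEdge.2 ⟨by grind [hu.subset d, hw.subset d], by grind, by grind⟩
  refine ⟨⟨hsubset, ?_⟩, ?_, fun c hc => ?_⟩
  · exact (hu.orbit.bypassEdge_append hw.orbit (next_ne_self H x) (next_ne_self H x.rev)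
      hnodup).congr fun d hd => next_deleteEdge hH hx (hsubset d hd)
  · have hu_area := hu.area_pos
    have hw_area := hw.area_pos
    simp only [List.map_cons, List.sum_cons, L.area_rev, List.map_append, List.sum_append]
      at hu_area hw_area ⊢
    linarith
  · obtain ⟨u', rfl, -⟩ := hu.orbit.exists_eq_cons (next_ne_self H x)
    obtain ⟨w', rfl, -⟩ := hw.orbit.exists_eq_cons (next_ne_self H x.rev)
    have hhead : ¬ L.bad c x.head := by simpa using hc (next H x) (by simp)
    have htail : ¬ L.bad c x.1 := by simpa using hc (next H x.rev) (by simp)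
    have hu_hol := hu.hol_eq_one c
      (List.forall_mem_cons.2 ⟨htail, fun d hd => hc d (List.mem_append_left _ hd)⟩)
    have hw_hol := hw.hol_eq_one c
      (List.forall_mem_cons.2 ⟨hhead, fun d hd => hc d (List.mem_append_right _ hd)⟩)
    rw [List.map_cons, List.prod_cons] at hu_hol hw_hol
    rw [List.map_append, List.prod_append, eq_inv_of_mul_eq_one_right hu_hol,
      eq_inv_of_mul_eq_one_right hw_hol, L.hol_rev, inv_inv, inv_mul_cancel]

lemma deleteEdge_pendant (h : L.IsBoundedFace H (x :: x.rev :: w)) (hH : IsSymmetric H)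
    (hnodup : (x :: x.rev :: w).Nodup) (hbad : ∀ c, ¬ L.bad c x.head) :
    L.IsBoundedFace (deleteEdge H x) w := by
  have hx : x ∈ H := h.subset x List.mem_cons_self
  have harea : 0 < (w.map L.area).sum := by simpa [L.area_rev] using h.area_pos
  have hw : w ≠ [] := by
    rintro rfl
    simp at harea
  have hsubset : ∀ d ∈ w, d ∈ deleteEdge H x := fun d hd =>
    mem_deleteEdge.2 ⟨h.subset d (by simp [hd]), by grind, by grind⟩
  refine ⟨⟨hsubset, ?_⟩, harea, fun c hc => ?_⟩
  · exact (h.orbit.bypassEdge_of_cons_cons hw hnodup).congr fun d hd =>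
      next_deleteEdge hH hx (hsubset d hd)
  · obtain ⟨b, w, rfl⟩ := List.exists_cons_of_ne_nil hw
    have hb : next H x.rev = b :=
      (List.cons.inj (IsOrbitList.cons_cons_iff.1 h.orbit).2).1
    have htail : ¬ L.bad c x.1 := by simpa [← hb] using hc b List.mem_cons_self
    have hhol := h.hol_eq_one c
      (List.forall_mem_cons.2 ⟨htail, List.forall_mem_cons.2 ⟨hbad c, hc⟩⟩)
    simpa [L.hol_rev] using hhol

end IsBoundedFace

namespace IsFaceFamily

lemma cons_iff : L.IsFaceFamily H (f :: fs) ↔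
    f.Nodup ∧ L.IsBoundedFace H f ∧ f.Disjoint fs.flatten ∧ L.IsFaceFamily H fs := by
  constructor
  · intro h
    obtain ⟨hf, hfs, hdisj⟩ := List.nodup_append'.1 (List.flatten_cons ▸ h.nodup)
    obtain ⟨hface, hfaces⟩ := List.forall_mem_cons.1 h.isBoundedFace
    exact ⟨hf, hface, hdisj, hfs, hfaces⟩
  · rintro ⟨hf, hface, hdisj, hfs, hfaces⟩
    exact ⟨List.flatten_cons ▸ List.nodup_append'.2 ⟨hf, hfs, hdisj⟩,
      List.forall_mem_cons.2 ⟨hface, hfaces⟩⟩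

lemma deleteEdge_of_notMem (h : L.IsFaceFamily H fs) (hH : IsSymmetric H) (hx : x ∈ H)
    (hxf : x ∉ fs.flatten) (hxf' : x.rev ∉ fs.flatten) :
    L.IsFaceFamily (deleteEdge H x) fs where
  nodup := h.nodup
  isBoundedFace f hf := (h.isBoundedFace f hf).deleteEdge_of_notMem hH hx
    (fun hxf'' => hxf (List.mem_flatten.2 ⟨f, hf, hxf''⟩))
    fun hxf'' => hxf' (List.mem_flatten.2 ⟨f, hf, hxf''⟩)

lemma exists_cons (h : L.IsFaceFamily H fs) (hx : x ∈ fs.flatten) :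
    ∃ u gs, L.IsFaceFamily H ((x :: u) :: gs) ∧ gs.length + 1 = fs.length ∧
      fs.flatten.Perm ((x :: u) ++ gs.flatten) := by
  obtain ⟨f, hf, hxf⟩ := List.mem_flatten.1 hx
  obtain ⟨i, u, hu⟩ := exists_rotate_eq_cons hxf
  have hperm : fs.flatten.Perm ((x :: u) ++ (fs.erase f).flatten) := by
    rw [← hu]
    exact (List.perm_cons_erase hf).flatten.trans ((List.rotate_perm f i).symm.append_right _)
  refine ⟨u, fs.erase f, ⟨hperm.nodup_iff.1 h.nodup, List.forall_mem_cons.2 ⟨?_, ?_⟩⟩, ?_, hperm⟩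
  · exact hu ▸ (h.isBoundedFace f hf).rotate i
  · exact fun g hg => h.isBoundedFace g (List.mem_of_mem_erase hg)
  · exact (List.perm_cons_erase hf).length_eq.symm

lemma exists_deleteEdge_of_mem (h : L.IsFaceFamily H fs) (hH : IsSymmetric H) (hx : x ∈ H)
    (hxf : x ∈ fs.flatten) :
    ∃ gs, L.IsFaceFamily (deleteEdge H x) gs ∧ fs.length ≤ gs.length + 1 := by
  obtain ⟨u, gs, h', hlen, -⟩ := h.exists_cons hxf
  obtain ⟨hu, hface, hdisj, hgs⟩ := cons_iff.1 h'
  by_cases hxgs : x.rev ∈ gs.flatten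
  · obtain ⟨w, gs', hgs', hlen', hperm⟩ := hgs.exists_cons hxgs
    obtain ⟨hw, hface', hdisj', hrest⟩ := cons_iff.1 hgs'
    have hdisj'' : (x :: u).Disjoint ((x.rev :: w) ++ gs'.flatten) := fun d hd hd' =>
      hdisj hd (hperm.mem_iff.2 hd')
    obtain ⟨hdisj_face, hdisj_rest⟩ := List.disjoint_append_right.1 hdisj''
    refine ⟨(u ++ w) :: gs', cons_iff.2 ⟨?_, ?_, ?_, ?_⟩, ?_⟩
    · exact List.nodup_append'.2 ⟨hu.of_cons, hw.of_cons,
        (List.disjoint_cons_right.1 (List.disjoint_cons_left.1 hdisj_face).2).2⟩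
    · exact hface.merge hface' hH (List.nodup_append'.2 ⟨hu, hw, hdisj_face⟩)
    · exact List.disjoint_append_left.2
        ⟨(List.disjoint_cons_left.1 hdisj_rest).2, (List.disjoint_cons_left.1 hdisj').2⟩
    · exact hrest.deleteEdge_of_notMem hH hx (hdisj_rest List.mem_cons_self)
        (hdisj' List.mem_cons_self)
    · simp only [List.length_cons]
      omega
  · exact ⟨gs, hgs.deleteEdge_of_notMem hH hx (hdisj List.mem_cons_self) hxgs, hlen.ge⟩

lemma exists_deleteEdge (h : L.IsFaceFamily H fs) (hH : IsSymmetric H) (hx : x ∈ H) :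
    ∃ gs, L.IsFaceFamily (deleteEdge H x) gs ∧ fs.length ≤ gs.length + 1 := by
  by_cases hxf : x ∈ fs.flatten
  · exact h.exists_deleteEdge_of_mem hH hx hxf
  by_cases hxf' : x.rev ∈ fs.flatten
  · simpa only [deleteEdge_rev] using h.exists_deleteEdge_of_mem hH (hH x hx) hxf'
  · exact ⟨fs, h.deleteEdge_of_notMem hH hx hxf hxf', by omega⟩

lemma exists_deleteEdge_pendant (h : L.IsFaceFamily H fs) (hH : IsSymmetric H) (hx : x ∈ H)
    (hbad : ∀ c, ¬ L.bad c x.head) (hpendant : ∀ d ∈ H, d.1 = x.head → d = x.rev) :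
    ∃ gs, L.IsFaceFamily (deleteEdge H x) gs ∧ fs.length = gs.length := by
  have hnext : next H x = x.rev := hpendant _ (next_mem hH hx) rfl
  by_cases hxf : x ∈ fs.flatten
  · obtain ⟨u, gs, h', hlen, -⟩ := h.exists_cons hxf
    obtain ⟨hu, hface, hdisj, hgs⟩ := cons_iff.1 h'
    obtain ⟨w, rfl, -⟩ := hface.orbit.exists_eq_cons (next_ne_self H x)
    rw [hnext] at hu hface hdisj
    refine ⟨w :: gs, cons_iff.2 ⟨?_, hface.deleteEdge_pendant hH hu hbad, ?_, ?_⟩, hlen.symm⟩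
    · exact hu.of_cons.of_cons
    · exact (List.disjoint_cons_left.1 (List.disjoint_cons_left.1 hdisj).2).2
    · exact hgs.deleteEdge_of_notMem hH hx (hdisj (by simp)) (hdisj (by simp))
  · refine ⟨fs, h.deleteEdge_of_notMem hH hx hxf fun hxf' => ?_, rfl⟩
    obtain ⟨f, hf, hxf'⟩ := List.mem_flatten.1 hxf'
    obtain ⟨d, hd, hdx⟩ := (h.isBoundedFace f hf).orbit.exists_map_eq hxf'
    have hd_rev : d.rev = x.rev := hpendant _ (hH d ((h.isBoundedFace f hf).subset d hd))
      (by simpa using congrArg Prod.fst hdx)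
    exact hxf (List.mem_flatten.2 ⟨f, hf, rev_injective hd_rev ▸ hd⟩)

end IsFaceFamily

namespace EulerBound

variable {V : ℤ}

lemma deleteEdge (h : L.EulerBound H V) (hH : IsSymmetric H) (hx : x ∈ H) :
    L.EulerBound (deleteEdge H x) V := by
  obtain ⟨fs, hfs, hV⟩ := h
  obtain ⟨gs, hgs, hlen⟩ := hfs.exists_deleteEdge hH hx
  have hcard := card_deleteEdge_add_two hH hx
  exact ⟨gs, hgs, by omega⟩

lemma deleteEdge_pendant (h : L.EulerBound H V) (hH : IsSymmetric H) (hx : x ∈ H)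
    (hbad : ∀ c, ¬ L.bad c x.head) (hpendant : ∀ d ∈ H, d.1 = x.head → d = x.rev) :
    L.EulerBound (LatticeDart.deleteEdge H x) (V - 1) := by
  obtain ⟨fs, hfs, hV⟩ := h
  obtain ⟨gs, hgs, hlen⟩ := hfs.exists_deleteEdge_pendant hH hx hbad hpendant
  have hcard := card_deleteEdge_add_two hH hx
  exact ⟨gs, hgs, by omega⟩

end EulerBound

end DartLabelling

namespace LatticeDart

variable {N : ℤ} {G H : Finset LatticeDart} {o p : LatticePoint} {d : LatticeDart}

/-- The lattice points of the square `[-N, N]²`. -/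
noncomputable def grid (N : ℤ) : Finset LatticePoint := Finset.Icc (-N, -N) (N, N)

/-- The subgraph of the square lattice induced by `grid N`. -/
noncomputable def gridDarts (N : ℤ) : Finset LatticeDart :=
  (grid N ×ˢ Finset.univ).filter fun d => head d ∈ grid N

/-- The corners of the unit square, indexed by the direction of the side leaving the corner when
the boundary is traversed counterclockwise. -/
def cellCorner : Fin 4 → LatticePoint := ![(0, 0), (1, 0), (1, 1), (0, 1)]

/-- The side of direction `i` of the unit square with lower left corner `p`, with the square on its
left. -/
def cellSide (p : LatticePoint) (i : Fin 4) : LatticeDart := (p + cellCorner i, i)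

/-- The counterclockwise boundary of the unit square with lower left corner `p`. -/
def cell (p : LatticePoint) : List LatticeDart :=
  [cellSide p 0, cellSide p 1, cellSide p 2, cellSide p 3]

lemma mem_grid : p ∈ grid N ↔ (-N ≤ p.1 ∧ p.1 ≤ N) ∧ (-N ≤ p.2 ∧ p.2 ≤ N) := by
  simp [grid, Prod.le_def, and_and_and_comm]

lemma card_grid (hN : 0 ≤ N) : ((grid N).card : ℤ) = (2 * N + 1) * (2 * N + 1) := by
  have hside : ((Finset.Icc (-N) N).card : ℤ) = 2 * N + 1 := by simp; omega
  rw [grid, Finset.card_Icc_prod, Nat.cast_mul, hside]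

lemma exists_subset_grid (V : Finset LatticePoint) : ∃ N, 0 ≤ N ∧ V ⊆ grid N := by
  refine ⟨∑ p ∈ V, (|p.1| + |p.2|), by positivity, fun p hp => ?_⟩
  have hle : |p.1| + |p.2| ≤ ∑ p ∈ V, (|p.1| + |p.2|) :=
    Finset.single_le_sum (f := fun p : LatticePoint => |p.1| + |p.2|) (fun p _ => by positivity) hp
  rw [mem_grid, ← abs_le, ← abs_le]
  exact ⟨by linarith [abs_nonneg p.2], by linarith [abs_nonneg p.1]⟩

lemma mem_gridDarts : d ∈ gridDarts N ↔ d.1 ∈ grid N ∧ head d ∈ grid N := by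
  simp [gridDarts]

lemma isSymmetric_gridDarts (N : ℤ) : IsSymmetric (gridDarts N) := fun d hd => by
  simpa [mem_gridDarts, and_comm] using hd

lemma card_gridDarts_le (hN : 0 ≤ N) :
    ((gridDarts N).card : ℤ) ≤ 4 * ((2 * N + 1) * (2 * N)) := by
  have hsub : gridDarts N ⊆
      ((Finset.Icc (-N) (N - 1) ×ˢ Finset.Icc (-N) N) ×ˢ {0}) ∪
      ((Finset.Icc (-N) N ×ˢ Finset.Icc (-N) (N - 1)) ×ˢ {1}) ∪
      ((Finset.Icc (-N + 1) N ×ˢ Finset.Icc (-N) N) ×ˢ {2}) ∪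
      ((Finset.Icc (-N) N ×ˢ Finset.Icc (-N + 1) N) ×ˢ {3}) := by
    rintro ⟨⟨a, b⟩, i⟩ h
    rw [mem_gridDarts, mem_grid, mem_grid] at h
    fin_cases i <;> simp [head, unitStep] at h ⊢ <;> omega
  have hlong : ((Finset.Icc (-N) N).card : ℤ) = 2 * N + 1 := by simp; omega
  have hleft : ((Finset.Icc (-N) (N - 1)).card : ℤ) = 2 * N := by simp; omega
  have hright : ((Finset.Icc (-N + 1) N).card : ℤ) = 2 * N := by simp; omega
  have hcard := (Finset.card_le_card hsub).trans <| (Finset.card_union_le _ _).trans <|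
    Nat.add_le_add_right ((Finset.card_union_le _ _).trans <|
      Nat.add_le_add_right (Finset.card_union_le _ _) _) _
  simp only [Finset.card_product, Finset.card_singleton, mul_one] at hcard
  zify at hcard
  rw [hlong, hleft, hright] at hcard
  linarith

lemma mem_cell : d ∈ cell p ↔ d = cellSide p d.2 := by
  obtain ⟨q, i⟩ := d
  fin_cases i <;> simp [cell, cellSide]

lemma cell_disjoint {q : LatticePoint} (hpq : p ≠ q) : (cell p).Disjoint (cell q) := by
  intro d hp hq
  rw [mem_cell] at hp hq
  exact hpq (add_right_cancel (congrArg Prod.fst (hp.symm.trans hq)))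

lemma nodup_cell (p : LatticePoint) : (cell p).Nodup := by
  simp [cell, cellSide]

lemma head_cellSide (p : LatticePoint) (i : Fin 4) :
    head (cellSide p i) = p + cellCorner (i + 1) := by
  rw [head, cellSide, add_assoc]
  fin_cases i <;> rfl

lemma next_of_left_mem (h : (head d, d.2 + 1) ∈ H) : next H d = (head d, d.2 + 1) := by
  simp [next, leftmostTurn, h]

lemma next_cellSide {i : Fin 4} (h : cellSide p (i + 1) ∈ H) :
    next H (cellSide p i) = cellSide p (i + 1) := by
  rw [next_of_left_mem] <;> rw [head_cellSide] <;> first | exact h | rfl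

lemma isOrbitList_cell (h : ∀ d ∈ cell p, d ∈ H) : IsOrbitList (next H) (cell p) := by
  have hside (i : Fin 4) : next H (cellSide p i) = cellSide p (i + 1) :=
    next_cellSide (h _ (mem_cell.2 rfl))
  simp [IsOrbitList, cell, hside]

/-- The first step of a monotone lattice path from `p` to `o`. -/
def dirToward (o p : LatticePoint) : Fin 4 :=
  if p.1 < o.1 then 0 else if o.1 < p.1 then 2 else if p.2 < o.2 then 1 else 3

/-- The `ℓ¹` distance to `o`. -/
def taxicabDist (o p : LatticePoint) : ℕ := (p.1 - o.1).natAbs + (p.2 - o.2).natAbs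

/-- The graph `G` together with, for each point of `W`, the first edge of a path towards `o`. -/
def withForest (G : Finset LatticeDart) (o : LatticePoint) (W : Finset LatticePoint) :
    Finset LatticeDart :=
  G ∪ W.image (fun p => (p, dirToward o p)) ∪ W.image (fun p => rev (p, dirToward o p))

lemma taxicabDist_head_dirToward_lt (h : p ≠ o) :
    taxicabDist o (head (p, dirToward o p)) < taxicabDist o p := by
  obtain ⟨a, b⟩ := p
  obtain ⟨a', b'⟩ := o
  simp only [ne_eq, Prod.mk.injEq] at h
  simp only [taxicabDist, head, dirToward]
  split_ifs <;> simp [unitStep] <;> omega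

lemma head_dirToward_mem_Icc {a b : LatticePoint} (ho : o ∈ Finset.Icc a b)
    (hp : p ∈ Finset.Icc a b) (h : p ≠ o) : head (p, dirToward o p) ∈ Finset.Icc a b := by
  obtain ⟨x, y⟩ := p
  obtain ⟨x', y'⟩ := o
  simp only [ne_eq, Prod.mk.injEq] at h
  simp only [Finset.mem_Icc, Prod.le_def, head, dirToward] at *
  split_ifs <;> simp [unitStep] <;> omega

section Forest

variable {W : Finset LatticePoint}

lemma mem_withForest : d ∈ withForest G o W ↔ d ∈ G ∨
    (∃ p ∈ W, d = (p, dirToward o p)) ∨ ∃ p ∈ W, d = rev (p, dirToward o p) := by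
  simp only [withForest, Finset.mem_union, Finset.mem_image, or_assoc, eq_comm]

lemma IsSymmetric.withForest (hG : IsSymmetric G) (o : LatticePoint) (W : Finset LatticePoint) :
    IsSymmetric (withForest G o W) := by
  intro d hd
  rw [mem_withForest] at hd ⊢
  rcases hd with hd | ⟨p, hp, rfl⟩ | ⟨p, hp, rfl⟩
  · exact Or.inl (hG d hd)
  · exact Or.inr (Or.inr ⟨p, hp, rfl⟩)
  · exact Or.inr (Or.inl ⟨p, hp, rev_rev _⟩)

lemma withForest_subset_gridDarts {V : Finset LatticePoint} (hG : IsSymmetric G)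
    (hV : ∀ d ∈ G, d.1 ∈ V) (hVN : V ⊆ grid N) (ho : o ∈ V) :
    withForest G o (grid N \ V) ⊆ gridDarts N := by
  have hforest : ∀ p ∈ grid N \ V, (p, dirToward o p) ∈ gridDarts N := fun p hp => by
    obtain ⟨hpN, hpV⟩ := Finset.mem_sdiff.1 hp
    exact mem_gridDarts.2 ⟨hpN, head_dirToward_mem_Icc (hVN ho) hpN (by grind)⟩
  intro d hd
  rcases mem_withForest.1 hd with hd | ⟨p, hp, rfl⟩ | ⟨p, hp, rfl⟩
  · exact mem_gridDarts.2 ⟨hVN (hV d hd), hVN (hV _ (hG d hd))⟩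
  · exact hforest p hp
  · exact isSymmetric_gridDarts N _ (hforest p hp)

lemma withForest_erase (hp : ∀ d ∈ G, d.1 ≠ p ∧ head d ≠ p)
    (hleaf : ∀ q ∈ W, head (q, dirToward o q) ≠ p) :
    deleteEdge (withForest G o W) (rev (p, dirToward o p)) = withForest G o (W.erase p) := by
  ext d
  rw [deleteEdge_rev, mem_deleteEdge, mem_withForest, mem_withForest]
  simp only [Finset.mem_erase]
  constructor
  · rintro ⟨hd | ⟨q, hq, rfl⟩ | ⟨q, hq, rfl⟩, hdp, hdp'⟩
    · exact Or.inl hd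
    · exact Or.inr (Or.inl ⟨q, ⟨fun h => hdp (by rw [h]), hq⟩, rfl⟩)
    · exact Or.inr (Or.inr ⟨q, ⟨fun h => hdp' (by rw [h]), hq⟩, rfl⟩)
  · rintro (hd | ⟨q, ⟨hqp, hq⟩, rfl⟩ | ⟨q, ⟨hqp, hq⟩, rfl⟩)
    · refine ⟨Or.inl hd, fun h => (hp d hd).1 (by rw [h]), fun h => (hp d hd).2 ?_⟩
      rw [h, head_rev]
    · refine ⟨Or.inr (Or.inl ⟨q, hq, rfl⟩), fun h => hqp (congrArg Prod.fst h),
        fun h => hleaf q hq ?_⟩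
      rw [h, head_rev]
    · exact ⟨Or.inr (Or.inr ⟨q, hq, rfl⟩), fun h => hleaf q hq (congrArg Prod.fst h),
        fun h => hqp (congrArg Prod.fst (rev_injective h))⟩

end Forest

end LatticeDart

namespace DartLabelling

open LatticeDart

variable {ι : Type*} {K : ι → Type*} [∀ c, Group (K c)] {L : DartLabelling K}
  {G H : Finset LatticeDart} {V : Finset LatticePoint} {N : ℤ}

/-- The unit squares satisfy the conditions required of bounded faces. -/
structure IsCellular (L : DartLabelling K) : Prop where
  area_pos : ∀ p, 0 < ((cell p).map L.area).sum
  hol_eq_one : ∀ c p, (∀ d ∈ cell p, ¬ L.bad c d.1) → ((cell p).map (L.hol c)).prod = 1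

lemma IsCellular.isBoundedFace_cell (hL : L.IsCellular) {p : LatticePoint}
    (hp : ∀ d ∈ cell p, d ∈ H) : L.IsBoundedFace H (cell p) :=
  ⟨⟨hp, isOrbitList_cell hp⟩, hL.area_pos p, fun c => hL.hol_eq_one c p⟩

lemma IsCellular.eulerBound_gridDarts (hL : L.IsCellular) (hN : 0 ≤ N) :
    L.EulerBound (gridDarts N) (grid N).card := by
  let corners : Finset LatticePoint := Finset.Icc (-N) (N - 1) ×ˢ Finset.Icc (-N) (N - 1)
  refine ⟨corners.toList.map cell, ⟨?_, fun f hf => ?_⟩, ?_⟩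
  · rw [List.nodup_flatten, List.pairwise_map, List.forall_mem_map]
    exact ⟨fun p _ => nodup_cell p, corners.nodup_toList.imp cell_disjoint⟩
  · obtain ⟨p, hp, rfl⟩ := List.mem_map.1 hf
    refine hL.isBoundedFace_cell fun d hd => ?_
    simp only [corners, Finset.mem_toList, Finset.mem_product, Finset.mem_Icc] at hp
    rw [mem_cell] at hd
    rw [hd, mem_gridDarts, head_cellSide, mem_grid, mem_grid]
    generalize d.2 = i
    fin_cases i <;> simp [cellSide, cellCorner] <;> omega
  · have hside : ((Finset.Icc (-N) (N - 1)).card : ℤ) = 2 * N := by simp; omega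
    have hcard := card_gridDarts_le hN
    rw [card_grid hN, List.length_map, Finset.length_toList, Finset.card_product, Nat.cast_mul,
      hside]
    linarith

namespace EulerBound

lemma anti {V : ℤ} (h : L.EulerBound H V) (hH : IsSymmetric H) (hG : IsSymmetric G)
    (hGH : G ⊆ H) : L.EulerBound G V := by
  induction hk : (H \ G).card using Nat.strong_induction_on generalizing H with
  | _ k ih =>
    rcases (H \ G).eq_empty_or_nonempty with hempty | ⟨x, hx⟩
    · rwa [hGH.antisymm (Finset.sdiff_eq_empty_iff_subset.1 hempty)]
    · obtain ⟨hxH, hxG⟩ := Finset.mem_sdiff.1 hx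
      have hsub : G ⊆ LatticeDart.deleteEdge H x := fun d hd =>
        mem_deleteEdge.2 ⟨hGH hd, fun hdx => hxG (hdx ▸ hd), fun hdx => hxG (by
          simpa [hdx] using hG d hd)⟩
      have hlt : LatticeDart.deleteEdge H x \ G ⊂ H \ G := by
        refine Finset.ssubset_iff.2 ⟨x, by simp [mem_deleteEdge], ?_⟩
        intro d hd
        simp only [Finset.mem_insert, Finset.mem_sdiff, mem_deleteEdge] at hd ⊢
        grind
      exact ih _ (hk ▸ Finset.card_lt_card hlt) (h.deleteEdge hH hxH) (hH.deleteEdge x) hsub rfl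

/-- Points at maximal distance from the root are leaves, so the forest can be removed edge by
edge. -/
lemma of_withForest (hG : IsSymmetric G) (hV : ∀ d ∈ G, d.1 ∈ V)
    (hbad : ∀ c, ∀ p ∉ V, ¬ L.bad c p) {o : LatticePoint} (ho : o ∈ V) {W : Finset LatticePoint}
    (hW : Disjoint W V) (h : L.EulerBound (withForest G o W) (V.card + W.card)) :
    L.EulerBound G V.card := by
  induction hk : W.card using Nat.strong_induction_on generalizing W with
  | _ k ih =>
    rcases W.eq_empty_or_nonempty with rfl | hne
    · simpa [withForest] using h
    obtain ⟨p, hp, hmax⟩ := W.exists_max_image (taxicabDist o) hne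
    have hpV : p ∉ V := Finset.disjoint_left.1 hW hp
    have hleaf : ∀ q ∈ W, head (q, dirToward o q) ≠ p := fun q hq hqp => by
      have hdist := taxicabDist_head_dirToward_lt (p := q) (o := o)
        (fun hqo => Finset.disjoint_left.1 hW hq (hqo ▸ ho))
      rw [hqp] at hdist
      exact (hmax q hq).not_gt hdist
    have hGp : ∀ d ∈ G, d.1 ≠ p ∧ head d ≠ p := fun d hd =>
      ⟨fun hdp => hpV (hdp ▸ hV d hd), fun hdp => hpV (hdp ▸ hV _ (hG d hd))⟩
    have herase := h.deleteEdge_pendant (hG.withForest o W) (x := rev (p, dirToward o p))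
      (mem_withForest.2 (Or.inr (Or.inr ⟨p, hp, rfl⟩))) (by simpa using fun c => hbad c p hpV)
      (fun d hd hdp => by
        rw [head_rev] at hdp
        rw [rev_rev]
        rcases mem_withForest.1 hd with hd | ⟨q, -, rfl⟩ | ⟨q, hq, rfl⟩
        · exact absurd hdp (hGp d hd).1
        · obtain rfl : q = p := hdp
          rfl
        · exact absurd hdp (hleaf q hq))
    rw [withForest_erase hGp hleaf] at herase
    have hcard := Finset.card_erase_add_one hp
    refine ih (W.erase p).card (by omega) (hW.mono_left (Finset.erase_subset _ _)) ?_ rfl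
    convert herase using 1
    rw [← hcard]
    push_cast
    ring

end EulerBound

theorem IsCellular.eulerBound (hL : L.IsCellular) (hG : IsSymmetric G)
    (hV : ∀ d ∈ G, d.1 ∈ V) (hne : V.Nonempty) (hbad : ∀ c, ∀ p ∉ V, ¬ L.bad c p) :
    L.EulerBound G V.card := by
  obtain ⟨o, ho⟩ := hne
  obtain ⟨N, hN, hVN⟩ := exists_subset_grid V
  refine EulerBound.of_withForest hG hV hbad ho (W := grid N \ V) Finset.sdiff_disjoint ?_
  have hcard : (V.card : ℤ) + (grid N \ V).card = (grid N).card := by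
    have := Finset.card_sdiff_add_card_eq_card hVN
    omega
  rw [hcard]
  exact (hL.eulerBound_gridDarts hN).anti (isSymmetric_gridDarts N) (hG.withForest o _)
    (withForest_subset_gridDarts hG hV hVN ho)

end DartLabelling

namespace LatticeDart

variable {G H : Finset LatticeDart} {W : Finset LatticePoint} {o p : LatticePoint}
  {d d' : LatticeDart}

lemma card_withForest_empty (ho : o ∉ W) : (withForest ∅ o W).card = 2 * W.card := by
  have hinj : Function.Injective fun p => (p, dirToward o p) := fun p q h => congrArg Prod.fst h
  have hrevinj : Function.Injective fun p => rev (p, dirToward o p) := rev_injective.comp hinj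
  have hdisj : Disjoint (W.image fun p => (p, dirToward o p))
      (W.image fun p => rev (p, dirToward o p)) := by
    simp only [Finset.disjoint_left, Finset.mem_image, not_exists, not_and]
    rintro _ ⟨p, hp, rfl⟩ q hq hpq
    have hq' := taxicabDist_head_dirToward_lt (p := q) (o := o) (by grind)
    have hp' := taxicabDist_head_dirToward_lt (p := p) (o := o) (by grind)
    rw [← fst_rev, hpq] at hq'
    rw [← hpq, head_rev] at hp'
    exact lt_asymm hp' hq'
  rw [withForest, Finset.empty_union, Finset.card_union_of_disjoint hdisj,
    Finset.card_image_of_injective _ hinj, Finset.card_image_of_injective _ hrevinj, two_mul]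

lemma eq_add_two_of_leftmostTurn_eq : ∀ (h : Fin 4 → Bool) (i j : Fin 4),
    leftmostTurn h i = i + 2 → h j → j = i + 2 := by
  decide

lemma next_ne_rev (hd' : d' ∈ H) (htail : d'.1 = head d) (hne : d' ≠ rev d) :
    next H d ≠ rev d := fun h =>
  have hturn : leftmostTurn (fun j => decide ((head d, j) ∈ H)) d.2 = d.2 + 2 :=
    congrArg Prod.snd h
  hne (Prod.ext htail (eq_add_two_of_leftmostTurn_eq _ _ _ hturn (by simpa [← htail] using hd')))

/-- The contribution of `d` to the area integral `∫ x dy`, corrected by the exact form `dφ`. -/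
def areaForm (φ : LatticePoint → ℤ) (d : LatticeDart) : ℤ :=
  d.1.1 * (unitStep d.2).2 - (φ (head d) - φ d.1)

lemma areaForm_rev (φ : LatticePoint → ℤ) (d : LatticeDart) :
    areaForm φ (rev d) = -areaForm φ d := by
  obtain ⟨⟨x, y⟩, i⟩ := d
  have hdir : (rev ((x, y), i)).2 = i + 2 := rfl
  rw [areaForm, areaForm, head_rev, fst_rev, hdir, unitStep_add_two]
  fin_cases i <;> simp [head, unitStep] <;> ring

lemma sum_areaForm_cell (φ : LatticePoint → ℤ) (p : LatticePoint) :
    ((cell p).map (areaForm φ)).sum = 1 := by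
  have hside (i : Fin 4) : areaForm φ (cellSide p i) = (p + cellCorner i).1 * (unitStep i).2 -
      (φ (p + cellCorner (i + 1)) - φ (p + cellCorner i)) := by
    rw [areaForm, head_cellSide, cellSide]
  simp [cell, hside, unitStep, cellCorner]
  ring

end LatticeDart

open LatticeDart

/-! ### Graphs drawn on the square lattice -/

/-- A drawing of a multigraph on the square lattice. Vertices are fattened to pairwise disjoint
boxes `[lower v, upper v]` with a distinguished point, and edges are lattice walks of length at
least three between the boxes of their ends, whose interiors are pairwise disjoint, without
repetition, and avoid all boxes. The values of `point e i` and `dir e i` are irrelevant beyond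
`length e`. -/
structure LatticeDrawing (V E : Type*) where
  lower : V → LatticePoint
  upper : V → LatticePoint
  center : V → LatticePoint
  center_mem : ∀ v, center v ∈ Finset.Icc (lower v) (upper v)
  box_unique : ∀ u v p, p ∈ Finset.Icc (lower u) (upper u) →
    p ∈ Finset.Icc (lower v) (upper v) → u = v
  ends : E → V × V
  length : E → ℕ
  point : E → ℕ → LatticePoint
  dir : E → ℕ → Fin 4
  three_le_length : ∀ e, 3 ≤ length e
  point_succ : ∀ e i, i < length e → point e (i + 1) = point e i + unitStep (dir e i)
  point_zero_mem : ∀ e, point e 0 ∈ Finset.Icc (lower (ends e).1) (upper (ends e).1)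
  point_length_mem : ∀ e, point e (length e) ∈ Finset.Icc (lower (ends e).2) (upper (ends e).2)
  point_notMem : ∀ e i v, 0 < i → i < length e → point e i ∉ Finset.Icc (lower v) (upper v)
  point_inj : ∀ e i f j, 0 < i → i < length e → 0 < j → j < length f →
    point e i = point f j → e = f ∧ i = j

namespace LatticeDrawing

variable {V E : Type*} (Δ : LatticeDrawing V E)

/-- The box representing the vertex `v`. -/
noncomputable def box (v : V) : Finset LatticePoint := Finset.Icc (Δ.lower v) (Δ.upper v)

/-- The same edge with the opposite orientation; the orientation `(e, true)` is the one in which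
`Δ.point e` runs. -/
def flip (x : E × Bool) : E × Bool := (x.1, !x.2)

/-- The initial vertex of an oriented edge. -/
def src (x : E × Bool) : V := if x.2 then (Δ.ends x.1).1 else (Δ.ends x.1).2

/-- The terminal vertex of an oriented edge. -/
def tgt (x : E × Bool) : V := if x.2 then (Δ.ends x.1).2 else (Δ.ends x.1).1

/-- The `i`-th point of an oriented edge. -/
def along (x : E × Bool) (i : ℕ) : LatticePoint :=
  if x.2 then Δ.point x.1 i else Δ.point x.1 (Δ.length x.1 - i)

/-- The `i`-th dart of an oriented edge. -/
def dart (x : E × Bool) (i : ℕ) : LatticeDart :=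
  if x.2 then (Δ.point x.1 i, Δ.dir x.1 i)
  else rev (Δ.point x.1 (Δ.length x.1 - 1 - i), Δ.dir x.1 (Δ.length x.1 - 1 - i))

/-- The tree spanning the box of `v`, in which every point is joined to the center along its row
and then along the column of the center. -/
noncomputable def boxDarts (v : V) : Finset LatticeDart :=
  withForest ∅ (Δ.center v) ((Δ.box v).erase (Δ.center v))

/-- `d` is one of the darts of the oriented edge `x`. -/
def OnEdge (x : E × Bool) (d : LatticeDart) : Prop := ∃ i < Δ.length x.1, d = Δ.dart x i

variable {Δ} {x y : E × Bool} {i j : ℕ} {v u : V} {p : LatticePoint} {d : LatticeDart}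

@[simp] lemma flip_flip (x : E × Bool) : flip (flip x) = x := by simp [flip]

@[simp] lemma fst_flip (x : E × Bool) : (flip x).1 = x.1 := rfl

lemma flip_ne_self (x : E × Bool) : flip x ≠ x := fun h => by simpa [flip] using congrArg Prod.snd h

lemma eq_or_eq_flip (h : x.1 = y.1) : y = x ∨ y = flip x := by
  obtain ⟨e, _ | _⟩ := x <;> obtain ⟨f, _ | _⟩ := y <;> simp_all [flip]

@[simp] lemma src_flip (x : E × Bool) : Δ.src (flip x) = Δ.tgt x := by
  obtain ⟨e, _ | _⟩ := x <;> rfl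

@[simp] lemma tgt_flip (x : E × Bool) : Δ.tgt (flip x) = Δ.src x := by
  obtain ⟨e, _ | _⟩ := x <;> rfl

lemma eq_of_mem_box (hu : p ∈ Δ.box u) (hv : p ∈ Δ.box v) : u = v := Δ.box_unique u v p hu hv

lemma along_flip (hi : i ≤ Δ.length x.1) : Δ.along (flip x) i = Δ.along x (Δ.length x.1 - i) := by
  obtain ⟨e, _ | _⟩ := x <;> simp [flip, along, Nat.sub_sub_self hi]

lemma along_zero_mem_box (x : E × Bool) : Δ.along x 0 ∈ Δ.box (Δ.src x) := by
  obtain ⟨e, _ | _⟩ := x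
  · exact Δ.point_length_mem e
  · exact Δ.point_zero_mem e

lemma along_length_mem_box (x : E × Bool) : Δ.along x (Δ.length x.1) ∈ Δ.box (Δ.tgt x) := by
  simpa [along_flip (Δ := Δ) (x := x) (i := 0)] using along_zero_mem_box (Δ := Δ) (flip x)

lemma along_notMem_box (h0 : 0 < i) (hi : i < Δ.length x.1) (v : V) : Δ.along x i ∉ Δ.box v := by
  obtain ⟨e, _ | _⟩ := x
  · exact Δ.point_notMem e (Δ.length e - i) v (by grind) (by grind)
  · exact Δ.point_notMem e i v h0 hi

lemma of_along_mem_box (hi : i ≤ Δ.length x.1) (h : Δ.along x i ∈ Δ.box v) :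
    (i = 0 ∧ v = Δ.src x) ∨ (i = Δ.length x.1 ∧ v = Δ.tgt x) := by
  rcases Nat.eq_zero_or_pos i with rfl | h0
  · exact Or.inl ⟨rfl, eq_of_mem_box h (along_zero_mem_box x)⟩
  rcases hi.eq_or_lt with rfl | hi
  · exact Or.inr ⟨rfl, eq_of_mem_box h (along_length_mem_box x)⟩
  · exact absurd h (along_notMem_box h0 hi v)

lemma of_along_eq_along (h0 : 0 < i) (hi : i < Δ.length x.1) (hj : j ≤ Δ.length y.1)
    (h : Δ.along x i = Δ.along y j) :
    (y = x ∧ j = i) ∨ (y = flip x ∧ j = Δ.length x.1 - i) := by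
  have hj0 : j ≠ 0 := by
    rintro rfl
    exact along_notMem_box h0 hi _ (h ▸ along_zero_mem_box y)
  have hjl : j ≠ Δ.length y.1 := by
    rintro rfl
    exact along_notMem_box h0 hi _ (h ▸ along_length_mem_box y)
  have hpoint : ∀ k l, 0 < k → k < Δ.length x.1 → 0 < l → l < Δ.length y.1 →
      Δ.point x.1 k = Δ.point y.1 l → x.1 = y.1 ∧ k = l :=
    fun k l => Δ.point_inj x.1 k y.1 l
  obtain ⟨e, _ | _⟩ := x <;> obtain ⟨f, _ | _⟩ := y <;>
    obtain ⟨rfl, hij⟩ := hpoint _ _ (by grind) (by grind) (by grind) (by grind) h <;>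
    simp only [flip, Prod.mk.injEq, true_and] <;> grind

lemma eq_of_along_eq_along (h0 : 0 < i) (hi : i < Δ.length x.1) (hj : j ≤ Δ.length x.1)
    (h : Δ.along x i = Δ.along x j) : j = i := by
  rcases of_along_eq_along h0 hi hj h with ⟨-, h⟩ | ⟨h, -⟩
  · exact h
  · exact absurd h.symm (flip_ne_self x)

lemma rev_dart (hi : i < Δ.length x.1) :
    rev (Δ.dart x i) = Δ.dart (flip x) (Δ.length x.1 - 1 - i) := by
  have hi' : Δ.length x.1 - 1 - (Δ.length x.1 - 1 - i) = i := by omega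
  obtain ⟨e, _ | _⟩ := x <;> simp only [dart, flip] at hi' ⊢ <;> simp [hi']

lemma fst_dart (hi : i < Δ.length x.1) : (Δ.dart x i).1 = Δ.along x i := by
  obtain ⟨e, _ | _⟩ := x <;> simp only [dart, along, if_true, Bool.false_eq_true, if_false, fst_rev]
  rw [head, ← Δ.point_succ e _ (by grind)]
  congr 1
  grind

lemma head_dart (hi : i < Δ.length x.1) : head (Δ.dart x i) = Δ.along x (i + 1) := by
  rw [← fst_rev, rev_dart hi, fst_dart (by grind [fst_flip]), along_flip (by grind)]
  congr 1
  grind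

lemma dart_inj (hi : i < Δ.length x.1) (hj : j < Δ.length y.1) (h : Δ.dart x i = Δ.dart y j) :
    x = y ∧ i = j := by
  have hlen := Δ.three_le_length x.1
  have htail := congrArg Prod.fst h
  have hhead := congrArg head h
  rw [fst_dart hi, fst_dart hj] at htail
  rw [head_dart hi, head_dart hj] at hhead
  rcases Nat.eq_zero_or_pos i with rfl | h0
  · rcases of_along_eq_along one_pos (by omega) hj hhead with ⟨rfl, hj'⟩ | ⟨rfl, hj'⟩
    · exact ⟨rfl, by omega⟩
    · rw [along_flip (by grind)] at htail
      have := eq_of_along_eq_along (by omega) (by grind) (by omega) htail.symm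
      grind
  · rcases of_along_eq_along h0 hi hj.le htail with ⟨rfl, hj'⟩ | ⟨rfl, hj'⟩
    · exact ⟨rfl, hj'.symm⟩
    · rw [along_flip (x := x) (show j + 1 ≤ Δ.length x.1 from hj)] at hhead
      rcases (show i + 1 ≤ Δ.length x.1 from hi).lt_or_eq with hi' | hi'
      · have := eq_of_along_eq_along (by omega) hi' (by omega) hhead
        grind
      · have := eq_of_along_eq_along (by grind) (by grind) (by grind) hhead.symm
        grind

lemma fst_mem_box_of_mem_boxDarts (h : d ∈ Δ.boxDarts v) : d.1 ∈ Δ.box v := by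
  rcases mem_withForest.1 h with h | ⟨p, hp, rfl⟩ | ⟨p, hp, rfl⟩
  · simp at h
  · exact Finset.mem_of_mem_erase hp
  · exact head_dirToward_mem_Icc (Δ.center_mem v) (Finset.mem_of_mem_erase hp)
      (Finset.ne_of_mem_erase hp)

lemma isSymmetric_boxDarts (v : V) : IsSymmetric (Δ.boxDarts v) :=
  IsSymmetric.withForest (fun _ h => absurd h (Finset.notMem_empty _)) _ _

lemma head_mem_box_of_mem_boxDarts (h : d ∈ Δ.boxDarts v) : head d ∈ Δ.box v :=
  fst_mem_box_of_mem_boxDarts (isSymmetric_boxDarts v d h)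

lemma dart_notMem_boxDarts (hi : i < Δ.length x.1) : Δ.dart x i ∉ Δ.boxDarts v := by
  intro h
  have hlen := Δ.three_le_length x.1
  have htail := fst_mem_box_of_mem_boxDarts h
  have hhead := head_mem_box_of_mem_boxDarts h
  rw [fst_dart hi] at htail
  rw [head_dart hi] at hhead
  have := of_along_mem_box hi.le htail
  have := of_along_mem_box hi hhead
  omega

lemma OnEdge.rev (h : Δ.OnEdge x d) : Δ.OnEdge (flip x) (rev d) := by
  obtain ⟨i, hi, rfl⟩ := h
  exact ⟨_, by grind [fst_flip], rev_dart hi⟩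

lemma onEdge_dart_zero (x : E × Bool) : Δ.OnEdge x (Δ.dart x 0) :=
  ⟨0, by have := Δ.three_le_length x.1; omega, rfl⟩

lemma OnEdge.eq_tgt (h : Δ.OnEdge x d) (hv : head d ∈ Δ.box v) : v = Δ.tgt x := by
  obtain ⟨i, hi, rfl⟩ := h
  rw [head_dart hi] at hv
  rcases of_along_mem_box hi hv with h | h
  · omega
  · exact h.2

lemma OnEdge.eq_src (h : Δ.OnEdge x d) (hv : d.1 ∈ Δ.box v) : v = Δ.src x := by
  simpa using h.rev.eq_tgt (v := v) (by simpa using hv)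

lemma card_biUnion_boxDarts [Fintype V] [DecidableEq LatticeDart] :
    (Finset.univ.biUnion Δ.boxDarts).card + 2 * Fintype.card V = 2 * ∑ v, (Δ.box v).card := by
  rw [Finset.card_biUnion fun u _ v _ huv => Finset.disjoint_left.2 fun d hu hv =>
      huv (eq_of_mem_box (fst_mem_box_of_mem_boxDarts hu) (fst_mem_box_of_mem_boxDarts hv)),
    Fintype.card_eq_sum_ones, Finset.mul_sum, Finset.mul_sum, ← Finset.sum_add_distrib]
  refine Finset.sum_congr rfl fun v _ => ?_
  rw [boxDarts, card_withForest_empty (Finset.notMem_erase _ _), ← mul_add]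
  exact congrArg (2 * ·) (Finset.card_erase_add_one (Δ.center_mem v))

lemma card_biUnion_edgeDarts [Fintype E] [DecidableEq LatticeDart] :
    (Finset.univ.biUnion fun x => (Finset.range (Δ.length x.1)).image (Δ.dart x)).card =
      2 * ∑ e, Δ.length e := by
  rw [Finset.card_biUnion, Fintype.sum_prod_type, Finset.mul_sum]
  · refine Finset.sum_congr rfl fun e _ => ?_
    simp only [Fintype.sum_bool]
    rw [Finset.card_image_of_injOn, Finset.card_image_of_injOn, Finset.card_range, two_mul]
    all_goals exact fun i hi j hj h =>
      (dart_inj (by simpa using hi) (by simpa using hj) h).2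
  · intro x _ y _ hxy
    simp only [Function.onFun, Finset.disjoint_left, Finset.mem_image, Finset.mem_range, not_exists,
      not_and]
    rintro _ ⟨i, hi, rfl⟩ j hj h
    exact hxy (dart_inj hj hi h).1.symm

section Fintype

variable [Fintype V] [Fintype E]

open Classical in
/-- The lattice points covered by the drawing. -/
noncomputable def vertices (Δ : LatticeDrawing V E) : Finset LatticePoint :=
  Finset.univ.biUnion Δ.box ∪
    Finset.univ.biUnion fun e => (Finset.Ioo 0 (Δ.length e)).image (Δ.point e)

open Classical in
/-- The lattice edges covered by the drawing, where each box is replaced by a spanning tree. -/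
noncomputable def darts (Δ : LatticeDrawing V E) : Finset LatticeDart :=
  Finset.univ.biUnion Δ.boxDarts ∪
    Finset.univ.biUnion fun x => (Finset.range (Δ.length x.1)).image (Δ.dart x)

lemma mem_vertices_of_mem_box (h : p ∈ Δ.box v) : p ∈ Δ.vertices := by
  classical
  exact Finset.mem_union_left _ (Finset.mem_biUnion.2 ⟨v, Finset.mem_univ v, h⟩)

lemma along_mem_vertices (hi : i ≤ Δ.length x.1) : Δ.along x i ∈ Δ.vertices := by
  classical
  rcases Nat.eq_zero_or_pos i with rfl | h0
  · exact mem_vertices_of_mem_box (along_zero_mem_box x)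
  rcases hi.eq_or_lt with rfl | hi
  · exact mem_vertices_of_mem_box (along_length_mem_box x)
  · refine Finset.mem_union_right _ (Finset.mem_biUnion.2 ⟨x.1, Finset.mem_univ _, ?_⟩)
    rw [along]
    split_ifs <;> exact Finset.mem_image_of_mem _ (by grind)

lemma mem_darts : d ∈ Δ.darts ↔ (∃ v, d ∈ Δ.boxDarts v) ∨ ∃ x, Δ.OnEdge x d := by
  classical
  simp only [darts, Finset.mem_union, Finset.mem_biUnion, Finset.mem_univ, true_and,
    Finset.mem_image, Finset.mem_range, OnEdge, eq_comm]

lemma dart_mem_darts (hi : i < Δ.length x.1) : Δ.dart x i ∈ Δ.darts :=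
  mem_darts.2 (Or.inr ⟨x, i, hi, rfl⟩)

lemma isSymmetric_darts : IsSymmetric Δ.darts := by
  intro d hd
  rw [mem_darts] at hd ⊢
  rcases hd with ⟨v, hd⟩ | ⟨x, hd⟩
  · exact Or.inl ⟨v, isSymmetric_boxDarts v d hd⟩
  · exact Or.inr ⟨flip x, hd.rev⟩

lemma fst_mem_vertices (hd : d ∈ Δ.darts) : d.1 ∈ Δ.vertices := by
  rcases mem_darts.1 hd with ⟨v, hd⟩ | ⟨x, i, hi, rfl⟩
  · exact mem_vertices_of_mem_box (fst_mem_box_of_mem_boxDarts hd)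
  · rw [fst_dart hi]
    exact along_mem_vertices hi.le

lemma mem_boxDarts_or_eq_dart_zero (hd : d ∈ Δ.darts) (hv : d.1 ∈ Δ.box v) :
    d ∈ Δ.boxDarts v ∨ ∃ x, Δ.src x = v ∧ d = Δ.dart x 0 := by
  rcases mem_darts.1 hd with ⟨u, hd⟩ | ⟨x, i, hi, rfl⟩
  · exact Or.inl (eq_of_mem_box hv (fst_mem_box_of_mem_boxDarts hd) ▸ hd)
  · rw [fst_dart hi] at hv
    rcases of_along_mem_box hi.le hv with ⟨rfl, rfl⟩ | ⟨rfl, -⟩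
    · exact Or.inr ⟨x, rfl, rfl⟩
    · exact absurd hi (lt_irrefl _)

lemma eq_dart_or_eq_rev_dart (hi : i + 1 < Δ.length x.1) (hd : d ∈ Δ.darts)
    (hd' : d.1 = Δ.along x (i + 1)) : d = Δ.dart x (i + 1) ∨ d = rev (Δ.dart x i) := by
  rcases mem_darts.1 hd with ⟨v, hd⟩ | ⟨y, j, hj, rfl⟩
  · exact absurd (hd' ▸ fst_mem_box_of_mem_boxDarts hd) (along_notMem_box i.succ_pos hi v)
  · rw [fst_dart hj] at hd'
    rcases of_along_eq_along i.succ_pos hi hj.le hd'.symm with ⟨rfl, rfl⟩ | ⟨rfl, rfl⟩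
    · exact Or.inl rfl
    · rw [rev_dart (by omega)]
      exact Or.inr (by congr 1; omega)

lemma next_dart (hi : i + 1 < Δ.length x.1) :
    next Δ.darts (Δ.dart x i) = Δ.dart x (i + 1) := by
  have hi' : i < Δ.length x.1 := by omega
  have hne : Δ.dart x (i + 1) ≠ rev (Δ.dart x i) := fun h => by
    rw [rev_dart hi'] at h
    exact flip_ne_self x (dart_inj hi (by grind [fst_flip]) h).1.symm
  exact (eq_dart_or_eq_rev_dart hi (next_mem isSymmetric_darts (dart_mem_darts hi'))
    (head_dart hi')).resolve_right
    (next_ne_rev (dart_mem_darts hi) ((fst_dart hi).trans (head_dart hi').symm) hne)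

lemma OnEdge.next (h : Δ.OnEdge x d) :
    Δ.OnEdge x (next Δ.darts d) ∨ head d ∈ Δ.box (Δ.tgt x) := by
  obtain ⟨i, hi, rfl⟩ := h
  rcases (show i + 1 ≤ Δ.length x.1 from hi).lt_or_eq with hi' | hi'
  · exact Or.inl ⟨i + 1, hi', next_dart hi'⟩
  · rw [head_dart hi, hi']
    exact Or.inr (along_length_mem_box x)

lemma card_vertices_add_card_le : Δ.vertices.card + Fintype.card E ≤
    ∑ v, (Δ.box v).card + ∑ e, Δ.length e := by
  classical
  have hbox : (Finset.univ.biUnion Δ.box).card ≤ ∑ v, (Δ.box v).card := Finset.card_biUnion_le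
  have hedge : (Finset.univ.biUnion fun e => (Finset.Ioo 0 (Δ.length e)).image (Δ.point e)).card ≤
      ∑ e, (Δ.length e - 1) :=
    Finset.card_biUnion_le.trans (Finset.sum_le_sum fun e _ => by
      simpa using Finset.card_image_le (s := Finset.Ioo 0 (Δ.length e)) (f := Δ.point e))
  have hlength : ∑ e, (Δ.length e - 1) + Fintype.card E = ∑ e, Δ.length e := by
    rw [Fintype.card_eq_sum_ones, ← Finset.sum_add_distrib]
    exact Finset.sum_congr rfl fun e _ => by have := Δ.three_le_length e; omega
  have hunion := Finset.card_union_le (Finset.univ.biUnion Δ.box)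
    (Finset.univ.biUnion fun e => (Finset.Ioo 0 (Δ.length e)).image (Δ.point e))
  rw [vertices]
  omega

theorem two_mul_card_vertices_add_le :
    2 * (Δ.vertices.card + Fintype.card E) ≤ Δ.darts.card + 2 * Fintype.card V := by
  classical
  have hdisj : Disjoint (Finset.univ.biUnion Δ.boxDarts)
      (Finset.univ.biUnion fun x => (Finset.range (Δ.length x.1)).image (Δ.dart x)) := by
    simp only [Finset.disjoint_left, Finset.mem_biUnion, Finset.mem_univ, true_and,
      Finset.mem_image, Finset.mem_range, not_exists, not_and]
    rintro _ ⟨v, hv⟩ x i hi rfl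
    exact dart_notMem_boxDarts hi hv
  have hvertices := card_vertices_add_card_le (Δ := Δ)
  have hbox := card_biUnion_boxDarts (Δ := Δ)
  have hedge := card_biUnion_edgeDarts (Δ := Δ)
  rw [darts, Finset.card_union_of_disjoint hdisj]
  omega

end Fintype

end LatticeDrawing

lemma eq_one_of_prod_map_eq_one {α G : Type*} [Group G] {g : α → G} {f : List α} {x : α}
    (hf : f.Nodup) (hx : x ∈ f) (hg : ∀ z ∈ f, z ≠ x → g z = 1) (hprod : (f.map g).prod = 1) :
    g x = 1 := by
  classical
  rwa [List.prod_map_eq_pow_single x _ fun z hne hz => hg z hz hne, List.count_eq_one_of_mem hf hx,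
    pow_one] at hprod

lemma mul_eq_one_of_prod_map_eq_one {α G : Type*} [Group G] {g : α → G} {f : List α} {x y : α}
    (hf : f.Nodup) (hx : x ∈ f) (hy : y ∈ f) (hxy : x ≠ y)
    (hg : ∀ z ∈ f, z ≠ x → z ≠ y → g z = 1) (hprod : (f.map g).prod = 1) : g x * g y = 1 := by
  have hone {l : List α} (hl : ∀ z ∈ l, g z = 1) : (l.map g).prod = 1 :=
    List.prod_eq_one (by simpa using hl)
  obtain ⟨s, t, rfl⟩ := List.append_of_mem hx
  have hnodup : ∀ z ∈ s ++ t, z ≠ x := by grind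
  rcases List.mem_append.1 (show y ∈ s ++ t by grind) with hy | hy <;>
    obtain ⟨u, v, rfl⟩ := List.append_of_mem hy
  · have := hone (l := u) (by grind)
    have := hone (l := v) (by grind)
    have := hone (l := t) (by grind)
    simp_all [mul_eq_one_comm]
  · have := hone (l := s) (by grind)
    have := hone (l := u) (by grind)
    have := hone (l := v) (by grind)
    simp_all

namespace LatticeDrawing

open LatticeDart

variable {V E : Type*} {Δ : LatticeDrawing V E} {x y : E × Bool} {i : ℕ} {v : V}
  {d : LatticeDart} {f : List LatticeDart}

/-! ### Edges on the boundary of a face -/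

section Boundary

variable [Fintype V] [Fintype E]

lemma dart_succ_mem_iff (hf : IsBoundaryWalk Δ.darts f) (hi : i + 1 < Δ.length x.1) :
    Δ.dart x (i + 1) ∈ f ↔ Δ.dart x i ∈ f := by
  refine ⟨fun h => ?_, fun h => next_dart hi ▸ hf.orbit.map_mem h⟩
  obtain ⟨d, hd, hnext⟩ := hf.orbit.exists_map_eq h
  have htail : (rev d).1 = Δ.along x (i + 1) := by
    rw [fst_rev, ← fst_next Δ.darts, hnext, fst_dart hi]
  rcases eq_dart_or_eq_rev_dart hi (isSymmetric_darts d (hf.subset d hd)) htail with hd' | hd'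
  · have hback : d = Δ.dart (flip x) (Δ.length x.1 - 1 - (i + 1)) := by
      rw [← rev_dart hi, ← hd', rev_rev]
    rw [hback, next_dart (by grind [fst_flip])] at hnext
    exact absurd (dart_inj (by grind [fst_flip]) hi hnext).1 (flip_ne_self x)
  · exact rev_injective hd' ▸ hd

lemma OnEdge.mem_iff (hf : IsBoundaryWalk Δ.darts f) (hd : Δ.OnEdge x d) :
    d ∈ f ↔ Δ.dart x 0 ∈ f := by
  obtain ⟨i, hi, rfl⟩ := hd
  induction i with
  | zero => rfl
  | succ i ih => exact (dart_succ_mem_iff hf hi).trans (ih (by omega))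

variable {S : Set V}

lemma mem_boxDarts_or_onEdge_of_mem (hf : IsBoundaryWalk Δ.darts f) (hx : Δ.dart x 0 ∈ f)
    (hxS : Δ.tgt x ∈ S) (hS : ∀ y, Δ.dart y 0 ∈ f → Δ.src y ∈ S → Δ.tgt y ∈ S) :
    ∀ d ∈ f, (∃ v ∈ S, d ∈ Δ.boxDarts v) ∨ ∃ y, Δ.tgt y ∈ S ∧ Δ.OnEdge y d := by
  refine hf.orbit.forall_mem hx (Or.inr ⟨x, hxS, onEdge_dart_zero x⟩) fun d hd hR => ?_
  have hstep {v : V} (hv : v ∈ S) (hhead : head d ∈ Δ.box v) :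
      (∃ v ∈ S, next Δ.darts d ∈ Δ.boxDarts v) ∨
        ∃ y, Δ.tgt y ∈ S ∧ Δ.OnEdge y (next Δ.darts d) := by
    have hnext := hf.orbit.map_mem hd
    rcases mem_boxDarts_or_eq_dart_zero (hf.subset _ hnext) hhead with h | ⟨y, rfl, hy⟩
    · exact Or.inl ⟨v, hv, h⟩
    · exact Or.inr ⟨y, hS y (hy ▸ hnext) hv, hy ▸ onEdge_dart_zero y⟩
  rcases hR with ⟨v, hv, hd⟩ | ⟨y, hy, hd⟩
  · exact hstep hv (head_mem_box_of_mem_boxDarts hd)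
  · exact hd.next.elim (fun h => Or.inr ⟨y, hy, h⟩) (hstep hy)

lemma src_mem_of_tgt_mem (hf : IsBoundaryWalk Δ.darts f) (hx : Δ.dart x 0 ∈ f)
    (hxS : Δ.tgt x ∈ S) (hS : ∀ y, Δ.dart y 0 ∈ f → Δ.src y ∈ S → Δ.tgt y ∈ S)
    (hy : Δ.dart y 0 ∈ f) : Δ.src y ∈ S := by
  obtain ⟨d, hd, hnext⟩ := hf.orbit.exists_map_eq hy
  have hhead : head d ∈ Δ.box (Δ.src y) := by
    have hlen := Δ.three_le_length y.1
    rw [← fst_next Δ.darts, hnext, fst_dart (by omega)]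
    exact along_zero_mem_box y
  rcases mem_boxDarts_or_onEdge_of_mem hf hx hxS hS d hd with ⟨v, hv, hd⟩ | ⟨z, hz, hd⟩
  · exact eq_of_mem_box (head_mem_box_of_mem_boxDarts hd) hhead ▸ hv
  · exact hd.eq_tgt hhead ▸ hz

end Boundary

/-! ### Areas of faces -/

open Classical in
/-- A potential whose differential agrees with `x dy` along the trees `boxDarts v`. -/
noncomputable def potential (Δ : LatticeDrawing V E) (p : LatticePoint) : ℤ :=
  if h : ∃ v, p ∈ Δ.box v then (Δ.center h.choose).1 * p.2 else 0

lemma potential_of_mem_box {p : LatticePoint} (hp : p ∈ Δ.box v) :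
    Δ.potential p = (Δ.center v).1 * p.2 := by
  have h : ∃ u, p ∈ Δ.box u := ⟨v, hp⟩
  rw [potential, dif_pos h, eq_of_mem_box h.choose_spec hp]

lemma areaForm_eq_zero_of_mem_boxDarts (hd : d ∈ Δ.boxDarts v) : areaForm Δ.potential d = 0 := by
  have htree {p} (hp : p ∈ (Δ.box v).erase (Δ.center v)) :
      areaForm Δ.potential (p, dirToward (Δ.center v) p) = 0 := by
    obtain ⟨hne, hp⟩ := Finset.mem_erase.1 hp
    rw [areaForm, potential_of_mem_box hp,
      potential_of_mem_box (head_dirToward_mem_Icc (Δ.center_mem v) hp hne)]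
    simp only [head, dirToward]
    split_ifs
    · simp [unitStep]
    · simp [unitStep]
    all_goals
      rw [show (Δ.center v).1 = p.1 by omega]
      simp [unitStep]
      try ring
  rcases mem_withForest.1 hd with h | ⟨p, hp, rfl⟩ | ⟨p, hp, rfl⟩
  · simp at h
  · exact htree hp
  · rw [areaForm_rev, htree hp, neg_zero]

section EdgesOn

variable [Fintype E]

/-- The oriented edges traversed by `f`. -/
def edgesOn (Δ : LatticeDrawing V E) (f : List LatticeDart) : Finset (E × Bool) :=
  Finset.univ.filter fun x => Δ.dart x 0 ∈ f

lemma mem_edgesOn : x ∈ Δ.edgesOn f ↔ Δ.dart x 0 ∈ f := by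
  simp [edgesOn]

lemma card_edgesOn_append {g : List LatticeDart} (h : f.Disjoint g) :
    (Δ.edgesOn (f ++ g)).card = (Δ.edgesOn f).card + (Δ.edgesOn g).card := by
  classical
  rw [← Finset.card_union_of_disjoint]
  · congr 1
    ext x
    simp [mem_edgesOn]
  · exact Finset.disjoint_left.2 fun x hf hg => h (mem_edgesOn.1 hf) (mem_edgesOn.1 hg)

lemma sum_area_eq_zero [Fintype V] (hnodup : f.Nodup) (hsub : ∀ d ∈ f, d ∈ Δ.darts)
    (hedge : ∀ x d, Δ.OnEdge x d → (d ∈ f ↔ Δ.dart x 0 ∈ f))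
    (hflip : ∀ x ∈ Δ.edgesOn f, flip x ∈ Δ.edgesOn f) :
    (f.map (areaForm Δ.potential)).sum = 0 := by
  rw [← List.sum_toFinset _ hnodup, ← Finset.sum_filter_ne_zero]
  refine Finset.sum_involution (fun d _ => rev d) (fun d _ => by rw [areaForm_rev, add_neg_cancel])
    (fun d _ _ => rev_ne_self d) (fun d hd => ?_) fun d _ => rev_rev d
  simp only [Finset.mem_filter, List.mem_toFinset, areaForm_rev, neg_ne_zero] at hd ⊢
  refine ⟨?_, hd.2⟩
  rcases mem_darts.1 (hsub d hd.1) with ⟨v, hv⟩ | ⟨x, hx⟩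
  · exact absurd (areaForm_eq_zero_of_mem_boxDarts hv) hd.2
  · exact (hedge _ _ hx.rev).2 (mem_edgesOn.1 (hflip x (mem_edgesOn.2 ((hedge x d hx).1 hd.1))))

end EdgesOn

/-! ### Holonomy of a drawing -/

/-- The dart of an oriented edge that carries its holonomy. -/
def mark (Δ : LatticeDrawing V E) (x : E × Bool) : LatticeDart :=
  if x.2 then Δ.dart x 0 else Δ.dart x (Δ.length x.1 - 1)

lemma onEdge_mark (x : E × Bool) : Δ.OnEdge x (Δ.mark x) := by
  have hlen := Δ.three_le_length x.1
  rw [mark]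
  split_ifs
  · exact onEdge_dart_zero x
  · exact ⟨_, by omega, rfl⟩

lemma mark_flip (x : E × Bool) : Δ.mark (flip x) = rev (Δ.mark x) := by
  have hlen := Δ.three_le_length x.1
  obtain ⟨e, _ | _⟩ := x
  · change Δ.dart (flip (e, false)) 0 = rev (Δ.dart (e, false) (Δ.length e - 1))
    rw [rev_dart (by grind)]
    simp
  · change Δ.dart (flip (e, true)) (Δ.length e - 1) = rev (Δ.dart (e, true) 0)
    rw [rev_dart (by grind)]
    simp

lemma mark_injective : Function.Injective Δ.mark := fun x y h => by
  obtain ⟨i, hi, hx⟩ := onEdge_mark (Δ := Δ) x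
  obtain ⟨j, hj, hy⟩ := onEdge_mark (Δ := Δ) y
  exact (dart_inj hi hj (hx.symm.trans (h.trans hy))).1

/-- Labels, for each pair `c` of vertices, of the darts by a group `K c` in which boxes other than
those of `c` play the role of punctures: cells disjoint from these have trivial holonomy, loops
have nontrivial holonomy, and parallel edges have different ones. -/
structure Holonomy (Δ : LatticeDrawing V E) (K : V × V → Type*) [∀ c, Group (K c)] where
  hol : ∀ c, LatticeDart → K c
  hol_rev : ∀ c d, hol c (rev d) = (hol c d)⁻¹
  hol_cell : ∀ c p, (∀ d ∈ cell p, ∀ u, u ≠ c.1 → u ≠ c.2 → d.1 ∉ Δ.box u) →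
    ((cell p).map (hol c)).prod = 1
  hol_box : ∀ c v d, (v = c.1 ∨ v = c.2) → d.1 ∈ Δ.box v → head d ∈ Δ.box v → hol c d = 1
  hol_edge : ∀ x d, Δ.OnEdge x d → d ≠ Δ.mark x → hol (Δ.src x, Δ.tgt x) d = 1
  hol_loop : ∀ x, Δ.src x = Δ.tgt x → hol (Δ.src x, Δ.tgt x) (Δ.mark x) ≠ 1
  hol_parallel : ∀ x y, x.1 ≠ y.1 → Δ.src x = Δ.src y → Δ.tgt x = Δ.tgt y →
    hol (Δ.src x, Δ.tgt x) (Δ.mark x) ≠ hol (Δ.src x, Δ.tgt x) (Δ.mark y)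

/-- `x` is an edge between the two vertices of `c`. -/
def Joins (Δ : LatticeDrawing V E) (c : V × V) (x : E × Bool) : Prop :=
  c = (Δ.src x, Δ.tgt x) ∨ c = (Δ.tgt x, Δ.src x)

lemma Joins.src_eq {c : V × V} (h : Δ.Joins c x) : Δ.src x = c.1 ∨ Δ.src x = c.2 := by
  rcases h with rfl | rfl <;> simp

lemma Joins.tgt_eq {c : V × V} (h : Δ.Joins c x) : Δ.tgt x = c.1 ∨ Δ.tgt x = c.2 := by
  rcases h with rfl | rfl <;> simp

namespace Holonomy

variable {K : V × V → Type*} [∀ c, Group (K c)] (h : Δ.Holonomy K) {c : V × V}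

/-- The labelling whose area form vanishes on the darts of boxes. -/
noncomputable def labelling : DartLabelling K where
  hol := h.hol
  area := areaForm Δ.potential
  bad c p := ∃ u, u ≠ c.1 ∧ u ≠ c.2 ∧ p ∈ Δ.box u
  hol_rev := h.hol_rev
  area_rev := areaForm_rev _

lemma isCellular_labelling : h.labelling.IsCellular where
  area_pos p := (sum_areaForm_cell Δ.potential p).symm ▸ one_pos
  hol_eq_one c p hp := h.hol_cell c p fun d hd u hu hu' hdu => hp d hd ⟨u, hu, hu', hdu⟩

lemma hol_eq_one_of_onEdge (hc : Δ.Joins c x) (hd : Δ.OnEdge x d) (hne : d ≠ Δ.mark x) :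
    h.hol c d = 1 := by
  rcases hc with rfl | rfl
  · exact h.hol_edge x d hd hne
  · have hrev := h.hol_edge _ _ hd.rev (by rw [mark_flip]; exact rev_injective.ne hne)
    rwa [src_flip, tgt_flip, h.hol_rev, inv_eq_one] at hrev

section Face

variable [Fintype V] [Fintype E]

lemma mem_boxDarts_or_onEdge_of_joins (hf : IsBoundaryWalk Δ.darts f) (hx : x ∈ Δ.edgesOn f)
    (hc : ∀ y ∈ Δ.edgesOn f, Δ.Joins c y) (hd : d ∈ f) :
    (∃ v, (v = c.1 ∨ v = c.2) ∧ d ∈ Δ.boxDarts v) ∨ ∃ y ∈ Δ.edgesOn f, Δ.OnEdge y d := by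
  refine (mem_boxDarts_or_onEdge_of_mem (S := {v | v = c.1 ∨ v = c.2}) hf (mem_edgesOn.1 hx)
    (hc x hx).tgt_eq (fun y hy _ => (hc y (mem_edgesOn.2 hy)).tgt_eq) d hd).imp_right ?_
  rintro ⟨y, -, hy⟩
  exact ⟨y, mem_edgesOn.2 ((hy.mem_iff hf).1 hd), hy⟩

lemma hol_eq_one_of_ne_mark (hf : IsBoundaryWalk Δ.darts f) (hx : x ∈ Δ.edgesOn f)
    (hc : ∀ y ∈ Δ.edgesOn f, Δ.Joins c y) (hd : d ∈ f) (hne : ∀ y ∈ Δ.edgesOn f, d ≠ Δ.mark y) :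
    h.hol c d = 1 := by
  rcases mem_boxDarts_or_onEdge_of_joins hf hx hc hd with ⟨v, hv, hd⟩ | ⟨y, hy, hd⟩
  · exact h.hol_box c v d hv (fst_mem_box_of_mem_boxDarts hd) (head_mem_box_of_mem_boxDarts hd)
  · exact h.hol_eq_one_of_onEdge (hc y hy) hd (hne y hy)

variable {h} (hf : h.labelling.IsBoundedFace Δ.darts f) (hnodup : f.Nodup)
include hf

lemma prod_eq_one_of_joins (hx : x ∈ Δ.edgesOn f) (hc : ∀ y ∈ Δ.edgesOn f, Δ.Joins c y) :
    (f.map (h.hol c)).prod = 1 := by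
  refine hf.hol_eq_one c fun d hd => ?_
  rintro ⟨u, hu, hu', hdu⟩
  rcases mem_boxDarts_or_onEdge_of_joins hf.toIsBoundaryWalk hx hc hd with ⟨v, hv, hd⟩ | ⟨y, hy, hd⟩
  · rw [eq_of_mem_box hdu (fst_mem_box_of_mem_boxDarts hd)] at hu hu'
    exact hv.elim hu hu'
  · rw [hd.eq_src hdu] at hu hu'
    exact (hc y hy).src_eq.elim hu hu'

include hnodup

lemma exists_flip_notMem_edgesOn : ∃ x ∈ Δ.edgesOn f, flip x ∉ Δ.edgesOn f := by
  by_contra! hflip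
  exact hf.area_pos.ne' (sum_area_eq_zero hnodup hf.subset
    (fun x d hd => hd.mem_iff hf.toIsBoundaryWalk) hflip)

lemma edgesOn_ne_singleton (x : E × Bool) : Δ.edgesOn f ≠ {x} := by
  intro hfx
  have hx : x ∈ Δ.edgesOn f := by simp [hfx]
  have hmem {y : E × Bool} (hy : Δ.dart y 0 ∈ f) : y = x := by
    simpa [hfx] using mem_edgesOn.2 hy
  have hloop : Δ.src x = Δ.tgt x :=
    src_mem_of_tgt_mem (S := {Δ.tgt x}) hf.toIsBoundaryWalk (mem_edgesOn.1 hx) rfl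
      (fun y hy _ => congrArg Δ.tgt (hmem hy)) (mem_edgesOn.1 hx)
  have hc : ∀ y ∈ Δ.edgesOn f, Δ.Joins (Δ.src x, Δ.tgt x) y := fun y hy =>
    hmem (mem_edgesOn.1 hy) ▸ Or.inl rfl
  have hmark : Δ.mark x ∈ f := ((onEdge_mark x).mem_iff hf.toIsBoundaryWalk).2 (mem_edgesOn.1 hx)
  exact h.hol_loop x hloop (eq_one_of_prod_map_eq_one hnodup hmark (fun d hd hne =>
    h.hol_eq_one_of_ne_mark hf.toIsBoundaryWalk hx hc hd (by simpa [hfx] using hne))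
    (prod_eq_one_of_joins hf hx hc))

lemma edgesOn_ne_pair [DecidableEq E] (hxy : x ≠ y) : Δ.edgesOn f ≠ {x, y} := by
  intro hfxy
  have hx : x ∈ Δ.edgesOn f := by simp [hfxy]
  have hy : y ∈ Δ.edgesOn f := by simp [hfxy]
  have hne : x.1 ≠ y.1 := fun hxy' => by
    obtain rfl := (eq_or_eq_flip hxy').resolve_left hxy.symm
    obtain ⟨z, hz, hz'⟩ := exists_flip_notMem_edgesOn hf hnodup
    rw [hfxy] at hz hz'
    grind [flip_flip]
  have hsrc {x y : E × Bool} (hfxy : Δ.edgesOn f = {x, y}) : Δ.src y = Δ.tgt x := by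
    by_contra hne
    exact hne (src_mem_of_tgt_mem (S := {Δ.tgt x}) (x := x) (y := y) hf.toIsBoundaryWalk
      (by simp [← mem_edgesOn, hfxy]) rfl (fun z hz hz' => by
        rw [← mem_edgesOn, hfxy, Finset.mem_insert, Finset.mem_singleton] at hz
        rcases hz with rfl | rfl
        · rfl
        · exact absurd hz' hne) (by simp [← mem_edgesOn, hfxy]))
  have hyx : Δ.src y = Δ.tgt x := hsrc hfxy
  have hxy' : Δ.src x = Δ.tgt y := hsrc (by rw [hfxy, Finset.pair_comm])
  have hc : ∀ z ∈ Δ.edgesOn f, Δ.Joins (Δ.src x, Δ.tgt x) z := fun z hz => by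
    rw [hfxy, Finset.mem_insert, Finset.mem_singleton] at hz
    rcases hz with rfl | rfl
    · exact Or.inl rfl
    · exact Or.inr (by rw [hxy', hyx])
  have hmark {z} (hz : z ∈ Δ.edgesOn f) : Δ.mark z ∈ f :=
    ((onEdge_mark z).mem_iff hf.toIsBoundaryWalk).2 (mem_edgesOn.1 hz)
  have hmul := mul_eq_one_of_prod_map_eq_one hnodup (hmark hx) (hmark hy) (mark_injective.ne hxy)
    (fun d hd hdx hdy => h.hol_eq_one_of_ne_mark hf.toIsBoundaryWalk hx hc hd (by simp [*]))
    (prod_eq_one_of_joins hf hx hc)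
  refine h.hol_parallel x (flip y) hne (by simpa using hxy') (by simpa using hyx.symm) ?_
  rw [mark_flip, h.hol_rev, eq_inv_iff_mul_eq_one, hmul]

lemma three_le_card_edgesOn : 3 ≤ (Δ.edgesOn f).card := by
  classical
  by_contra! hcard
  interval_cases hn : (Δ.edgesOn f).card
  · obtain ⟨x, hx, -⟩ := exists_flip_notMem_edgesOn hf hnodup
    exact Finset.card_ne_zero_of_mem hx hn
  · obtain ⟨x, hx⟩ := Finset.card_eq_one.1 hn
    exact edgesOn_ne_singleton hf hnodup x hx
  · obtain ⟨x, y, hxy, hfxy⟩ := Finset.card_eq_two.1 hn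
    exact edgesOn_ne_pair hf hnodup hxy hfxy

end Face

section FaceFamily

variable [Fintype V] [Fintype E] {h} {fs : List (List LatticeDart)}

lemma three_mul_length_le (hfs : h.labelling.IsFaceFamily Δ.darts fs) :
    3 * fs.length ≤ (Δ.edgesOn fs.flatten).card := by
  induction fs with
  | nil => simp
  | cons f fs ih =>
    obtain ⟨hnodup, hf, hdisj, hfs⟩ := DartLabelling.IsFaceFamily.cons_iff.1 hfs
    have hthree := three_le_card_edgesOn hf hnodup
    have := ih hfs
    rw [List.flatten_cons, card_edgesOn_append hdisj, List.length_cons]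
    omega

/-- The edges cannot all be traversed in both directions, since the areas of the faces are
positive but the areas of the darts of each edge cancel out. -/
lemma card_edgesOn_flatten_lt (hfs : h.labelling.IsFaceFamily Δ.darts fs) (hne : fs ≠ []) :
    (Δ.edgesOn fs.flatten).card < 2 * Fintype.card E := by
  rw [mul_comm, ← Fintype.card_bool, ← Fintype.card_prod, Finset.card_lt_iff_ne_univ]
  intro huniv
  have hmem (x d) (hd : Δ.OnEdge x d) : d ∈ fs.flatten ↔ Δ.dart x 0 ∈ fs.flatten := by
    simp only [List.mem_flatten]
    exact exists_congr fun f => and_congr_right fun hf =>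
      hd.mem_iff (hfs.isBoundedFace f hf).toIsBoundaryWalk
  have hzero := sum_area_eq_zero hfs.nodup (fun d hd => by
    obtain ⟨f, hf, hd⟩ := List.mem_flatten.1 hd
    exact (hfs.isBoundedFace f hf).subset d hd) hmem (by simp [huniv])
  rw [List.map_flatten, List.sum_flatten, List.map_map] at hzero
  refine (List.sum_pos _ (fun a ha => ?_) (by simpa using hne)).ne' hzero
  obtain ⟨f, hf, rfl⟩ := List.mem_map.1 ha
  exact (hfs.isBoundedFace f hf).area_pos

theorem card_add_four_le (h : Δ.Holonomy K) (hV : 2 ≤ Fintype.card V) :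
    Fintype.card E + 4 ≤ 3 * Fintype.card V := by
  have hne : Δ.vertices.Nonempty := by
    obtain ⟨v⟩ : Nonempty V := Fintype.card_pos_iff.1 (by omega)
    exact ⟨_, mem_vertices_of_mem_box (Δ.center_mem v)⟩
  obtain ⟨fs, hfs, hbound⟩ := h.isCellular_labelling.eulerBound isSymmetric_darts
    (fun _ => fst_mem_vertices) hne fun _ _ hp ⟨_, _, _, hu⟩ => hp (mem_vertices_of_mem_box hu)
  have hcount := two_mul_card_vertices_add_le (Δ := Δ)
  rcases eq_or_ne fs [] with rfl | hnil
  · simp only [List.length_nil, Nat.cast_zero] at hbound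
    omega
  · have := three_mul_length_le hfs
    have := card_edgesOn_flatten_lt hfs hnil
    omega

end FaceFamily

end Holonomy

end LatticeDrawing

/-! ### Holonomy of paths -/

section Holonomy

open CategoryTheory FundamentalGroupoid

variable {X Y : Type*} [TopologicalSpace X] [PathConnectedSpace X] [TopologicalSpace Y]

/-- The group in which holonomies of paths in `X` take their values. It is the opposite of the
fundamental group at an arbitrary base point, so that products run in the order of travel. -/
abbrev HolonomyGroup (X : Type*) [TopologicalSpace X] [PathConnectedSpace X] :=
  (FundamentalGroup X (Classical.arbitrary X))ᵐᵒᵖ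

/-- The homotopy class of a fixed path from the base point of `X` to `a`. -/
noncomputable def baseHom (a : X) :
    FundamentalGroupoid.mk (Classical.arbitrary X) ⟶ FundamentalGroupoid.mk a :=
  fromPath (.mk (PathConnectedSpace.somePath _ _))

/-- The holonomy of a path: the class of the loop that it forms together with the fixed paths
from the base point to its ends. -/
noncomputable def holonomy {a b : X} (p : Path a b) : HolonomyGroup X :=
  .op (baseHom a ≫ fromPath (.mk p) ≫ inv (baseHom b) : End _)

lemma holonomy_trans {a b c : X} (p : Path a b) (q : Path b c) :
    holonomy (p.trans q) = holonomy p * holonomy q := by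
  have h : fromPath (.mk (p.trans q)) = fromPath (.mk p) ≫ fromPath (.mk q) := rfl
  rw [holonomy, holonomy, holonomy, ← MulOpposite.op_mul, End.mul_def, h]
  simp

lemma holonomy_eq_iff {a b : X} {p q : Path a b} : holonomy p = holonomy q ↔ p.Homotopic q := by
  rw [holonomy, holonomy, MulOpposite.op_inj, cancel_epi, cancel_mono, fromPath_eq_iff_homotopic]

lemma holonomy_refl (a : X) : holonomy (Path.refl a) = 1 := by
  simpa [Path.refl_trans_refl] using holonomy_trans (Path.refl a) (Path.refl a)

lemma holonomy_cast {a b a' b' : X} (p : Path a b) (ha : a' = a) (hb : b' = b) :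
    holonomy (p.cast ha hb) = holonomy p := by
  subst ha hb
  rfl

lemma holonomy_map_eq [SimplyConnectedSpace Y] (F : C(Y, X)) {a b : Y} (p q : Path a b) :
    holonomy (p.map F.continuous) = holonomy (q.map F.continuous) :=
  holonomy_eq_iff.2 ((SimplyConnectedSpace.paths_homotopic p q).map F)

/-- The holonomy of the curve `F` travelled from time `s` to time `t`. -/
noncomputable def curveHolonomy (F : C(ℝ, X)) (s t : ℝ) : HolonomyGroup X :=
  holonomy ((Path.segment s t).map F.continuous)

lemma curveHolonomy_trans (F : C(ℝ, X)) (s t u : ℝ) :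
    curveHolonomy F s t * curveHolonomy F t u = curveHolonomy F s u := by
  rw [curveHolonomy, curveHolonomy, ← holonomy_trans, ← Path.map_trans]
  exact holonomy_map_eq F _ _

lemma curveHolonomy_self (F : C(ℝ, X)) (s : ℝ) : curveHolonomy F s s = 1 := by
  simpa using curveHolonomy_trans F s s s

lemma curveHolonomy_inv (F : C(ℝ, X)) (s t : ℝ) :
    (curveHolonomy F s t)⁻¹ = curveHolonomy F t s := by
  rw [inv_eq_iff_mul_eq_one, curveHolonomy_trans, curveHolonomy_self]

lemma curveHolonomy_one_sub {F G : C(ℝ, X)} (h : ∀ t, G t = F (1 - t)) :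
    curveHolonomy G 0 1 = curveHolonomy F 1 0 := by
  rw [curveHolonomy, curveHolonomy, ← holonomy_cast ((Path.segment (1 : ℝ) 0).map F.continuous)
    (by simp [h] : G 0 = F 1) (by simp [h] : G 1 = F 0)]
  congr 1
  ext t
  suffices F (1 - t) = F (-t + 1) by simpa [h, AffineMap.lineMap_apply]
  ring_nf

end Holonomy

/-! ### Holonomy in punctured planes -/

section PuncturedPlane

variable {S C : Set ℂ} [PathConnectedSpace ↥Sᶜ] {a b c : ℂ}

lemma holonomy_eq_of_convex (hC : Convex ℝ C) (hCS : C ⊆ Sᶜ) {a b : ↥Sᶜ} (p q : Path a b)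
    (hp : ∀ t, (p t : ℂ) ∈ C) (hq : ∀ t, (q t : ℂ) ∈ C) : holonomy p = holonomy q := by
  have ha : (a : ℂ) ∈ C := by simpa using hp 0
  have hb : (b : ℂ) ∈ C := by simpa using hp 1
  have : ContractibleSpace C := hC.contractibleSpace ⟨a, ha⟩
  let inC (p : Path a b) (hp : ∀ t, (p t : ℂ) ∈ C) : Path (⟨a, ha⟩ : C) ⟨b, hb⟩ :=
    { toFun t := ⟨p t, hp t⟩
      continuous_toFun := by fun_prop
      source' := by simp
      target' := by simp }
  exact holonomy_map_eq (⟨fun z => ⟨z, hCS z.2⟩, by fun_prop⟩ : C(C, ↥Sᶜ)) (inC p hp) (inC q hq)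

lemma segment_apply_mem (a b : ℂ) (t : unitInterval) : Path.segment a b t ∈ segment ℝ a b :=
  Path.range_segment a b ▸ mem_range_self t

/-- The straight path from `a` to `b` in the complement of `S`. -/
noncomputable def segmentPath (h : segment ℝ a b ⊆ Sᶜ) :
    Path (⟨a, h (left_mem_segment ℝ a b)⟩ : ↥Sᶜ) ⟨b, h (right_mem_segment ℝ a b)⟩ where
  toFun t := ⟨Path.segment a b t, h (segment_apply_mem a b t)⟩
  continuous_toFun := by fun_prop
  source' := by simp
  target' := by simp

open Classical in
variable (S) in
/-- The holonomy of the segment from `a` to `b` in the complement of `S`, with the value `1` if the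
segment meets `S`. -/
noncomputable def segmentHolonomy (a b : ℂ) : HolonomyGroup ↥Sᶜ :=
  if h : segment ℝ a b ⊆ Sᶜ then holonomy (segmentPath h) else 1

lemma segmentHolonomy_self (a : ℂ) : segmentHolonomy S a a = 1 := by
  rw [segmentHolonomy]
  split_ifs with h
  · have hrefl : segmentPath h = Path.refl _ := by
      ext
      simp [segmentPath]
    rw [hrefl, holonomy_refl]
  · rfl

lemma holonomy_eq_segmentHolonomy (hC : Convex ℝ C) (hCS : C ⊆ Sᶜ) {a b : ↥Sᶜ} (p : Path a b)
    (hp : ∀ t, (p t : ℂ) ∈ C) : holonomy p = segmentHolonomy S a b := by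
  have h : segment ℝ (a : ℂ) b ⊆ C :=
    hC.segment_subset (by simpa using hp 0) (by simpa using hp 1)
  rw [segmentHolonomy, dif_pos (h.trans hCS)]
  exact holonomy_eq_of_convex hC hCS _ _ hp fun t => h (segment_apply_mem _ _ t)

lemma segmentHolonomy_trans (hC : Convex ℝ C) (hCS : C ⊆ Sᶜ) (ha : a ∈ C) (hb : b ∈ C)
    (hc : c ∈ C) :
    segmentHolonomy S a b * segmentHolonomy S b c = segmentHolonomy S a c := by
  have hab : segment ℝ a b ⊆ C := hC.segment_subset ha hb
  have hbc : segment ℝ b c ⊆ C := hC.segment_subset hb hc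
  have hmem (t) :
      ((segmentPath (hab.trans hCS)).trans (segmentPath (hbc.trans hCS)) t : ℂ) ∈ C := by
    rw [Path.trans_apply]
    split_ifs
    exacts [hab (segment_apply_mem a b _), hbc (segment_apply_mem b c _)]
  rw [← holonomy_eq_segmentHolonomy hC hCS _ hmem, holonomy_trans, segmentHolonomy,
    segmentHolonomy, dif_pos, dif_pos]

lemma segmentHolonomy_inv (a b : ℂ) : (segmentHolonomy S a b)⁻¹ = segmentHolonomy S b a := by
  by_cases h : segment ℝ a b ⊆ Sᶜ
  · rw [inv_eq_iff_mul_eq_one, segmentHolonomy_trans (convex_segment a b) h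
      (left_mem_segment ℝ a b) (right_mem_segment ℝ a b) (left_mem_segment ℝ a b),
      segmentHolonomy_self]
  · rw [segmentHolonomy, segmentHolonomy, dif_neg h, dif_neg (by rwa [segment_symm]), inv_one]

lemma curveHolonomy_eq_segmentHolonomy (hC : Convex ℝ C) (hCS : C ⊆ Sᶜ) (F : C(ℝ, ↥Sᶜ))
    {s t : ℝ} (h : ∀ u ∈ uIcc s t, (F u : ℂ) ∈ C) :
    curveHolonomy F s t = segmentHolonomy S (F s) (F t) :=
  holonomy_eq_segmentHolonomy hC hCS _ fun u => h _ <| by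
    rw [← segment_eq_uIcc, ← Path.range_segment]
    exact mem_range_self u

/-- The images of the vertices other than the two in `c`: the punctures of the plane that are
relevant to edges joining these two vertices. -/
def punctures {V : Type*} (φ : V → ℂ) (c : V × V) : Set ℂ := φ '' {u | u ≠ c.1 ∧ u ≠ c.2}

instance {V : Type*} [Finite V] (φ : V → ℂ) (c : V × V) : PathConnectedSpace ↥(punctures φ c)ᶜ :=
  isPathConnected_iff_pathConnectedSpace.1 <|
    ((toFinite _).image φ).countable.isPathConnected_compl_of_one_lt_rank
      (by simp [Complex.rank_real_complex])

lemma edgeHomotopic_of_curveHolonomy_eq {n : ℕ} {φ : Fin n → ℂ} {c : Fin n × Fin n}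
    {F G : C(ℝ, ↥(punctures φ c)ᶜ)} (hF₀ : (F 0 : ℂ) = φ c.1) (hG₀ : (G 0 : ℂ) = φ c.1)
    (hF₁ : (F 1 : ℂ) = φ c.2) (hG₁ : (G 1 : ℂ) = φ c.2)
    (h : curveHolonomy F 0 1 = curveHolonomy G 0 1) :
    EdgeHomotopic φ c (fun t => F t) (fun t => G t) := by
  have h₀ : F 0 = G 0 := Subtype.ext (hF₀.trans hG₀.symm)
  have h₁ : F 1 = G 1 := Subtype.ext (hF₁.trans hG₁.symm)
  rw [curveHolonomy, curveHolonomy, ← holonomy_cast ((Path.segment (0 : ℝ) 1).map G.continuous)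
    h₀ h₁, holonomy_eq_iff] at h
  obtain ⟨H⟩ := h
  let pr : ℝ → unitInterval := projIcc 0 1 zero_le_one
  have pr_zero : pr 0 = 0 := projIcc_left zero_le_one
  have pr_one : pr 1 = 1 := projIcc_right zero_le_one
  refine ⟨fun x t => H (pr t, pr x), ?_, fun x hx => ?_, fun x hx => ?_, fun t _ => ?_,
    fun x _ t _ v hv₁ hv₂ hv => (H (pr t, pr x)).2 ⟨v, ⟨hv₁, hv₂⟩, hv.symm⟩⟩
  · have hpr : Continuous pr := continuous_projIcc
    fun_prop
  · have hpr : pr x = ⟨x, hx⟩ := projIcc_of_mem _ hx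
    simp [pr_zero, hpr, AffineMap.lineMap_apply]
  · have hpr : pr x = ⟨x, hx⟩ := projIcc_of_mem _ hx
    simp [pr_one, hpr, AffineMap.lineMap_apply]
  · simp [pr_zero, pr_one, hF₀, hF₁]

end PuncturedPlane

open Filter Topology

/-! ### Squares in the plane -/

/-- The closed ball of radius `ρ` about `a` in the supremum norm of `ℂ`. -/
def closedSquare (a : ℂ) (ρ : ℝ) : Set ℂ := {z | |z.re - a.re| ≤ ρ ∧ |z.im - a.im| ≤ ρ}

section ClosedSquare

variable {a b c : ℂ} {ρ σ τ : ℝ}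

lemma self_mem_closedSquare (a : ℂ) (hρ : 0 ≤ ρ) : a ∈ closedSquare a ρ := by
  simp [closedSquare, hρ]

lemma mem_closedSquare_comm : a ∈ closedSquare b ρ ↔ b ∈ closedSquare a ρ := by
  simp only [closedSquare, mem_ofPred_eq, abs_sub_comm a.re, abs_sub_comm a.im]

lemma mem_closedSquare_trans (hab : a ∈ closedSquare b ρ) (hbc : b ∈ closedSquare c σ)
    (h : ρ + σ ≤ τ) : a ∈ closedSquare c τ :=
  ⟨by linarith [abs_sub_le a.re b.re c.re, hab.1, hbc.1],
    by linarith [abs_sub_le a.im b.im c.im, hab.2, hbc.2]⟩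

lemma closedSquare_subset_closedSquare (a : ℂ) (h : ρ ≤ σ) : closedSquare a ρ ⊆ closedSquare a σ :=
  fun _ hz => ⟨hz.1.trans h, hz.2.trans h⟩

lemma mem_closedSquare_of_dist_le (h : dist a b ≤ ρ) : a ∈ closedSquare b ρ := by
  rw [Complex.dist_eq] at h
  exact ⟨(Complex.abs_re_le_norm (a - b)).trans h, (Complex.abs_im_le_norm (a - b)).trans h⟩

lemma dist_le_of_mem_closedSquare (h : a ∈ closedSquare b ρ) : dist a b ≤ 2 * ρ := by
  rw [Complex.dist_eq, two_mul]
  exact (Complex.norm_le_abs_re_add_abs_im (a - b)).trans (add_le_add h.1 h.2)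

lemma convex_reProdIm {s t : Set ℝ} (hs : Convex ℝ s) (ht : Convex ℝ t) : Convex ℝ (s ×ℂ t) :=
  (hs.linear_preimage Complex.reLm).inter (ht.linear_preimage Complex.imLm)

lemma convex_closedSquare (a : ℂ) (ρ : ℝ) : Convex ℝ (closedSquare a ρ) := by
  have h : closedSquare a ρ =
      Metric.closedBall a.re ρ ×ℂ Metric.closedBall a.im ρ := by
    ext z
    simp [closedSquare, Complex.mem_reProdIm, Real.dist_eq]
  exact h ▸ convex_reProdIm (convex_closedBall _ _) (convex_closedBall _ _)

lemma closedSquare_mem_nhds (a : ℂ) (hρ : 0 < ρ) : closedSquare a ρ ∈ 𝓝 a :=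
  mem_of_superset (Metric.closedBall_mem_nhds a hρ) fun _ => mem_closedSquare_of_dist_le

lemma eventually_le_nhdsGT_zero {c : ℝ} (hc : 0 < c) : ∀ᶠ ρ in 𝓝[>] (0 : ℝ), ρ ≤ c :=
  nhdsWithin_le_nhds (ge_mem_nhds hc)

lemma exists_pos_le_of_eventually {p : ℝ → Prop} (hp : ∀ᶠ ρ in 𝓝[>] 0, p ρ) {c : ℝ}
    (hc : 0 < c) : ∃ ρ, 0 < ρ ∧ ρ ≤ c ∧ p ρ :=
  (eventually_mem_nhdsWithin.and ((eventually_le_nhdsGT_zero hc).and hp)).exists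

lemma eventually_notMem_closedSquare {A B : Set ℂ} (hA : IsCompact A) (hB : IsCompact B)
    (hAB : Disjoint A B) : ∀ᶠ ρ in 𝓝[>] (0 : ℝ), ∀ a ∈ A, ∀ b ∈ B, a ∉ closedSquare b ρ := by
  obtain ⟨ε, hε, h⟩ := hAB.exists_thickenings hA hB.isClosed
  filter_upwards [eventually_le_nhdsGT_zero (c := ε / 4) (by positivity)] with ρ hρ a ha b hb hab
  have hdist : dist b a < ε := by
    rw [dist_comm]
    linarith [dist_le_of_mem_closedSquare hab]
  exact disjoint_left.1 h (Metric.mem_thickening_iff.2 ⟨a, ha, hdist⟩)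
    (Metric.self_subset_thickening hε B hb)

lemma eventually_mem_closedSquare_of_abs_sub_le {f : ℝ → ℂ} {x : ℝ} (hf : ContinuousAt f x)
    (hρ : 0 < ρ) : ∀ᶠ η in 𝓝[>] (0 : ℝ), ∀ t, |t - x| ≤ η → f t ∈ closedSquare (f x) ρ := by
  obtain ⟨ε, hε, h⟩ := Metric.mem_nhds_iff.1 (hf (closedSquare_mem_nhds (f x) hρ))
  filter_upwards [eventually_le_nhdsGT_zero (half_pos hε)] with η hη t ht
  refine h ?_
  rw [Metric.mem_ball, Real.dist_eq]
  linarith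

lemma eventually_mem_closedSquare_of_isCompact {f : ℝ → ℂ} {K : Set ℝ} (hK : IsCompact K)
    (hf : ContinuousOn f K) (hρ : 0 < ρ) : ∀ᶠ ω in 𝓝[>] (0 : ℝ), ∀ s ∈ K, ∀ t ∈ K,
      |s - t| ≤ ω → f s ∈ closedSquare (f t) ρ := by
  obtain ⟨ε, hε, h⟩ :=
    Metric.uniformContinuousOn_iff.1 (hK.uniformContinuousOn_of_continuous hf) ρ hρ
  filter_upwards [eventually_le_nhdsGT_zero (half_pos hε)] with ω hω s hs t ht hst
  exact mem_closedSquare_of_dist_le (h s hs t ht (by rw [Real.dist_eq]; linarith)).le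

lemma eventually_abs_sub_lt_of_injOn {f : ℝ → ℂ} {K : Set ℝ} (hK : IsCompact K)
    (hf : ContinuousOn f K) (hinj : InjOn f K) {ω : ℝ} (hω : 0 < ω) :
    ∀ᶠ δ in 𝓝[>] (0 : ℝ), ∀ s ∈ K, ∀ t ∈ K, f s ∈ closedSquare (f t) δ → |s - t| < ω := by
  have hcompact : IsCompact ((K ×ˢ K) ∩ {p : ℝ × ℝ | ω ≤ |p.1 - p.2|}) :=
    (hK.prod hK).inter_right (isClosed_le continuous_const (by fun_prop))
  have hcont : ContinuousOn (fun p : ℝ × ℝ => dist (f p.1) (f p.2))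
      ((K ×ˢ K) ∩ {p | ω ≤ |p.1 - p.2|}) :=
    continuous_dist.comp_continuousOn <| (hf.comp continuousOn_fst fun p hp => hp.1.1).prodMk
      (hf.comp continuousOn_snd fun p hp => hp.1.2)
  have hpos : ∀ p ∈ (K ×ˢ K) ∩ {p : ℝ × ℝ | ω ≤ |p.1 - p.2|}, 0 < dist (f p.1) (f p.2) := by
    refine fun p hp => dist_pos.2 fun heq => ?_
    have h : p.1 = p.2 := hinj hp.1.1 hp.1.2 heq
    exact hω.not_ge (by simpa [h] using hp.2)
  obtain ⟨ε, hε, h⟩ := hcompact.exists_forall_le' hcont hpos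
  filter_upwards [eventually_le_nhdsGT_zero (c := ε / 4) (by positivity)] with δ hδ s hs t ht hst
  by_contra! hlt
  linarith [h (s, t) ⟨⟨hs, ht⟩, hlt⟩, dist_le_of_mem_closedSquare hst]

end ClosedSquare

/-! ### Plane drawings at a fine scale -/

/-- A plane drawing of a multigraph. The curves are parametrized by the whole line, but only their
restrictions to `[0, 1]` represent the edges. -/
structure PlaneDrawing (V E : Type*) where
  (pos : V → ℂ) (ends : E → V × V) (curve : E → C(ℝ, ℂ))
  pos_injective : Function.Injective pos
  curve_zero : ∀ e, curve e 0 = pos (ends e).1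
  curve_one : ∀ e, curve e 1 = pos (ends e).2
  curve_ne_pos : ∀ e, ∀ t ∈ Ioo (0 : ℝ) 1, ∀ v, curve e t ≠ pos v
  eq_or_eq_of_curve_eq_pos : ∀ e t v, curve e t = pos v → v = (ends e).1 ∨ v = (ends e).2
  curve_injOn : ∀ e, InjOn (curve e) (Ioo 0 1)
  curve_ne_curve : ∀ e f, e ≠ f → ∀ s ∈ Ioo (0 : ℝ) 1, ∀ t ∈ Ioo (0 : ℝ) 1, curve e s ≠ curve f t

namespace PlaneDrawing

variable {V E : Type*} (A : PlaneDrawing V E)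

/-- A choice of scales at which a plane drawing can be replaced by a drawing on a square lattice of
width `mesh`.

The vertices are surrounded by disjoint squares of radius `outer`, which contain the edges up to
time `2 * endTime` after their start and before their end. Between the times `endTime` and
`1 - endTime`, the edges stay away from the squares of radius `2 * inner`. At the times `trim` and
`1 - trim` they are in the squares of radius `inner`, and in between they avoid the squares of
radius `clearance` and are separated from each other at scale `mesh`. The two moduli of continuity
compare times at scale `modulus` with points at the scales `clearance` and `mesh`. -/
structure Scales where
  (outer endTime inner trim clearance modulus mesh : ℝ)
  outer_pos : 0 < outer
  endTime_pos : 0 < endTime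
  inner_pos : 0 < inner
  trim_pos : 0 < trim
  mesh_pos : 0 < mesh
  endTime_le : endTime ≤ 1 / 8
  two_mul_inner_le : 2 * inner ≤ outer
  trim_lt_endTime : trim < endTime
  clearance_le_inner : clearance ≤ inner
  modulus_le_endTime : modulus ≤ endTime
  mesh_le_clearance : 20 * mesh ≤ clearance
  eq_of_mem_outer : ∀ u v z, z ∈ closedSquare (A.pos u) outer → z ∈ closedSquare (A.pos v) outer →
    u = v
  start_mem_outer : ∀ e, ∀ t ∈ Icc 0 (2 * endTime),
    A.curve e t ∈ closedSquare (A.pos (A.ends e).1) outer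
  end_mem_outer : ∀ e, ∀ t ∈ Icc (1 - 2 * endTime) 1,
    A.curve e t ∈ closedSquare (A.pos (A.ends e).2) outer
  middle_notMem : ∀ e u, ∀ t ∈ Icc endTime (1 - endTime),
    A.curve e t ∉ closedSquare (A.pos u) (2 * inner)
  trim_mem_inner : ∀ e, A.curve e trim ∈ closedSquare (A.pos (A.ends e).1) inner
  one_sub_trim_mem_inner : ∀ e, A.curve e (1 - trim) ∈ closedSquare (A.pos (A.ends e).2) inner
  trimmed_notMem : ∀ e u, ∀ t ∈ Icc trim (1 - trim),
    A.curve e t ∉ closedSquare (A.pos u) clearance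
  mem_of_abs_sub_le : ∀ e, ∀ s ∈ Icc (0 : ℝ) 1, ∀ t ∈ Icc (0 : ℝ) 1, |s - t| ≤ modulus →
    A.curve e s ∈ closedSquare (A.curve e t) (clearance / 4)
  abs_sub_lt_of_mem : ∀ e, ∀ s ∈ Icc trim (1 - trim), ∀ t ∈ Icc trim (1 - trim),
    A.curve e s ∈ closedSquare (A.curve e t) (5 * mesh) → |s - t| < modulus
  separated : ∀ e f, e ≠ f → ∀ s ∈ Icc trim (1 - trim), ∀ t ∈ Icc trim (1 - trim),
    A.curve e s ∉ closedSquare (A.curve f t) (5 * mesh)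

section Scales

variable {a ρ : ℝ}

lemma eventually_eq_of_mem_closedSquare [Finite V] : ∀ᶠ ρ in 𝓝[>] (0 : ℝ), ∀ u v z,
    z ∈ closedSquare (A.pos u) ρ → z ∈ closedSquare (A.pos v) ρ → u = v := by
  simp only [eventually_all]
  intro u v
  by_cases huv : u = v
  · exact .of_forall fun _ _ _ _ => huv
  obtain ⟨σ, h, hσ⟩ := ((eventually_notMem_closedSquare isCompact_singleton isCompact_singleton
    (disjoint_singleton.2 (A.pos_injective.ne huv))).and self_mem_nhdsWithin).exists
  filter_upwards [eventually_le_nhdsGT_zero (half_pos hσ)] with ρ hρ z hzu hzv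
  exact absurd (mem_closedSquare_trans (mem_closedSquare_comm.1 hzu) hzv (by linarith))
    (h _ rfl _ rfl)

lemma eventually_mem_closedSquare_ends [Finite E] (hρ : 0 < ρ) : ∀ᶠ η in 𝓝[>] (0 : ℝ),
    (∀ e, ∀ t ∈ Icc 0 η, A.curve e t ∈ closedSquare (A.pos (A.ends e).1) ρ) ∧
      ∀ e, ∀ t ∈ Icc (1 - η) 1, A.curve e t ∈ closedSquare (A.pos (A.ends e).2) ρ := by
  refine (eventually_all.2 fun e => ?_).and (eventually_all.2 fun e => ?_)
  · filter_upwards [eventually_mem_closedSquare_of_abs_sub_le (A.curve e).continuous.continuousAt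
      (x := 0) hρ] with η h t ht
    exact A.curve_zero e ▸ h t (by simpa [abs_of_nonneg ht.1] using ht.2)
  · filter_upwards [eventually_mem_closedSquare_of_abs_sub_le (A.curve e).continuous.continuousAt
      (x := 1) hρ] with η h t ht
    exact A.curve_one e ▸ h t (abs_le.2 ⟨by linarith [ht.1], by linarith [ht.1, ht.2]⟩)

lemma Icc_one_sub_subset_Ioo (ha : 0 < a) : Icc a (1 - a) ⊆ Ioo 0 1 :=
  Icc_subset_Ioo ha (by linarith)

lemma isCompact_image_curve (e : E) : IsCompact (A.curve e '' Icc a (1 - a)) :=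
  isCompact_Icc.image (A.curve e).continuous

lemma eventually_notMem_closedSquare_pos [Finite V] [Finite E] (ha : 0 < a) :
    ∀ᶠ ρ in 𝓝[>] (0 : ℝ), ∀ e u, ∀ t ∈ Icc a (1 - a),
      A.curve e t ∉ closedSquare (A.pos u) ρ := by
  refine eventually_all.2 fun e => eventually_all.2 fun u => ?_
  have hdisj : Disjoint (A.curve e '' Icc a (1 - a)) {A.pos u} := by
    rw [disjoint_singleton_right]
    rintro ⟨t, ht, h⟩
    exact A.curve_ne_pos e t (Icc_one_sub_subset_Ioo ha ht) u h
  filter_upwards [eventually_notMem_closedSquare (A.isCompact_image_curve e) isCompact_singleton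
    hdisj] with ρ h t ht
  exact h _ (mem_image_of_mem _ ht) _ rfl

lemma eventually_notMem_closedSquare_curve [Finite E] (ha : 0 < a) :
    ∀ᶠ ρ in 𝓝[>] (0 : ℝ), ∀ e f, e ≠ f → ∀ s ∈ Icc a (1 - a), ∀ t ∈ Icc a (1 - a),
      A.curve e s ∉ closedSquare (A.curve f t) ρ := by
  refine eventually_all.2 fun e => eventually_all.2 fun f => ?_
  by_cases hef : e = f
  · exact .of_forall fun _ h => absurd hef h
  have hdisj : Disjoint (A.curve e '' Icc a (1 - a)) (A.curve f '' Icc a (1 - a)) := by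
    rw [disjoint_left]
    rintro _ ⟨s, hs, rfl⟩ ⟨t, ht, h⟩
    exact A.curve_ne_curve e f hef s (Icc_one_sub_subset_Ioo ha hs) t
      (Icc_one_sub_subset_Ioo ha ht) h.symm
  filter_upwards [eventually_notMem_closedSquare (A.isCompact_image_curve e)
    (A.isCompact_image_curve f) hdisj] with ρ h _ s hs t ht
  exact h _ (mem_image_of_mem _ hs) _ (mem_image_of_mem _ ht)

theorem nonempty_scales [Finite V] [Finite E] : Nonempty A.Scales := by
  obtain ⟨R, hR, -, hR_eq⟩ :=
    exists_pos_le_of_eventually A.eventually_eq_of_mem_closedSquare one_pos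
  obtain ⟨η, hη, hη_le, hη_start, hη_end⟩ :=
    exists_pos_le_of_eventually (A.eventually_mem_closedSquare_ends hR) (c := 1 / 4)
      (by norm_num)
  obtain ⟨r, hr, hr_le, hr_notMem⟩ :=
    exists_pos_le_of_eventually (A.eventually_notMem_closedSquare_pos (half_pos hη)) hR
  obtain ⟨a, ha, ha_le, ha_start, ha_end⟩ :=
    exists_pos_le_of_eventually (A.eventually_mem_closedSquare_ends (half_pos hr))
      (c := η / 4) (by positivity)
  obtain ⟨q, hq, hq_le, hq_notMem⟩ :=
    exists_pos_le_of_eventually (A.eventually_notMem_closedSquare_pos ha) (half_pos hr)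
  obtain ⟨ω, hω, hω_le, hω_mem⟩ := exists_pos_le_of_eventually (eventually_all.2 fun e =>
    eventually_mem_closedSquare_of_isCompact isCompact_Icc (A.curve e).continuous.continuousOn
      (div_pos hq four_pos)) (half_pos hη)
  obtain ⟨δ, hδ, hδ_le, hδ_abs, hδ_sep⟩ :=
    exists_pos_le_of_eventually ((eventually_all.2 fun e =>
      eventually_abs_sub_lt_of_injOn isCompact_Icc (A.curve e).continuous.continuousOn
        ((A.curve_injOn e).mono (Icc_one_sub_subset_Ioo ha)) hω).and
      (A.eventually_notMem_closedSquare_curve ha)) (div_pos hq four_pos)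
  have hη_two : 2 * (η / 2) = η := by ring
  have hr_two : 2 * (r / 2) = r := by ring
  have hδ_five : 5 * (δ / 5) = δ := by ring
  exact ⟨{
    outer := R, endTime := η / 2, inner := r / 2, trim := a, clearance := q, modulus := ω
    mesh := δ / 5
    outer_pos := hR, endTime_pos := half_pos hη, inner_pos := half_pos hr, trim_pos := ha
    mesh_pos := by positivity
    endTime_le := by linarith
    two_mul_inner_le := by linarith
    trim_lt_endTime := by linarith
    mesh_le_clearance := by linarith
    clearance_le_inner := hq_le, modulus_le_endTime := hω_le
    eq_of_mem_outer := hR_eq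
    start_mem_outer := by rwa [hη_two], end_mem_outer := by rwa [hη_two]
    middle_notMem := by rwa [hr_two]
    trim_mem_inner := fun e => ha_start e a ⟨ha.le, le_rfl⟩
    one_sub_trim_mem_inner := fun e => ha_end e (1 - a) ⟨le_rfl, by linarith⟩
    trimmed_notMem := hq_notMem
    mem_of_abs_sub_le := hω_mem
    abs_sub_lt_of_mem := by rwa [hδ_five]
    separated := by rwa [hδ_five] }⟩

end Scales

end PlaneDrawing

lemma exists_lt_forall_between_not {p q : ℕ → Prop} {N : ℕ} (hp : p 0) (hq : q N)
    (hpq : ∀ i, p i → ¬q i) :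
    ∃ a b, a < b ∧ b ≤ N ∧ p a ∧ q b ∧ ∀ i, a < i → i < b → ¬p i ∧ ¬q i := by
  classical
  have hex : ∃ b, q b := ⟨N, hq⟩
  have ha : p (Nat.findGreatest p (Nat.find hex)) := Nat.findGreatest_spec (Nat.zero_le _) hp
  refine ⟨_, _, (Nat.findGreatest_le _).lt_of_ne fun h => ?_, Nat.find_min' hex hq, ha,
    Nat.find_spec hex, fun i hai hib =>
      ⟨Nat.findGreatest_is_greatest hai hib.le, Nat.find_min hex hib⟩⟩
  exact hpq _ ha (h.symm ▸ Nat.find_spec hex)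

namespace PlaneDrawing.Scales

open LatticeDart

variable {V E : Type*} {A : PlaneDrawing V E} (F : A.Scales)

/-- The point of the plane represented by a lattice point. -/
def gridPoint (p : LatticePoint) : ℂ := ⟨F.mesh * p.1, F.mesh * p.2⟩

/-- The strip of an edge consists of the lattice points next to its trimmed curve. -/
def InStrip (e : E) (p : LatticePoint) : Prop :=
  ∃ t ∈ Icc F.trim (1 - F.trim), F.gridPoint p ∈ closedSquare (A.curve e t) (2 * F.mesh)

open Classical in
/-- A time at which the edge passes next to a lattice point of its strip, with junk value `0`
outside the strip. -/
noncomputable def time (e : E) (p : LatticePoint) : ℝ :=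
  if h : F.InStrip e p then h.choose else 0

/-- The lattice points in the box of a vertex. -/
def InBox (u : V) (p : LatticePoint) : Prop :=
  F.gridPoint p ∈ closedSquare (A.pos u) (F.inner + F.mesh)

/-- The lattice point to the lower left of a point of the plane. -/
noncomputable def round (z : ℂ) : LatticePoint := (⌊z.re / F.mesh⌋, ⌊z.im / F.mesh⌋)

variable {F} {e f : E} {u : V} {p q : LatticePoint} {t : ℝ}

lemma trim_le_one_sub_trim : F.trim ≤ 1 - F.trim := by
  linarith [F.trim_lt_endTime, F.endTime_le]

lemma time_mem (h : F.InStrip e p) : F.time e p ∈ Icc F.trim (1 - F.trim) := by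
  rw [time, dif_pos h]
  exact h.choose_spec.1

lemma gridPoint_mem_of_inStrip (h : F.InStrip e p) :
    F.gridPoint p ∈ closedSquare (A.curve e (F.time e p)) (2 * F.mesh) := by
  rw [time, dif_pos h]
  exact h.choose_spec.2

lemma inStrip_of_mem (ht : t ∈ Icc F.trim (1 - F.trim))
    (h : F.gridPoint p ∈ closedSquare (A.curve e t) F.mesh) : F.InStrip e p :=
  ⟨t, ht, closedSquare_subset_closedSquare _ (by linarith [F.mesh_pos]) h⟩

lemma InStrip.unique (he : F.InStrip e p) (hf : F.InStrip f p) : e = f := by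
  by_contra hne
  obtain ⟨s, hs, hsp⟩ := he
  obtain ⟨t, ht, htp⟩ := hf
  exact F.separated e f hne s hs t ht
    (mem_closedSquare_trans (mem_closedSquare_comm.1 hsp) htp (by linarith [F.mesh_pos]))

lemma gridPoint_add_unitStep_mem (p : LatticePoint) (i : Fin 4) :
    F.gridPoint (p + unitStep i) ∈ closedSquare (F.gridPoint p) F.mesh := by
  have := F.mesh_pos.le
  fin_cases i <;> simp [closedSquare, gridPoint, unitStep, mul_add, abs_of_nonneg, this]

lemma abs_time_sub_lt {ρ σ : ℝ} (h : F.InStrip e p) (ht : t ∈ Icc F.trim (1 - F.trim))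
    (hpq : F.gridPoint p ∈ closedSquare (F.gridPoint q) ρ)
    (hq : F.gridPoint q ∈ closedSquare (A.curve e t) σ) (hρσ : ρ + σ ≤ 3 * F.mesh) :
    |F.time e p - t| < F.modulus :=
  F.abs_sub_lt_of_mem e _ (time_mem h) _ ht <|
    mem_closedSquare_trans (mem_closedSquare_comm.1 (gridPoint_mem_of_inStrip h))
      (mem_closedSquare_trans hpq hq le_rfl) (by linarith)

lemma abs_time_sub_time_lt (hp : F.InStrip e p) {i : Fin 4} (hq : F.InStrip e (p + unitStep i)) :
    |F.time e (p + unitStep i) - F.time e p| < F.modulus :=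
  abs_time_sub_lt hq (time_mem hp) (gridPoint_add_unitStep_mem p i) (gridPoint_mem_of_inStrip hp)
    (by linarith)

lemma time_lt_or_lt_of_inBox (h : F.InStrip e p) (hu : F.InBox u p) :
    (F.time e p < F.endTime ∧ u = (A.ends e).1) ∨
      (1 - F.endTime < F.time e p ∧ u = (A.ends e).2) := by
  have hmem : A.curve e (F.time e p) ∈ closedSquare (A.pos u) (2 * F.inner) :=
    mem_closedSquare_trans (mem_closedSquare_comm.1 (gridPoint_mem_of_inStrip h)) hu
      (by linarith [F.mesh_le_clearance, F.clearance_le_inner, F.mesh_pos])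
  have hmem' := closedSquare_subset_closedSquare _ F.two_mul_inner_le hmem
  have htime : ¬F.time e p ∈ Icc F.endTime (1 - F.endTime) := fun ht =>
    F.middle_notMem e u _ ht hmem
  obtain ⟨htrim, htrim'⟩ := time_mem h
  rw [mem_Icc, not_and_or, not_le, not_le] at htime
  refine htime.imp (fun ht => ⟨ht, F.eq_of_mem_outer _ _ _ hmem' (F.start_mem_outer e _ ?_)⟩)
    fun ht => ⟨ht, F.eq_of_mem_outer _ _ _ hmem' (F.end_mem_outer e _ ?_)⟩
  · exact ⟨by linarith [F.trim_pos], by linarith [F.endTime_pos]⟩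
  · exact ⟨by linarith [F.endTime_pos], by linarith [F.trim_pos]⟩

lemma abs_mul_floor_div_sub_le {δ : ℝ} (hδ : 0 < δ) (x : ℝ) : |δ * ⌊x / δ⌋ - x| ≤ δ := by
  have hle := (le_div_iff₀ hδ).1 (Int.floor_le (x / δ))
  have hlt := (div_lt_iff₀ hδ).1 (Int.lt_floor_add_one (x / δ))
  exact abs_le.2 ⟨by linarith, by linarith⟩

lemma abs_floor_sub_floor_le_one {x y : ℝ} (h : |x - y| ≤ 1) : |⌊x⌋ - ⌊y⌋| ≤ 1 := by
  obtain ⟨hxy, hyx⟩ := abs_le.1 h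
  have hxy' := Int.floor_le_floor (show y ≤ x + 1 by linarith)
  have hyx' := Int.floor_le_floor (show x ≤ y + 1 by linarith)
  rw [Int.floor_add_one] at hxy' hyx'
  exact abs_le.2 ⟨by linarith, by linarith⟩

lemma gridPoint_round_mem (z : ℂ) : F.gridPoint (F.round z) ∈ closedSquare z F.mesh :=
  ⟨abs_mul_floor_div_sub_le F.mesh_pos z.re, abs_mul_floor_div_sub_le F.mesh_pos z.im⟩

lemma abs_round_sub_round_le_one {z w : ℂ} (h : z ∈ closedSquare w F.mesh) :
    |(F.round z).1 - (F.round w).1| ≤ 1 ∧ |(F.round z).2 - (F.round w).2| ≤ 1 := by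
  have habs {x y : ℝ} (hxy : |x - y| ≤ F.mesh) : |⌊x / F.mesh⌋ - ⌊y / F.mesh⌋| ≤ 1 := by
    refine abs_floor_sub_floor_le_one ?_
    rwa [← sub_div, abs_div, abs_of_pos F.mesh_pos, div_le_one F.mesh_pos]
  exact ⟨habs h.1, habs h.2⟩

variable (F) in
/-- The graph on the lattice points of the strip of an edge, with the lattice steps as edges. -/
def stripGraph (e : E) : SimpleGraph LatticePoint where
  Adj p q := F.InStrip e p ∧ F.InStrip e q ∧ ∃ i, q = p + unitStep i
  symm := ⟨by
    rintro p _ ⟨hp, hq, i, rfl⟩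
    exact ⟨hq, hp, i + 2, by rw [unitStep_add_two, add_neg_cancel_right]⟩⟩
  loopless := ⟨fun p ⟨_, _, i, h⟩ => unitStep_ne_zero i (left_eq_add.1 h)⟩

lemma stripGraph_reachable_of_snd_eq (hp : F.InStrip e p) (hq : F.InStrip e q)
    (h : |q.1 - p.1| ≤ 1) (h' : q.2 = p.2) : (F.stripGraph e).Reachable p q := by
  obtain ⟨hl, hr⟩ := abs_le.1 h
  obtain heq | heq | heq : q.1 = p.1 ∨ q.1 = p.1 + 1 ∨ q.1 = p.1 + -1 := by omega
  · exact Prod.ext heq h' ▸ SimpleGraph.Reachable.refl _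
  · exact SimpleGraph.Adj.reachable ⟨hp, hq, 0, Prod.ext heq (by simpa [unitStep] using h')⟩
  · exact SimpleGraph.Adj.reachable ⟨hp, hq, 2, Prod.ext heq (by simpa [unitStep] using h')⟩

lemma stripGraph_reachable_of_fst_eq (hp : F.InStrip e p) (hq : F.InStrip e q)
    (h : q.1 = p.1) (h' : |q.2 - p.2| ≤ 1) : (F.stripGraph e).Reachable p q := by
  obtain ⟨hl, hr⟩ := abs_le.1 h'
  obtain heq | heq | heq : q.2 = p.2 ∨ q.2 = p.2 + 1 ∨ q.2 = p.2 + -1 := by omega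
  · exact Prod.ext h heq ▸ SimpleGraph.Reachable.refl _
  · exact SimpleGraph.Adj.reachable ⟨hp, hq, 1, Prod.ext (by simpa [unitStep] using h) heq⟩
  · exact SimpleGraph.Adj.reachable ⟨hp, hq, 3, Prod.ext (by simpa [unitStep] using h) heq⟩

lemma stripGraph_reachable_round {s t : ℝ} (hs : s ∈ Icc F.trim (1 - F.trim))
    (ht : t ∈ Icc F.trim (1 - F.trim)) (h : A.curve e t ∈ closedSquare (A.curve e s) F.mesh) :
    (F.stripGraph e).Reachable (F.round (A.curve e s)) (F.round (A.curve e t)) := by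
  obtain ⟨hfst, hsnd⟩ := abs_round_sub_round_le_one h
  have hs' := inStrip_of_mem hs (gridPoint_round_mem (A.curve e s))
  have ht' := inStrip_of_mem ht (gridPoint_round_mem (A.curve e t))
  have hcorner : F.InStrip e ((F.round (A.curve e t)).1, (F.round (A.curve e s)).2) :=
    ⟨s, hs, (mem_closedSquare_trans (gridPoint_round_mem _) h (two_mul F.mesh).ge).1,
      (closedSquare_subset_closedSquare _ (by linarith [F.mesh_pos]) (gridPoint_round_mem _)).2⟩
  exact (stripGraph_reachable_of_snd_eq hs' hcorner hfst rfl).trans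
    (stripGraph_reachable_of_fst_eq hcorner ht' rfl hsnd)

lemma stripGraph_reachable (e : E) : (F.stripGraph e).Reachable (F.round (A.curve e F.trim))
    (F.round (A.curve e (1 - F.trim))) := by
  refine (isPreconnected_Icc (a := F.trim) (b := 1 - F.trim)).induction₂
    (fun s t => (F.stripGraph e).Reachable (F.round (A.curve e s)) (F.round (A.curve e t))) ?_
    (fun _ _ _ _ _ _ h h' => h.trans h') (fun _ _ _ _ h => h.symm)
    (left_mem_Icc.2 trim_le_one_sub_trim) (right_mem_Icc.2 trim_le_one_sub_trim)
  intro s hs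
  have hnear : ∀ᶠ t in 𝓝 s, A.curve e t ∈ closedSquare (A.curve e s) F.mesh :=
    (A.curve e).continuous.continuousAt (closedSquare_mem_nhds _ F.mesh_pos)
  filter_upwards [nhdsWithin_le_nhds hnear, self_mem_nhdsWithin] with t h ht
  exact stripGraph_reachable_round hs ht h

variable (F) in
/-- A lattice path in the strip of an edge which runs from the box of its source to the box of its
target and meets no box in between. -/
structure Trace (e : E) where
  (length : ℕ) (point : ℕ → LatticePoint) (dir : ℕ → Fin 4)
  three_le_length : 3 ≤ length
  point_succ : ∀ i < length, point (i + 1) = point i + unitStep (dir i)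
  inStrip : ∀ i ≤ length, F.InStrip e (point i)
  inBox_zero : F.InBox (A.ends e).1 (point 0)
  time_zero_lt : F.time e (point 0) < F.endTime
  inBox_length : F.InBox (A.ends e).2 (point length)
  lt_time_length : 1 - F.endTime < F.time e (point length)
  not_inBox : ∀ i u, 0 < i → i < length → ¬F.InBox u (point i)
  injOn : InjOn point (Iic length)

lemma inBox_and_time_lt_round_trim (e : E) :
    F.InBox (A.ends e).1 (F.round (A.curve e F.trim)) ∧
      F.time e (F.round (A.curve e F.trim)) < F.endTime := by
  have hmem := left_mem_Icc.2 (trim_le_one_sub_trim (F := F))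
  have hround := gridPoint_round_mem (F := F) (A.curve e F.trim)
  have hstrip := inStrip_of_mem hmem hround
  have hbox : F.InBox (A.ends e).1 (F.round (A.curve e F.trim)) :=
    mem_closedSquare_trans hround (F.trim_mem_inner e) (add_comm _ _).le
  have habs := abs_time_sub_lt hstrip hmem (self_mem_closedSquare _ F.mesh_pos.le) hround
    (by linarith [F.mesh_pos])
  refine ⟨hbox, (time_lt_or_lt_of_inBox hstrip hbox).elim And.left fun h => ?_⟩
  linarith [(abs_lt.1 habs).2, h.1, F.trim_lt_endTime, F.endTime_le, F.modulus_le_endTime]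

lemma inBox_and_lt_time_round_one_sub_trim (e : E) :
    F.InBox (A.ends e).2 (F.round (A.curve e (1 - F.trim))) ∧
      1 - F.endTime < F.time e (F.round (A.curve e (1 - F.trim))) := by
  have hmem := right_mem_Icc.2 (trim_le_one_sub_trim (F := F))
  have hround := gridPoint_round_mem (F := F) (A.curve e (1 - F.trim))
  have hstrip := inStrip_of_mem hmem hround
  have hbox : F.InBox (A.ends e).2 (F.round (A.curve e (1 - F.trim))) :=
    mem_closedSquare_trans hround (F.one_sub_trim_mem_inner e) (add_comm _ _).le
  have habs := abs_time_sub_lt hstrip hmem (self_mem_closedSquare _ F.mesh_pos.le) hround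
    (by linarith [F.mesh_pos])
  refine ⟨hbox, (time_lt_or_lt_of_inBox hstrip hbox).elim (fun h => ?_) And.left⟩
  linarith [(abs_lt.1 habs).1, h.1, F.trim_lt_endTime, F.endTime_le, F.modulus_le_endTime]

lemma inStrip_getVert (w : (F.stripGraph e).Walk p q) (hp : F.InStrip e p) :
    ∀ i ≤ w.length, F.InStrip e (w.getVert i)
  | 0, _ => by rwa [w.getVert_zero]
  | _ + 1, hi => (w.adj_getVert_succ hi).2.1

theorem nonempty_trace (e : E) : Nonempty (F.Trace e) := by
  obtain ⟨w, hw⟩ := (stripGraph_reachable (F := F) e).exists_isPath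
  have hstrip := inStrip_getVert w (inStrip_of_mem (left_mem_Icc.2 trim_le_one_sub_trim)
    (gridPoint_round_mem _))
  choose! dir hdir using fun i (hi : i < w.length) => (w.adj_getVert_succ hi).2.2
  obtain ⟨a, b, hab, hb, ⟨ha_box, ha_time⟩, ⟨hb_box, hb_time⟩, hbetween⟩ :=
    exists_lt_forall_between_not
      (p := fun i => F.InBox (A.ends e).1 (w.getVert i) ∧ F.time e (w.getVert i) < F.endTime)
      (q := fun i => F.InBox (A.ends e).2 (w.getVert i) ∧ 1 - F.endTime < F.time e (w.getVert i))
      (N := w.length) (by rw [w.getVert_zero]; exact inBox_and_time_lt_round_trim e)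
      (by rw [w.getVert_length]; exact inBox_and_lt_time_round_one_sub_trim e)
      (fun i hp hq => by linarith [hp.2, hq.2, F.endTime_le])
  have htime : ∀ i < w.length,
      F.time e (w.getVert (i + 1)) < F.time e (w.getVert i) + F.endTime := fun i hi => by
    have habs := abs_time_sub_time_lt (hstrip i hi.le) (hdir i hi ▸ hstrip (i + 1) hi)
    rw [← hdir i hi] at habs
    linarith [(abs_lt.1 habs).2, F.modulus_le_endTime]
  have hthree : a + 3 ≤ b := by
    by_contra! hlt
    obtain rfl | rfl : b = a + 1 ∨ b = a + 1 + 1 := by omega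
    · linarith [htime a (by omega), F.endTime_le]
    · linarith [htime a (by omega), htime (a + 1) (by omega), F.endTime_le]
  obtain ⟨k, rfl⟩ := Nat.exists_eq_add_of_lt hab
  refine ⟨{
    length := k + 1, point := fun i => w.getVert (a + i), dir := fun i => dir (a + i)
    three_le_length := by omega
    point_succ := fun i hi => hdir (a + i) (by omega)
    inStrip := fun i hi => hstrip _ (by omega)
    inBox_zero := ha_box
    time_zero_lt := ha_time
    inBox_length := hb_box
    lt_time_length := hb_time
    not_inBox := fun i u hi hi' hu => ?_
    injOn := fun i hi j hj h => ?_ }⟩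
  · obtain ⟨hsrc, htgt⟩ := hbetween (a + i) (by omega) (by omega)
    rcases time_lt_or_lt_of_inBox (hstrip _ (by omega)) hu with ⟨ht, rfl⟩ | ⟨ht, rfl⟩
    · exact hsrc ⟨hu, ht⟩
    · exact htgt ⟨hu, ht⟩
  · rw [mem_Iic] at hi hj
    exact Nat.add_left_cancel (hw.getVert_injOn (by simp; omega) (by simp; omega) h)

end PlaneDrawing.Scales

/-! ### Holonomy along the edges of a plane drawing -/

section Approach

variable {S C : Set ℂ} [PathConnectedSpace ↥Sᶜ] {F : C(ℝ, ↥Sᶜ)} {a b : ℂ} {s t : ℝ}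

/-- The holonomy of the path which follows the curve `F` from time `1` to time `t` and then the
segment to `a`. -/
noncomputable def approach (F : C(ℝ, ↥Sᶜ)) (t : ℝ) (a : ℂ) : HolonomyGroup ↥Sᶜ :=
  curveHolonomy F 1 t * segmentHolonomy S (F t) a

lemma approach_one (F : C(ℝ, ↥Sᶜ)) (a : ℂ) : approach F 1 a = segmentHolonomy S (F 1) a := by
  rw [approach, curveHolonomy_self, one_mul]

lemma curveHolonomy_mul_approach_zero (F : C(ℝ, ↥Sᶜ)) (a : ℂ) :
    curveHolonomy F 0 1 * approach F 0 a = segmentHolonomy S (F 0) a := by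
  rw [approach, ← mul_assoc, curveHolonomy_trans, curveHolonomy_self, one_mul]

lemma approach_mul_segmentHolonomy (hC : Convex ℝ C) (hCS : C ⊆ Sᶜ)
    (hF : ∀ u ∈ uIcc s t, (F u : ℂ) ∈ C) (ha : a ∈ C) (hb : b ∈ C) :
    approach F s a * segmentHolonomy S a b = approach F t b := by
  have hs := hF s left_mem_uIcc
  have ht := hF t right_mem_uIcc
  rw [approach, mul_assoc, segmentHolonomy_trans hC hCS hs ha hb,
    ← segmentHolonomy_trans hC hCS hs ht hb, ← curveHolonomy_eq_segmentHolonomy hC hCS F hF,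
    ← mul_assoc, curveHolonomy_trans, approach]

end Approach

namespace PlaneDrawing

variable {V E : Type*} (A : PlaneDrawing V E)

/-- The initial vertex of an oriented edge, where `(e, true)` is oriented as `A.curve e`. -/
def src (x : E × Bool) : V := if x.2 then (A.ends x.1).1 else (A.ends x.1).2

/-- The terminal vertex of an oriented edge. -/
def tgt (x : E × Bool) : V := if x.2 then (A.ends x.1).2 else (A.ends x.1).1

/-- The curve of an edge, reversed if the orientation of the edge is the opposite one. -/
noncomputable def orientedCurve (x : E × Bool) : C(ℝ, ℂ) :=
  if x.2 then A.curve x.1 else (A.curve x.1).comp ⟨fun t => 1 - t, by fun_prop⟩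

/-- `e` is an edge between the two vertices of `c`. -/
def Joins (c : V × V) (e : E) : Prop := c = A.ends e ∨ c = (A.ends e).swap

variable {A} {c : V × V} {e : E} {x : E × Bool}

variable (A) in
lemma joins_src_tgt (x : E × Bool) : A.Joins (A.src x, A.tgt x) x.1 := by
  obtain ⟨e, _ | _⟩ := x
  exacts [Or.inr rfl, Or.inl rfl]

lemma Joins.fst_eq (h : A.Joins c e) : (A.ends e).1 = c.1 ∨ (A.ends e).1 = c.2 := by
  rcases h with rfl | rfl <;> simp

lemma Joins.snd_eq (h : A.Joins c e) : (A.ends e).2 = c.1 ∨ (A.ends e).2 = c.2 := by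
  rcases h with rfl | rfl <;> simp

lemma Joins.curve_mem (h : A.Joins c e) (t : ℝ) : A.curve e t ∈ (punctures A.pos c)ᶜ := by
  rintro ⟨v, ⟨hv, hv'⟩, heq⟩
  rcases A.eq_or_eq_of_curve_eq_pos e t v heq.symm with rfl | rfl
  · exact h.fst_eq.elim hv hv'
  · exact h.snd_eq.elim hv hv'

lemma Joins.orientedCurve_mem (h : A.Joins c x.1) (t : ℝ) :
    A.orientedCurve x t ∈ (punctures A.pos c)ᶜ := by
  obtain ⟨e, _ | _⟩ := x
  exacts [h.curve_mem (1 - t), h.curve_mem t]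

variable (x) in
/-- The curve of an oriented edge between the vertices of `c`, as a curve in the punctured plane. -/
noncomputable def lift (h : A.Joins c x.1) : C(ℝ, ↥(punctures A.pos c)ᶜ) :=
  ⟨fun t => ⟨A.orientedCurve x t, h.orientedCurve_mem t⟩, by fun_prop⟩

namespace Scales

open LatticeDart

variable (F : A.Scales) {u v : V} {p q : LatticePoint} {i : ℕ} {d : LatticeDart}

/-- The lower left corner of the box of a vertex. -/
noncomputable def lower (u : V) : LatticePoint :=
  (⌈((A.pos u).re - (F.inner + F.mesh)) / F.mesh⌉, ⌈((A.pos u).im - (F.inner + F.mesh)) / F.mesh⌉)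

/-- The upper right corner of the box of a vertex. -/
noncomputable def upper (u : V) : LatticePoint :=
  (⌊((A.pos u).re + (F.inner + F.mesh)) / F.mesh⌋, ⌊((A.pos u).im + (F.inner + F.mesh)) / F.mesh⌋)

variable {F}

lemma mem_Icc_lower_upper : p ∈ Finset.Icc (F.lower u) (F.upper u) ↔ F.InBox u p := by
  simp only [Finset.mem_Icc, Prod.le_def, lower, upper, Int.ceil_le, Int.le_floor,
    div_le_iff₀ F.mesh_pos, le_div_iff₀ F.mesh_pos, InBox, closedSquare, gridPoint,
    mem_ofPred_eq, abs_le, mul_comm F.mesh]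
  grind

lemma InBox.mem_outer (h : F.InBox u p) : F.gridPoint p ∈ closedSquare (A.pos u) F.outer :=
  closedSquare_subset_closedSquare _ (by linarith [F.mesh_le_clearance, F.clearance_le_inner,
    F.two_mul_inner_le, F.mesh_pos]) h

lemma InBox.unique (hu : F.InBox u p) (hv : F.InBox v p) : u = v :=
  F.eq_of_mem_outer u v _ hu.mem_outer hv.mem_outer

/-- The lattice drawing made of the traces of the edges. -/
noncomputable def drawing (T : ∀ e, F.Trace e) : LatticeDrawing V E where
  lower := F.lower
  upper := F.upper
  center u := F.round (A.pos u)
  center_mem u := mem_Icc_lower_upper.2 <|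
    closedSquare_subset_closedSquare _ (by linarith [F.inner_pos]) (gridPoint_round_mem (A.pos u))
  box_unique u v p hu hv := (mem_Icc_lower_upper.1 hu).unique (mem_Icc_lower_upper.1 hv)
  ends := A.ends
  length e := (T e).length
  point e := (T e).point
  dir e := (T e).dir
  three_le_length e := (T e).three_le_length
  point_succ e := (T e).point_succ
  point_zero_mem e := mem_Icc_lower_upper.2 (T e).inBox_zero
  point_length_mem e := mem_Icc_lower_upper.2 (T e).inBox_length
  point_notMem e i v hi hi' h := (T e).not_inBox i v hi hi' (mem_Icc_lower_upper.1 h)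
  point_inj e i f j _ hi' _ hj' h := by
    obtain rfl : e = f := ((T e).inStrip i hi'.le).unique (h ▸ (T f).inStrip j hj'.le)
    exact ⟨rfl, (T e).injOn hi'.le hj'.le h⟩

lemma closedSquare_outer_subset (hu : u = c.1 ∨ u = c.2) :
    closedSquare (A.pos u) F.outer ⊆ (punctures A.pos c)ᶜ := by
  rintro _ hz ⟨v, ⟨hv, hv'⟩, rfl⟩
  obtain rfl := F.eq_of_mem_outer v u _ (self_mem_closedSquare _ F.outer_pos.le) hz
  exact hu.elim hv hv'

lemma closedSquare_clearance_subset {t : ℝ} (ht : t ∈ Icc F.trim (1 - F.trim)) :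
    closedSquare (A.curve e t) F.clearance ⊆ (punctures A.pos c)ᶜ := by
  rintro _ hz ⟨v, -, rfl⟩
  exact F.trimmed_notMem e v t ht (mem_closedSquare_comm.1 hz)

variable (F) in
/-- The square in the plane represented by a cell of the lattice. -/
def cellSquare (p : LatticePoint) : Set ℂ :=
  Icc (F.mesh * p.1) (F.mesh * (p.1 + 1)) ×ℂ Icc (F.mesh * p.2) (F.mesh * (p.2 + 1))

lemma gridPoint_add_cellCorner_mem (p : LatticePoint) (i : Fin 4) :
    F.gridPoint (p + cellCorner i) ∈ F.cellSquare p := by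
  have := F.mesh_pos.le
  fin_cases i <;> simp [cellSquare, gridPoint, cellCorner, mul_add, Complex.mem_reProdIm, this]

lemma cellSquare_subset (hp : ∀ u, u ≠ c.1 → u ≠ c.2 → ¬F.InBox u p) :
    F.cellSquare p ⊆ (punctures A.pos c)ᶜ := by
  rintro _ ⟨⟨hre, hre'⟩, him, him'⟩ ⟨u, ⟨hu, hu'⟩, rfl⟩
  refine hp u hu hu' ⟨abs_le.2 ?_, abs_le.2 ?_⟩ <;> constructor <;>
    simp only [gridPoint] <;> linarith [F.inner_pos]

section Access

variable [Finite V]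

variable (F) in
open Classical in
/-- The holonomy of a path that leads to a lattice point. Points in a box of `c` are reached from
the vertex of the box, and points in the strip of an edge between the vertices of `c` are reached
from the target of this edge. -/
noncomputable def access (c : V × V) (p : LatticePoint) :
    HolonomyGroup ↥(punctures A.pos c)ᶜ :=
  if F.InBox c.1 p then segmentHolonomy _ (A.pos c.1) (F.gridPoint p)
  else if F.InBox c.2 p then segmentHolonomy _ (A.pos c.2) (F.gridPoint p)
  else if h : ∃ e, A.Joins c e ∧ F.InStrip e p then
    approach (lift (h.choose, true) h.choose_spec.1) (F.time h.choose p) (F.gridPoint p)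
  else 1

lemma access_of_inBox (hu : u = c.1 ∨ u = c.2) (h : F.InBox u p) :
    F.access c p = segmentHolonomy _ (A.pos u) (F.gridPoint p) := by
  rw [access]
  split_ifs with h₁ h₂
  · rw [h.unique h₁]
  · rw [h.unique h₂]
  all_goals rcases hu with rfl | rfl <;> contradiction

lemma access_of_inStrip (he : A.Joins c e) (h : F.InStrip e p) (hp : ∀ u, ¬F.InBox u p) :
    F.access c p = approach (lift (e, true) he) (F.time e p) (F.gridPoint p) := by
  have hex : ∃ e, A.Joins c e ∧ F.InStrip e p := ⟨e, he, h⟩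
  have heq (f) (hf : A.Joins c f ∧ F.InStrip f p) :
      approach (lift (f, true) hf.1) (F.time f p) (F.gridPoint p) =
        approach (lift (e, true) he) (F.time e p) (F.gridPoint p) := by
    obtain rfl := hf.2.unique h
    rfl
  rw [access, if_neg (hp _), if_neg (hp _), dif_pos hex, heq _ hex.choose_spec]

variable (F) in
/-- The holonomy of a lattice dart, closed up by the paths that lead to its ends. -/
noncomputable def dartHolonomy (c : V × V) (d : LatticeDart) :
    HolonomyGroup ↥(punctures A.pos c)ᶜ :=
  F.access c d.1 * segmentHolonomy _ (F.gridPoint d.1) (F.gridPoint (head d)) *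
    (F.access c (head d))⁻¹

lemma dartHolonomy_rev (c : V × V) (d : LatticeDart) :
    F.dartHolonomy c (rev d) = (F.dartHolonomy c d)⁻¹ := by
  have hhead : head (rev d) = d.1 := by rw [← fst_rev, rev_rev]
  rw [dartHolonomy, dartHolonomy, fst_rev, hhead, ← segmentHolonomy_inv (F.gridPoint d.1)]
  group

lemma dartHolonomy_eq_one_of_inBox (hv : v = c.1 ∨ v = c.2) (h : F.InBox v d.1)
    (h' : F.InBox v (head d)) : F.dartHolonomy c d = 1 := by
  rw [dartHolonomy, access_of_inBox hv h, access_of_inBox hv h',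
    segmentHolonomy_trans (convex_closedSquare _ _) (closedSquare_outer_subset hv)
      (self_mem_closedSquare _ F.outer_pos.le) h.mem_outer h'.mem_outer, mul_inv_cancel]

lemma prod_map_dartHolonomy_cell (hp : ∀ u, u ≠ c.1 → u ≠ c.2 → ¬F.InBox u p) :
    ((cell p).map (F.dartHolonomy c)).prod = 1 := by
  let S := punctures A.pos c
  let corner (i : Fin 4) : ℂ := F.gridPoint (p + cellCorner i)
  let δ (i : Fin 4) := F.access c (p + cellCorner i) * segmentHolonomy S (corner i) (corner 0)
  have hside (i : Fin 4) : F.dartHolonomy c (cellSide p i) = δ i * (δ (i + 1))⁻¹ := by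
    rw [dartHolonomy, head_cellSide, mul_inv_rev, segmentHolonomy_inv, ← mul_assoc,
      mul_assoc (F.access c (p + cellCorner i)), segmentHolonomy_trans
        (convex_reProdIm (convex_Icc _ _) (convex_Icc _ _)) (cellSquare_subset hp)
        (gridPoint_add_cellCorner_mem p i) (gridPoint_add_cellCorner_mem p 0)
        (gridPoint_add_cellCorner_mem p (i + 1))]
    rfl
  simp [cell, hside]

lemma approach_time_mul_segmentHolonomy (he : A.Joins c e) (hp : F.InStrip e p) {i : Fin 4}
    (hq : F.InStrip e (p + unitStep i)) :
    approach (lift (e, true) he) (F.time e p) (F.gridPoint p) *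
        segmentHolonomy _ (F.gridPoint p) (F.gridPoint (p + unitStep i)) =
      approach (lift (e, true) he) (F.time e (p + unitStep i)) (F.gridPoint (p + unitStep i)) := by
  have hmesh := F.mesh_le_clearance
  have hpos := F.mesh_pos
  have hsub : Icc F.trim (1 - F.trim) ⊆ Icc 0 1 :=
    Icc_subset_Icc F.trim_pos.le (by linarith [F.trim_pos])
  refine approach_mul_segmentHolonomy (convex_closedSquare (A.curve e (F.time e p)) F.clearance)
    (closedSquare_clearance_subset (time_mem hp)) (fun t ht => ?_)
    (closedSquare_subset_closedSquare _ (by linarith) (gridPoint_mem_of_inStrip hp))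
    (mem_closedSquare_trans (gridPoint_add_unitStep_mem p i) (gridPoint_mem_of_inStrip hp)
      (by linarith))
  have htime : t ∈ Icc 0 1 := ordConnected_Icc.uIcc_subset (hsub (time_mem hp))
    (hsub (time_mem hq)) ht
  exact closedSquare_subset_closedSquare _ (by linarith) <|
    F.mem_of_abs_sub_le e t htime _ (hsub (time_mem hp))
      ((abs_sub_left_of_mem_uIcc ht).trans (abs_time_sub_time_lt hp hq).le)

lemma access_eq_approach_of_inBox (he : A.Joins c e) (hp : F.InStrip e p)
    (hbox : F.InBox (A.ends e).2 p) (ht : 1 - F.endTime < F.time e p) :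
    F.access c p = approach (lift (e, true) he) (F.time e p) (F.gridPoint p) := by
  have hend : lift (e, true) he 1 = A.pos (A.ends e).2 := A.curve_one e
  have htime := time_mem hp
  rw [access_of_inBox he.snd_eq hbox, ← hend, ← approach_one,
    ← mul_one (approach _ 1 _), ← segmentHolonomy_self (F.gridPoint p)]
  refine approach_mul_segmentHolonomy (convex_closedSquare (A.pos (A.ends e).2) F.outer)
    (closedSquare_outer_subset he.snd_eq) (fun t ht' => F.end_mem_outer e t ?_) hbox.mem_outer
    hbox.mem_outer
  have hle : F.time e p ≤ 1 := by linarith [htime.2, F.trim_pos]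
  rw [uIcc_of_ge hle] at ht'
  exact ⟨by linarith [ht'.1, F.endTime_pos], ht'.2⟩

lemma access_eq_curveHolonomy_mul_approach (he : A.Joins c e) (hp : F.InStrip e p)
    (hbox : F.InBox (A.ends e).1 p) (ht : F.time e p < F.endTime) :
    F.access c p = curveHolonomy (lift (e, true) he) 0 1 *
      approach (lift (e, true) he) (F.time e p) (F.gridPoint p) := by
  have hstart : lift (e, true) he 0 = A.pos (A.ends e).1 := A.curve_zero e
  have htime := time_mem hp
  rw [access_of_inBox he.fst_eq hbox, ← hstart, ← curveHolonomy_mul_approach_zero,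
    ← mul_one (approach _ 0 _), ← segmentHolonomy_self (F.gridPoint p)]
  congr 1
  refine approach_mul_segmentHolonomy (convex_closedSquare (A.pos (A.ends e).1) F.outer)
    (closedSquare_outer_subset he.fst_eq) (fun t ht' => F.start_mem_outer e t ?_) hbox.mem_outer
    hbox.mem_outer
  have hle : 0 ≤ F.time e p := by linarith [htime.1, F.trim_pos]
  rw [uIcc_of_le hle] at ht'
  exact ⟨ht'.1, by linarith [ht'.2, F.endTime_pos]⟩

variable (T : ∀ e, F.Trace e)

lemma access_point (he : A.Joins c e) (hi : 0 < i) (hi' : i ≤ (T e).length) :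
    F.access c ((T e).point i) =
      approach (lift (e, true) he) (F.time e ((T e).point i)) (F.gridPoint ((T e).point i)) := by
  rcases hi'.lt_or_eq with hlt | rfl
  · exact access_of_inStrip he ((T e).inStrip i hi') fun u => (T e).not_inBox i u hi hlt
  · exact access_eq_approach_of_inBox he ((T e).inStrip _ le_rfl) (T e).inBox_length
      (T e).lt_time_length

lemma dartHolonomy_dart_eq_of_access_eq {a : HolonomyGroup ↥(punctures A.pos c)ᶜ} (he : A.Joins c e)
    (hi : i < (T e).length) (h : F.access c ((T e).point i) = a *
      approach (lift (e, true) he) (F.time e ((T e).point i)) (F.gridPoint ((T e).point i))) :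
    F.dartHolonomy c ((F.drawing T).dart (e, true) i) = a := by
  have hsucc : (T e).point (i + 1) = (T e).point i + unitStep ((T e).dir i) := (T e).point_succ i hi
  have hstrip := (T e).inStrip (i + 1) hi
  change F.access c ((T e).point i) * segmentHolonomy _ (F.gridPoint ((T e).point i))
    (F.gridPoint ((T e).point i + unitStep ((T e).dir i))) *
      (F.access c ((T e).point i + unitStep ((T e).dir i)))⁻¹ = a
  rw [h, ← hsucc, access_point T he i.succ_pos hi, hsucc, mul_assoc a,
    approach_time_mul_segmentHolonomy he ((T e).inStrip i hi.le) (hsucc ▸ hstrip),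
    mul_inv_cancel_right]

lemma dartHolonomy_dart_zero (he : A.Joins c e) :
    F.dartHolonomy c ((F.drawing T).dart (e, true) 0) = curveHolonomy (lift (e, true) he) 0 1 :=
  dartHolonomy_dart_eq_of_access_eq T he (by have := (T e).three_le_length; omega) <|
    access_eq_curveHolonomy_mul_approach he ((T e).inStrip 0 (Nat.zero_le _)) (T e).inBox_zero
      (T e).time_zero_lt

lemma dartHolonomy_dart (he : A.Joins c e) (hi : 0 < i) (hi' : i < (T e).length) :
    F.dartHolonomy c ((F.drawing T).dart (e, true) i) = 1 :=
  dartHolonomy_dart_eq_of_access_eq T he hi' (by rw [one_mul, access_point T he hi hi'.le])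

lemma dartHolonomy_mark (hx : A.Joins c x.1) :
    F.dartHolonomy c ((F.drawing T).mark x) = curveHolonomy (lift x hx) 0 1 := by
  obtain ⟨e, _ | _⟩ := x
  · have hmark : (F.drawing T).mark (e, false) = rev ((F.drawing T).mark (e, true)) :=
      LatticeDrawing.mark_flip (e, true)
    rw [hmark, dartHolonomy_rev, curveHolonomy_one_sub (F := lift (e, true) hx) fun t => rfl,
      ← curveHolonomy_inv]
    exact congrArg _ (dartHolonomy_dart_zero T hx)
  · exact dartHolonomy_dart_zero T hx

lemma dartHolonomy_eq_one_of_onEdge (hx : A.Joins c x.1) (hd : (F.drawing T).OnEdge x d)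
    (hmark : d ≠ (F.drawing T).mark x) : F.dartHolonomy c d = 1 := by
  have hforward {e d} (he : A.Joins c e) (hd : (F.drawing T).OnEdge (e, true) d)
      (hmark : d ≠ (F.drawing T).mark (e, true)) : F.dartHolonomy c d = 1 := by
    obtain ⟨i, hi, rfl⟩ := hd
    exact dartHolonomy_dart T he (Nat.pos_of_ne_zero fun h => hmark (h ▸ rfl)) hi
  obtain ⟨e, _ | _⟩ := x
  · rw [← rev_rev d, dartHolonomy_rev, inv_eq_one]
    refine hforward hx hd.rev fun h => hmark ?_
    rw [← rev_rev d, h]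
    exact (LatticeDrawing.mark_flip (e, true)).symm
  · exact hforward hx hd hmark

end Access

end Scales

theorem card_add_four_le [Fintype V] [Fintype E] (hV : 2 ≤ Fintype.card V)
    (hloop : ∀ x : E × Bool, A.src x = A.tgt x →
      curveHolonomy (lift x (A.joins_src_tgt x)) 0 1 ≠ 1)
    (hparallel : ∀ x y : E × Bool, x.1 ≠ y.1 → A.src x = A.src y → A.tgt x = A.tgt y →
      ∀ h : A.Joins (A.src x, A.tgt x) y.1,
        curveHolonomy (lift x (A.joins_src_tgt x)) 0 1 ≠ curveHolonomy (lift y h) 0 1) :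
    Fintype.card E + 4 ≤ 3 * Fintype.card V := by
  obtain ⟨F⟩ := A.nonempty_scales
  let T (e : E) : F.Trace e := (Scales.nonempty_trace e).some
  have hbox {u p} : p ∈ (F.drawing T).box u ↔ F.InBox u p := Scales.mem_Icc_lower_upper
  have hcell (p) : (p, 0) ∈ LatticeDart.cell p := by
    simp [LatticeDart.mem_cell, LatticeDart.cellSide, LatticeDart.cellCorner]
  have h : (F.drawing T).Holonomy fun c => HolonomyGroup ↥(punctures A.pos c)ᶜ :=
    { hol := F.dartHolonomy
      hol_rev := Scales.dartHolonomy_rev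
      hol_cell c p hp := Scales.prod_map_dartHolonomy_cell fun u hu hu' =>
        mt hbox.2 (hp (p, 0) (hcell p) u hu hu')
      hol_box c v d hv hd hd' := Scales.dartHolonomy_eq_one_of_inBox hv (hbox.1 hd) (hbox.1 hd')
      hol_edge x d := Scales.dartHolonomy_eq_one_of_onEdge T (A.joins_src_tgt x)
      hol_loop x hx := by
        have := hloop x hx
        rwa [← Scales.dartHolonomy_mark T] at this
      hol_parallel x y hxy hsrc htgt := by
        have hy : A.Joins (A.src x, A.tgt x) y.1 := by
          have : (A.src x, A.tgt x) = (A.src y, A.tgt y) := Prod.ext hsrc htgt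
          exact this ▸ A.joins_src_tgt y
        have := hparallel x y hxy hsrc htgt hy
        rwa [← Scales.dartHolonomy_mark T, ← Scales.dartHolonomy_mark T] at this }
  exact h.card_add_four_le hV

end PlaneDrawing

/-! ### Non-homotopic plane drawings -/

section EdgeHomotopic

variable {n : ℕ} {φ : Fin n → ℂ} {c : Fin n × Fin n} {f g f' g' : ℝ → ℂ}

lemma EdgeHomotopic.congr (h : EdgeHomotopic φ c f g) (hf : EqOn f f' (Icc 0 1))
    (hg : EqOn g g' (Icc 0 1)) : EdgeHomotopic φ c f' g' := by
  obtain ⟨H, hcont, hH₀, hH₁, hends, hne⟩ := h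
  exact ⟨H, hcont, fun x hx => (hH₀ x hx).trans (hf hx), fun x hx => (hH₁ x hx).trans (hg hx),
    hends, hne⟩

lemma EdgeHomotopic.reverse (h : EdgeHomotopic φ c f g) :
    EdgeHomotopic φ c.swap (fun x => f (1 - x)) fun x => g (1 - x) := by
  obtain ⟨H, hcont, hH₀, hH₁, hends, hne⟩ := h
  refine ⟨fun x t => H (1 - x) t, hcont.comp (f := fun p : ℝ × ℝ => (1 - p.1, p.2))
    (by fun_prop) fun p hp => ⟨Icc.one_sub_mem hp.1, hp.2⟩, fun x hx => hH₀ _ (Icc.one_sub_mem hx),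
    fun x hx => hH₁ _ (Icc.one_sub_mem hx), fun t ht => ?_,
    fun x hx t ht v hv hv' => hne _ (Icc.one_sub_mem hx) t ht v hv' hv⟩
  simpa using (hends t ht).symm

end EdgeHomotopic

namespace PlaneDrawing

section Restrict

variable {V E : Type*} (A : PlaneDrawing V E)

/-- The plane drawing of the multigraph with the edges in `s`. -/
def restrict (s : Set E) : PlaneDrawing V s where
  pos := A.pos
  ends e := A.ends e
  curve e := A.curve e
  pos_injective := A.pos_injective
  curve_zero e := A.curve_zero e
  curve_one e := A.curve_one e
  curve_ne_pos e := A.curve_ne_pos e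
  eq_or_eq_of_curve_eq_pos e := A.eq_or_eq_of_curve_eq_pos e
  curve_injOn e := A.curve_injOn e
  curve_ne_curve e f h := A.curve_ne_curve e f (Subtype.coe_injective.ne h)

end Restrict

variable {n : ℕ} {E : Type*} (A : PlaneDrawing (Fin n) E) {c : Fin n × Fin n}

lemma orientedCurve_zero {V : Type*} (A : PlaneDrawing V E) (x : E × Bool) :
    A.orientedCurve x 0 = A.pos (A.src x) := by
  obtain ⟨e, _ | _⟩ := x <;> simp [orientedCurve, src, A.curve_zero, A.curve_one]

lemma orientedCurve_one {V : Type*} (A : PlaneDrawing V E) (x : E × Bool) :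
    A.orientedCurve x 1 = A.pos (A.tgt x) := by
  obtain ⟨e, _ | _⟩ := x <;> simp [orientedCurve, tgt, A.curve_zero, A.curve_one]

variable {A} in
lemma edgeHomotopic_orientedCurve {x y : E × Bool} (hsrc : A.src x = A.src y)
    (htgt : A.tgt x = A.tgt y) (hy : A.Joins (A.src x, A.tgt x) y.1)
    (h : curveHolonomy (lift x (A.joins_src_tgt x)) 0 1 = curveHolonomy (lift y hy) 0 1) :
    EdgeHomotopic A.pos (A.src x, A.tgt x) (A.orientedCurve x) (A.orientedCurve y) :=
  edgeHomotopic_of_curveHolonomy_eq (A.orientedCurve_zero x)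
    ((A.orientedCurve_zero y).trans (congrArg A.pos hsrc.symm)) (A.orientedCurve_one x)
    ((A.orientedCurve_one y).trans (congrArg A.pos htgt.symm)) h

/-- No edge is homotopic to another edge which, with a suitable orientation, is parallel to it. -/
def NonHomotopic : Prop := ∀ (e : E) (y : E × Bool), e ≠ y.1 → A.ends e = (A.src y, A.tgt y) →
  ¬EdgeHomotopic A.pos (A.ends e) (A.curve e) (A.orientedCurve y)

variable {A} in
lemma NonHomotopic.not_edgeHomotopic (hA : A.NonHomotopic) {x y : E × Bool} (hxy : x.1 ≠ y.1)
    (hsrc : A.src x = A.src y) (htgt : A.tgt x = A.tgt y) :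
    ¬EdgeHomotopic A.pos (A.src x, A.tgt x) (A.orientedCurve x) (A.orientedCurve y) := by
  obtain ⟨e, _ | _⟩ := x
  · obtain ⟨f, b⟩ := y
    refine fun h => hA e (f, !b) hxy ?_ (h.reverse.congr (fun t _ => ?_) fun t _ => ?_)
    · cases b <;> exact Prod.ext htgt hsrc
    · simp [orientedCurve]
    · cases b <;> simp [orientedCurve]
  · exact hA e y hxy (Prod.ext hsrc htgt)

/-- `e` is a loop whose holonomy around the other vertices is trivial. -/
def IsNullLoop (e : E) : Prop := ∃ x : E × Bool, x.1 = e ∧ A.src x = A.tgt x ∧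
  curveHolonomy (lift x (A.joins_src_tgt x)) 0 1 = 1

variable {A}

lemma NonHomotopic.eq_of_src_eq (hA : A.NonHomotopic) {x y : E × Bool} (hx : A.src x = A.tgt x)
    (hy : A.src y = A.tgt y) (hsrc : A.src x = A.src y)
    (hnull : curveHolonomy (lift x (A.joins_src_tgt x)) 0 1 = 1)
    (hnull' : curveHolonomy (lift y (A.joins_src_tgt y)) 0 1 = 1) : x.1 = y.1 := by
  have htgt : A.tgt x = A.tgt y := by rw [← hx, hsrc, hy]
  have hlift {c} (hc : c = (A.src y, A.tgt y)) :
      ∃ h : A.Joins c y.1, curveHolonomy (lift y h) 0 1 = 1 := by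
    subst hc
    exact ⟨_, hnull'⟩
  obtain ⟨hjoins, hnull'⟩ := hlift (Prod.ext hsrc htgt : (A.src x, A.tgt x) = _)
  by_contra hxy
  exact hA.not_edgeHomotopic hxy hsrc htgt
    (edgeHomotopic_orientedCurve hsrc htgt hjoins (hnull.trans hnull'.symm))

lemma NonHomotopic.card_isNullLoop_le [Fintype E] (hA : A.NonHomotopic)
    [DecidablePred A.IsNullLoop] : Fintype.card {e // A.IsNullLoop e} ≤ n := by
  choose x hx using fun e : {e // A.IsNullLoop e} => e.2
  have hinj : Function.Injective fun e => A.src (x e) := fun e f h => Subtype.ext <| by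
    rw [← (hx e).1, ← (hx f).1]
    exact hA.eq_of_src_eq (hx e).2.1 (hx f).2.1 h (hx e).2.2 (hx f).2.2
  simpa using Fintype.card_le_of_injective _ hinj

theorem NonHomotopic.card_add_four_le [Fintype E] (hA : A.NonHomotopic) (hn : 2 ≤ n) :
    Fintype.card E + 4 ≤ 4 * n := by
  classical
  have hproper := (A.restrict {e | ¬A.IsNullLoop e}).card_add_four_le (by simpa using hn)
    (fun x hx hnull => x.1.2 ⟨(x.1, x.2), rfl, hx, hnull⟩) fun x y hxy hsrc htgt h heq =>
      hA.not_edgeHomotopic (x := (x.1, x.2)) (y := (y.1, y.2)) (Subtype.coe_injective.ne hxy)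
        hsrc htgt
        (edgeHomotopic_orientedCurve hsrc htgt h heq)
  have hnull := hA.card_isNullLoop_le
  have hcompl := Fintype.card_subtype_compl A.IsNullLoop
  have hle := Fintype.card_subtype_le A.IsNullLoop
  rw [Fintype.card_fin] at hproper
  change Fintype.card {e // ¬A.IsNullLoop e} + 4 ≤ 3 * n at hproper
  omega

end PlaneDrawing

/-- A curve `[0, 1] → ℂ`, extended to the real line by constants. -/
noncomputable def extendCurve {f : ℝ → ℂ} (hf : ContinuousOn f (Icc 0 1)) : C(ℝ, ℂ) :=
  ⟨fun t => f (projIcc 0 1 zero_le_one t),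
    hf.comp_continuous (by fun_prop) fun t => (projIcc 0 1 zero_le_one t).2⟩

lemma extendCurve_apply {f : ℝ → ℂ} (hf : ContinuousOn f (Icc 0 1)) {t : ℝ} (ht : t ∈ Icc 0 1) :
    extendCurve hf t = f t := by
  simp [extendCurve, projIcc_of_mem zero_le_one ht]

lemma exists_extendCurve_eq {f : ℝ → ℂ} (hf : ContinuousOn f (Icc 0 1)) (t : ℝ) :
    ∃ s ∈ Icc 0 1, extendCurve hf t = f s :=
  ⟨_, (projIcc 0 1 zero_le_one t).2, rfl⟩

/-- The plane drawing given by curves that are parametrized by `[0, 1]`. -/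
noncomputable def PlaneDrawing.ofContinuousOn {V E : Type*} (φ : V → ℂ)
    (hφ : Function.Injective φ) (ends : E → V × V) (γ : E → ℝ → ℂ)
    (hcont : ∀ e, ContinuousOn (γ e) (Icc 0 1))
    (hstart : ∀ e, γ e 0 = φ (ends e).1)
    (hend : ∀ e, γ e 1 = φ (ends e).2)
    (hvertex : ∀ e, ∀ t ∈ Ioo (0 : ℝ) 1, ∀ v, γ e t ≠ φ v)
    (hsimple : ∀ e, InjOn (γ e) (Ioo 0 1))
    (hplane : ∀ e f, e ≠ f → ∀ s ∈ Ioo (0 : ℝ) 1, ∀ t ∈ Ioo (0 : ℝ) 1, γ e s ≠ γ f t) :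
    PlaneDrawing V E where
  pos := φ
  ends := ends
  curve e := extendCurve (hcont e)
  pos_injective := hφ
  curve_zero e := (extendCurve_apply _ (by simp)).trans (hstart e)
  curve_one e := (extendCurve_apply _ (by simp)).trans (hend e)
  curve_ne_pos e t ht v := extendCurve_apply (hcont e) (Ioo_subset_Icc_self ht) ▸ hvertex e t ht v
  eq_or_eq_of_curve_eq_pos e t v h := by
    obtain ⟨s, hs, heq⟩ := exists_extendCurve_eq (hcont e) t
    rw [heq] at h
    rcases hs.1.eq_or_lt with rfl | hs₀
    · exact .inl (hφ (h.symm.trans (hstart e)))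
    rcases hs.2.eq_or_lt with rfl | hs₁
    · exact .inr (hφ (h.symm.trans (hend e)))
    · exact absurd h (hvertex e s ⟨hs₀, hs₁⟩ v)
  curve_injOn e := (hsimple e).congr fun t ht =>
    (extendCurve_apply (hcont e) (Ioo_subset_Icc_self ht)).symm
  curve_ne_curve e f hef s hs t ht := by
    rw [extendCurve_apply _ (Ioo_subset_Icc_self hs), extendCurve_apply _ (Ioo_subset_Icc_self ht)]
    exact hplane e f hef s hs t ht

/-- Every non-homotopic plane multigraph on `n ≥ 2` vertices has at most
`4n - 4` edges.

The plane multigraph has vertices `φ 0, …, φ (n-1)` (distinct points) and `m` edges, edge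
`e` being drawn as a continuous curve `γ e` on `[0,1]` joining its endpoints
`φ (ends e).1` and `φ (ends e).2`. No edge passes through a vertex in its interior, each
edge is a simple curve, and distinct edges have disjoint interiors (no crossings). The
drawing is non-homotopic: no two distinct parallel edges (or loops at the same vertex) are
homotopic. -/
theorem nonhomotopic_plane_multigraph_edge_bound
    (n m : ℕ) (hn : 2 ≤ n)
    (φ : Fin n → ℂ) (hφ : Function.Injective φ)
    (ends : Fin m → Fin n × Fin n) (γ : Fin m → ℝ → ℂ)
    (hcont : ∀ e, ContinuousOn (γ e) (Icc 0 1))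
    (hstart : ∀ e, γ e 0 = φ (ends e).1)
    (hend : ∀ e, γ e 1 = φ (ends e).2)
    (hvertex : ∀ e, ∀ t ∈ Ioo (0:ℝ) 1, ∀ v : Fin n, γ e t ≠ φ v)
    (hsimple : ∀ e, ∀ s ∈ Icc (0:ℝ) 1, ∀ t ∈ Icc (0:ℝ) 1, s < t →
      (s, t) ≠ ((0:ℝ), (1:ℝ)) → γ e s ≠ γ e t)
    (hplane : ∀ e f, e ≠ f → ∀ s ∈ Ioo (0:ℝ) 1, ∀ t ∈ Ioo (0:ℝ) 1, γ e s ≠ γ f t)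
    (hnonhom : ∀ e f, e ≠ f →
      (ends e = ends f → ¬ EdgeHomotopic φ (ends e) (γ e) (γ f)) ∧
      (ends e = (ends f).swap →
        ¬ EdgeHomotopic φ (ends e) (γ e) (fun x => γ f (1 - x)))) :
    m ≤ 4 * n - 4 := by
  have hinj (e) : InjOn (γ e) (Ioo 0 1) := by
    have hne {s t} (hs : s ∈ Ioo (0 : ℝ) 1) (ht : t ∈ Ioo (0 : ℝ) 1) (hst : s < t) :
        γ e s ≠ γ e t :=
      hsimple e s (Ioo_subset_Icc_self hs) t (Ioo_subset_Icc_self ht) hst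
        fun h => hs.1.ne' (congrArg Prod.fst h)
    intro s hs t ht h
    exact (lt_trichotomy s t).elim3 (fun hst => absurd h (hne hs ht hst)) id
      fun hst => absurd h.symm (hne ht hs hst)
  let A := PlaneDrawing.ofContinuousOn φ hφ ends γ hcont hstart hend hvertex hinj hplane
  have hA : A.NonHomotopic := by
    rintro e ⟨f, _ | _⟩ hef hends h
    · exact (hnonhom e f hef).2 hends <| h.congr (fun t ht => extendCurve_apply (hcont e) ht)
        fun t ht => extendCurve_apply (hcont f) (Icc.one_sub_mem ht)
    · exact (hnonhom e f hef).1 hends <| h.congr (fun t ht => extendCurve_apply (hcont e) ht)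
        fun t ht => extendCurve_apply (hcont f) ht
  have hcard := hA.card_add_four_le hn
  rw [Fintype.card_fin] at hcard
  omega
end
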